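/- Let r ≥ 2 be an integer and let ε > 0, and let p : ℕ → [0,1] be a function satisfying n·p(n) − log n − log log n → ∞ as n → ∞. Then with high probability the random graph G ~ G(n, p(n)) has the following property: for every r-colouring of the edges of G there exist a colour i ∈ {1,…,r} and a Hamilton cycle of G containing at least (2/(r+1) − ε)·n edges of colour i. -/

import Mathlib

open scoped Classical in
/-- The probability, under the binomial random graph `G(n,p)`, that a graph
property `P` holds. Each of the `n.choose 2` possible edges is present
independently with probability `p`. -/
noncomputable def gnpProb (n : ℕ) (p : ℝ) (P : SimpleGraph (Fin n) → Prop) : ℝ :=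
  ∑ G : SimpleGraph (Fin n),
    (if P G then p ^ G.edgeSet.ncard * (1 - p) ^ (n.choose 2 - G.edgeSet.ncard) else 0)

/-!
The property is monotone, so we may assume `n p ≤ 2 log n`. The only information about the random
graph that we use is that it is pseudorandom and has few short cycles.

*A large monochromatic linear forest.* For every colour, direct the edges of this colour at random,
which excludes cycles of length two. If no colour class contains `t` arcs with distinct tails and
distinct heads, then König's theorem gives, for every colour `i`, sets `X i` and `Y i` missing fewer
than `t` vertices in total, with few edges of colour `i` between them. Let `w v i ∈ {0, 1, 2}` count
how many of these two sets miss `v`. By pseudorandomness, for almost all pairs `u`, `v` there is a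
colour `i` with `w u i + w v i ≥ 2`, whence `(r + 1) t ≥ (2 - o(1)) n`. So for `t` slightly below
`2 n / (r + 1)` some colour has `t` such arcs; they form disjoint paths and cycles, and deleting one
edge of each cycle costs only `o(n)` edges, since almost all cycles are long.

*Closing it up.* Reserve a set of `δ n` vertices and delete the forest edges at these vertices.
Among the Hamilton paths of the complete graph through the remaining forest `F`, take one with as
many edges of the random graph as possible. Pósa rotations about reserved vertices never break an
edge of `F`. Along a sparse expanding subgraph they produce quadratically many pairs of ends, and
a union bound over all sparse subgraphs shows that one of these pairs is an edge of the random
graph. Maximality then forces the resulting Hamilton cycle to lie in the random graph.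
-/

open Finset Filter Topology

/-! ### Binomial random subsets -/

section BinomialSubset

variable {α : Type*} [DecidableEq α] {E : Finset α} {p q : ℝ}

/-- The expectation of `f A`, where `A` is the random subset of `E` containing each element
independently with probability `p`. -/
def binomialExp (E : Finset α) (p : ℝ) (f : Finset α → ℝ) : ℝ :=
  ∑ A ∈ E.powerset, (∏ e ∈ E, if e ∈ A then p else 1 - p) * f A

open Classical in
/-- The probability that the random subset of `E` containing each element independently with
probability `p` satisfies `Q`. -/
noncomputable def binomialProb (E : Finset α) (p : ℝ) (Q : Finset α → Prop) : ℝ :=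
  binomialExp E p fun A => if Q A then 1 else 0

lemma binomialWeight_nonneg (hp : p ∈ Set.Icc (0 : ℝ) 1) (E A : Finset α) :
    0 ≤ ∏ e ∈ E, if e ∈ A then p else 1 - p :=
  prod_nonneg fun _ _ => by split_ifs <;> linarith [hp.1, hp.2]

lemma binomialWeight_eq_pow {A : Finset α} (hA : A ⊆ E) :
    (∏ e ∈ E, if e ∈ A then p else 1 - p) = p ^ #A * (1 - p) ^ (#E - #A) := by
  rw [prod_ite, prod_const, prod_const, filter_mem_eq_inter, inter_eq_right.2 hA,
    filter_notMem_eq_sdiff, card_sdiff_of_subset hA]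

lemma binomialExp_congr {f g : Finset α → ℝ} (h : ∀ A ⊆ E, f A = g A) :
    binomialExp E p f = binomialExp E p g :=
  sum_congr rfl fun A hA => by rw [h A (mem_powerset.1 hA)]

lemma binomialExp_mono (hp : p ∈ Set.Icc (0 : ℝ) 1) {f g : Finset α → ℝ}
    (h : ∀ A ⊆ E, f A ≤ g A) : binomialExp E p f ≤ binomialExp E p g :=
  sum_le_sum fun A hA =>
    mul_le_mul_of_nonneg_left (h A (mem_powerset.1 hA)) (binomialWeight_nonneg hp E A)

lemma binomialExp_sum {ι : Type*} (s : Finset ι) (f : ι → Finset α → ℝ) :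
    binomialExp E p (fun A => ∑ i ∈ s, f i A) = ∑ i ∈ s, binomialExp E p (f i) := by
  simp only [binomialExp, mul_sum]
  exact sum_comm

lemma binomialExp_add (f g : Finset α → ℝ) :
    binomialExp E p (fun A => f A + g A) = binomialExp E p f + binomialExp E p g := by
  simp only [binomialExp, mul_add, sum_add_distrib]

lemma binomialExp_const_mul (c : ℝ) (f : Finset α → ℝ) :
    binomialExp E p (fun A => c * f A) = c * binomialExp E p f := by
  simp only [binomialExp, mul_sum, mul_left_comm]

lemma binomialExp_prod (u v : α → ℝ) :
    binomialExp E p (fun A => ∏ e ∈ E, if e ∈ A then u e else v e)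
      = ∏ e ∈ E, (p * u e + (1 - p) * v e) := by
  rw [prod_add]
  refine sum_congr rfl fun A hA => ?_
  rw [← prod_mul_distrib, ← prod_sdiff (mem_powerset.1 hA), mul_comm]
  congr 1
  · exact prod_congr rfl fun e he => by simp [he]
  · exact prod_congr rfl fun e he => by simp [(mem_sdiff.1 he).2]

lemma binomialExp_one : binomialExp E p (fun _ => 1) = 1 := by
  simpa using binomialExp_prod (E := E) (p := p) (fun _ => 1) (fun _ => 1)

lemma prod_ite_mem_eq_indicator_mul_pow {A F B : Finset α} (hA : A ⊆ E) (hF : F ⊆ E) (z : ℝ) :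
    (∏ e ∈ E, if e ∈ A then (if e ∈ B then z else 1) else if e ∈ F then 0 else 1)
      = (if F ⊆ A then 1 else 0) * z ^ #(A ∩ B) := by
  rw [← prod_sdiff hA]
  congr 1
  · split_ifs with hFA
    · refine prod_eq_one fun e he => ?_
      have heA := (mem_sdiff.1 he).2
      simp [heA, show e ∉ F from fun heF => heA (hFA heF)]
    · obtain ⟨e, heF, heA⟩ := not_subset.1 hFA
      exact prod_eq_zero (mem_sdiff.2 ⟨hF heF, heA⟩) (by simp [heF, heA])
  · rw [← prod_const, ← prod_ite_mem]
    exact prod_congr rfl fun e he => by simp [he]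

lemma binomialExp_indicator_mul_pow {F B : Finset α} (hF : F ⊆ E) (hB : B ⊆ E)
    (hFB : Disjoint F B) (z : ℝ) :
    binomialExp E p (fun A => (if F ⊆ A then 1 else 0) * z ^ #(A ∩ B))
      = p ^ #F * (1 - p + p * z) ^ #B := by
  have hfactor : ∀ e ∈ E, p * (if e ∈ B then z else 1) + (1 - p) * (if e ∈ F then 0 else 1)
      = (if e ∈ F then p else 1) * (if e ∈ B then 1 - p + p * z else 1) := by
    intro e _
    by_cases heB : e ∈ B
    · simp only [heB, disjoint_right.1 hFB heB, if_true, if_false]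
      ring
    · by_cases heF : e ∈ F <;> simp [heB, heF]
  rw [← binomialExp_congr fun A hA => prod_ite_mem_eq_indicator_mul_pow hA hF z,
    binomialExp_prod, prod_congr rfl hfactor, prod_mul_distrib, prod_ite_mem, prod_ite_mem,
    inter_eq_right.2 hF, inter_eq_right.2 hB, prod_const, prod_const]

lemma binomialExp_indicator_mul_pow_le (hp : p ∈ Set.Icc (0 : ℝ) 1) {F B : Finset α}
    (hF : F ⊆ E) (hB : B ⊆ E) (hFB : Disjoint F B) {z : ℝ} (hz : 0 ≤ z) :
    binomialExp E p (fun A => (if F ⊆ A then 1 else 0) * z ^ #(A ∩ B))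
      ≤ p ^ #F * Real.exp (-(1 - z) * p * #B) := by
  obtain ⟨hp0, hp1⟩ := hp
  have hbase : 1 - p + p * z ≤ Real.exp (-(1 - z) * p) := by
    linarith [Real.add_one_le_exp (-(1 - z) * p)]
  have hbase0 : 0 ≤ 1 - p + p * z := by linarith [mul_nonneg hp0 hz]
  calc binomialExp E p (fun A => (if F ⊆ A then 1 else 0) * z ^ #(A ∩ B))
      = p ^ #F * (1 - p + p * z) ^ #B := binomialExp_indicator_mul_pow hF hB hFB z
    _ ≤ p ^ #F * Real.exp (-(1 - z) * p) ^ #B :=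
      mul_le_mul_of_nonneg_left (pow_le_pow_left₀ hbase0 hbase _) (pow_nonneg hp0 _)
    _ = p ^ #F * Real.exp (-(1 - z) * p * #B) := by
      rw [← Real.exp_nat_mul, mul_comm (#B : ℝ)]

lemma binomialExp_pow_le (hp : p ∈ Set.Icc (0 : ℝ) 1) {B : Finset α} (hB : B ⊆ E) {z : ℝ}
    (hz : 0 ≤ z) :
    binomialExp E p (fun A => z ^ #(A ∩ B)) ≤ Real.exp (-(1 - z) * p * #B) := by
  simpa using binomialExp_indicator_mul_pow_le hp (empty_subset E) hB (disjoint_empty_left B) hz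

lemma binomialExp_insert {a : α} (ha : a ∉ E) (f : Finset α → ℝ) :
    binomialExp (insert a E) p f
      = (1 - p) * binomialExp E p f + p * binomialExp E p (fun A => f (insert a A)) := by
  have hweight : ∀ A : Finset α, (∏ e ∈ E, if e ∈ insert a A then p else 1 - p)
      = ∏ e ∈ E, if e ∈ A then p else 1 - p := fun A =>
    prod_congr rfl fun e he => by simp [ne_of_mem_of_not_mem he ha]
  unfold binomialExp
  rw [sum_powerset_insert ha, mul_sum, mul_sum]
  congr 1 <;> refine sum_congr rfl fun A hA => ?_
  · rw [prod_insert ha, if_neg fun h => ha (mem_powerset.1 hA h), mul_assoc]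
  · rw [prod_insert ha, if_pos (mem_insert_self a A), hweight, mul_assoc]

lemma binomialExp_le_binomialExp_of_monotone (hp : 0 ≤ p) (hpq : p ≤ q) (hq : q ≤ 1)
    (E : Finset α) {f : Finset α → ℝ} (hf : Monotone f) :
    binomialExp E p f ≤ binomialExp E q f := by
  induction E using Finset.induction_on generalizing f with
  | empty => simp [binomialExp]
  | insert a E ha ih =>
    have hinsert : Monotone fun A => f (insert a A) := fun A B hAB =>
      hf (insert_subset_insert a hAB)
    have hle : binomialExp E q f ≤ binomialExp E q fun A => f (insert a A) :=
      binomialExp_mono ⟨hp.trans hpq, hq⟩ fun A _ => hf (subset_insert a A)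
    rw [binomialExp_insert ha, binomialExp_insert ha]
    nlinarith [mul_le_mul_of_nonneg_left (ih hf) (by linarith : 0 ≤ 1 - p),
      mul_le_mul_of_nonneg_left (ih hinsert) hp,
      mul_le_mul_of_nonneg_left hle (by linarith : 0 ≤ q - p)]

lemma binomialProb_le_binomialExp (hp : p ∈ Set.Icc (0 : ℝ) 1) {Q : Finset α → Prop}
    {f : Finset α → ℝ} (hf : ∀ A ⊆ E, 0 ≤ f A) (hQf : ∀ A ⊆ E, Q A → 1 ≤ f A) :
    binomialProb E p Q ≤ binomialExp E p f :=
  binomialExp_mono hp fun A hA => by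
    split_ifs with hQ
    · exact hQf A hA hQ
    · exact hf A hA

lemma binomialProb_nonneg (hp : p ∈ Set.Icc (0 : ℝ) 1) (Q : Finset α → Prop) :
    0 ≤ binomialProb E p Q :=
  sum_nonneg fun A _ => mul_nonneg (binomialWeight_nonneg hp E A) (by positivity)

lemma binomialProb_mono (hp : p ∈ Set.Icc (0 : ℝ) 1) {Q Q' : Finset α → Prop}
    (h : ∀ A ⊆ E, Q A → Q' A) : binomialProb E p Q ≤ binomialProb E p Q' :=
  binomialProb_le_binomialExp hp (fun A _ => by positivity) fun A hA hQ => by simp [h A hA hQ]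

lemma binomialProb_le_add (hp : p ∈ Set.Icc (0 : ℝ) 1) {Q Q₁ Q₂ : Finset α → Prop}
    (h : ∀ A ⊆ E, Q A → Q₁ A ∨ Q₂ A) :
    binomialProb E p Q ≤ binomialProb E p Q₁ + binomialProb E p Q₂ := by
  unfold binomialProb
  rw [← binomialExp_add]
  refine binomialProb_le_binomialExp hp (fun A _ => by positivity) fun A hA hQ => ?_
  rcases h A hA hQ with hQ | hQ <;> simp only [hQ, if_true] <;> split_ifs <;> norm_num

lemma binomialProb_le_sum (hp : p ∈ Set.Icc (0 : ℝ) 1) {ι : Type*} (s : Finset ι)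
    {Q : Finset α → Prop} {Q' : ι → Finset α → Prop}
    (h : ∀ A ⊆ E, Q A → ∃ i ∈ s, Q' i A) :
    binomialProb E p Q ≤ ∑ i ∈ s, binomialProb E p (Q' i) := by
  classical
  unfold binomialProb
  rw [← binomialExp_sum]
  refine binomialProb_le_binomialExp hp (fun A _ => sum_nonneg fun i _ => by positivity)
    fun A hA hQ => ?_
  obtain ⟨i, hi, hQi⟩ := h A hA hQ
  have hterm := single_le_sum (f := fun i => if Q' i A then (1 : ℝ) else 0)
    (fun i _ => by positivity) hi
  simpa only [hQi, if_true] using hterm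

lemma binomialProb_add_not (Q : Finset α → Prop) :
    binomialProb E p Q + binomialProb E p (fun A => ¬ Q A) = 1 := by
  rw [binomialProb, binomialProb, ← binomialExp_add]
  refine (binomialExp_congr fun A _ => ?_).trans binomialExp_one
  by_cases hQ : Q A <;> simp [hQ]

lemma binomialProb_le_binomialProb_of_monotone (hp : 0 ≤ p) (hpq : p ≤ q) (hq : q ≤ 1)
    {Q : Finset α → Prop} (hQ : ∀ A B, A ⊆ B → Q A → Q B) :
    binomialProb E p Q ≤ binomialProb E q Q := by
  refine binomialExp_le_binomialExp_of_monotone hp hpq hq E fun A B hAB => ?_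
  by_cases hA : Q A
  · simp [hA, hQ A B hAB hA]
  · simp only [hA, if_false]
    positivity

end BinomialSubset

/-! ### The random graph `G(n,p)` as a random edge set -/

section RandomGraph

/-- The edge set of the complete graph on `V`. A graph on `V` is represented by its edge set,
a subset of `completeEdges V`. -/
def completeEdges (V : Type*) [Fintype V] [DecidableEq V] : Finset (Sym2 V) :=
  {e | ¬ e.IsDiag}

lemma mk_mem_completeEdges {V : Type*} [Fintype V] [DecidableEq V] {x y : V} :
    s(x, y) ∈ completeEdges V ↔ x ≠ y := by
  simp [completeEdges]

lemma card_completeEdges (V : Type*) [Fintype V] [DecidableEq V] :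
    #(completeEdges V) = (Fintype.card V).choose 2 := by
  rw [← SimpleGraph.card_edgeFinset_top_eq_card_choose_two]
  congr 1
  ext e
  simp [completeEdges]

lemma card_completeEdges_le (V : Type*) [Fintype V] [DecidableEq V] :
    (#(completeEdges V) : ℝ) ≤ (Fintype.card V : ℝ) ^ 2 / 2 := by
  rw [card_completeEdges, Nat.cast_choose_two]
  nlinarith [(Nat.cast_nonneg (Fintype.card V) : (0 : ℝ) ≤ Fintype.card V)]

lemma edgeSet_fromEdgeSet_of_subset {V : Type*} [Fintype V] [DecidableEq V]
    {A : Finset (Sym2 V)} (hA : A ⊆ completeEdges V) :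
    (SimpleGraph.fromEdgeSet (A : Set (Sym2 V))).edgeSet = A := by
  rw [SimpleGraph.edgeSet_fromEdgeSet, sdiff_eq_left, Set.disjoint_left]
  intro e he hdiag
  exact (mem_filter.1 (hA he)).2 hdiag

open Classical in
lemma gnpProb_eq_binomialProb (n : ℕ) (p : ℝ) (P : SimpleGraph (Fin n) → Prop) :
    gnpProb n p P = binomialProb (completeEdges (Fin n)) p
      (fun A => P (SimpleGraph.fromEdgeSet (A : Set (Sym2 (Fin n))))) := by
  unfold gnpProb binomialProb binomialExp
  symm
  refine sum_bij' (fun A _ => SimpleGraph.fromEdgeSet (A : Set (Sym2 (Fin n))))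
    (fun G _ => G.edgeFinset) (fun _ _ => mem_univ _) ?_ ?_ ?_ ?_
  · intro G _
    refine mem_powerset.2 fun e he => mem_filter.2 ⟨mem_univ e, ?_⟩
    exact G.not_isDiag_of_mem_edgeSet (SimpleGraph.mem_edgeFinset.1 he)
  · intro A hA
    ext e
    simp only [SimpleGraph.mem_edgeFinset, edgeSet_fromEdgeSet_of_subset (mem_powerset.1 hA),
      mem_coe]
  · intro G _
    simp
  · intro A hA
    rw [mem_powerset] at hA
    rw [edgeSet_fromEdgeSet_of_subset hA, Set.ncard_coe_finset, binomialWeight_eq_pow hA,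
      card_completeEdges, Fintype.card_fin, mul_ite, mul_one, mul_zero]

/-- The edge set of `G(n, p n)` satisfies `Q n` with high probability. This is expressed through
the complementary event, which is what union bounds estimate. -/
def WithHighProb (p : ℕ → ℝ) (Q : ∀ n, Finset (Sym2 (Fin n)) → Prop) : Prop :=
  Tendsto (fun n => binomialProb (completeEdges (Fin n)) (p n) fun A => ¬ Q n A) atTop (𝓝 0)

namespace WithHighProb

variable {p : ℕ → ℝ} {Q Q' : ∀ n, Finset (Sym2 (Fin n)) → Prop}

lemma of_le (hp : ∀ n, p n ∈ Set.Icc (0 : ℝ) 1) {b : ℕ → ℝ}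
    (hb : ∀ᶠ n in atTop, binomialProb (completeEdges (Fin n)) (p n) (fun A => ¬ Q n A) ≤ b n)
    (hlim : Tendsto b atTop (𝓝 0)) : WithHighProb p Q :=
  squeeze_zero' (Eventually.of_forall fun n => binomialProb_nonneg (hp n) _) hb hlim

lemma and (hp : ∀ n, p n ∈ Set.Icc (0 : ℝ) 1) (hQ : WithHighProb p Q)
    (hQ' : WithHighProb p Q') : WithHighProb p fun n A => Q n A ∧ Q' n A :=
  of_le hp (Eventually.of_forall fun n => binomialProb_le_add (hp n) fun _ _ => not_and_or.1)
    (by simpa using Tendsto.add hQ hQ')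

lemma imp (hp : ∀ n, p n ∈ Set.Icc (0 : ℝ) 1) (hQ : WithHighProb p Q)
    (h : ∀ᶠ n in atTop, ∀ A ⊆ completeEdges (Fin n), Q n A → Q' n A) : WithHighProb p Q' :=
  of_le hp (h.mono fun n hn => binomialProb_mono (hp n) fun A hA => mt (hn A hA)) hQ

lemma tendsto_gnpProb_of_monotone {P : ∀ n, SimpleGraph (Fin n) → Prop} {p' : ℕ → ℝ}
    (hP : WithHighProb p fun n A => P n (SimpleGraph.fromEdgeSet (A : Set (Sym2 (Fin n)))))
    (hp : ∀ n, p n ∈ Set.Icc (0 : ℝ) 1) (hpp' : ∀ n, p n ≤ p' n) (hp' : ∀ n, p' n ≤ 1)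
    (hmono : ∀ n, Monotone (P n)) : Tendsto (fun n => gnpProb n (p' n) (P n)) atTop (𝓝 1) := by
  have hlim := hP.const_sub 1
  rw [sub_zero] at hlim
  refine tendsto_of_tendsto_of_tendsto_of_le_of_le hlim tendsto_const_nhds (fun n => ?_)
    fun n => ?_ <;> simp only [gnpProb_eq_binomialProb]
  · refine (eq_sub_of_add_eq (binomialProb_add_not _)).ge.trans ?_
    exact binomialProb_le_binomialProb_of_monotone (hp n).1 (hpp' n) (hp' n)
      fun A B hAB => hmono n (SimpleGraph.fromEdgeSet_mono (mod_cast hAB))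
  · refine (le_add_of_nonneg_right ?_).trans_eq (binomialProb_add_not _)
    exact binomialProb_nonneg ⟨(hp n).1.trans (hpp' n), hp' n⟩ _

end WithHighProb

end RandomGraph

/-! ### Paths and cycles as vertex lists -/

section PathEdges

variable {V : Type*} {l : List V} {x y : V}

/-- The pairs `(x, y)` such that `y` immediately follows `x` in `l`: the arcs of the path visiting
the vertices in the order of `l`. -/
def consecutivePairs (l : List V) : List (V × V) := l.zip l.tail

/-- The edges of the path visiting the vertices in the order of `l`. -/
def pathEdges (l : List V) : List (Sym2 V) := (consecutivePairs l).map fun q => s(q.1, q.2)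

/-- The edges of the closed walk visiting the vertices in the cyclic order of `l`. -/
def cycleEdges (l : List V) : List (Sym2 V) := pathEdges (l ++ l.head?.toList)

@[simp] lemma consecutivePairs_nil : consecutivePairs ([] : List V) = [] := rfl

@[simp] lemma consecutivePairs_singleton (a : V) : consecutivePairs [a] = [] := rfl

@[simp] lemma consecutivePairs_cons_cons (a b : V) (l : List V) :
    consecutivePairs (a :: b :: l) = (a, b) :: consecutivePairs (b :: l) := rfl

@[simp] lemma pathEdges_nil : pathEdges ([] : List V) = [] := rfl

@[simp] lemma pathEdges_singleton (a : V) : pathEdges [a] = [] := rfl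

@[simp] lemma pathEdges_cons_cons (a b : V) (l : List V) :
    pathEdges (a :: b :: l) = s(a, b) :: pathEdges (b :: l) := rfl

lemma consecutivePairs_append {P S : List V} (hx : P.getLast? = some x) (hy : S.head? = some y) :
    consecutivePairs (P ++ S) = consecutivePairs P ++ (x, y) :: consecutivePairs S := by
  obtain ⟨S, rfl⟩ := List.head?_eq_some_iff.1 hy
  induction P with
  | nil => simp at hx
  | cons a P ih =>
    cases P with
    | nil => simp_all
    | cons b P => simpa using ih (by simpa using hx)

lemma pathEdges_append {P S : List V} (hx : P.getLast? = some x) (hy : S.head? = some y) :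
    pathEdges (P ++ S) = pathEdges P ++ s(x, y) :: pathEdges S := by
  simp only [pathEdges, consecutivePairs_append hx hy, List.map_append, List.map_cons]

lemma pathEdges_reverse (l : List V) : (pathEdges l.reverse).Perm (pathEdges l) := by
  induction l with
  | nil => simp
  | cons a l ih =>
    cases l with
    | nil => simp
    | cons b l =>
      rw [List.reverse_cons, pathEdges_append (x := b) (y := a) (by simp) rfl,
        pathEdges_cons_cons, pathEdges_singleton, Sym2.eq_swap]
      exact (List.perm_append_singleton _ _).trans (ih.cons _)

lemma map_fst_consecutivePairs (l : List V) :
    (consecutivePairs l).map Prod.fst = l.dropLast := by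
  induction l with
  | nil => rfl
  | cons a l ih =>
    cases l with
    | nil => rfl
    | cons b l => simp [ih]

lemma map_snd_consecutivePairs (l : List V) : (consecutivePairs l).map Prod.snd = l.tail :=
  List.map_snd_zip (by simp)

lemma mem_dropLast_of_mem_consecutivePairs (h : (x, y) ∈ consecutivePairs l) :
    x ∈ l.dropLast :=
  map_fst_consecutivePairs l ▸ List.mem_map_of_mem (f := Prod.fst) h

lemma mem_tail_of_mem_consecutivePairs (h : (x, y) ∈ consecutivePairs l) : y ∈ l.tail :=
  map_snd_consecutivePairs l ▸ List.mem_map_of_mem (f := Prod.snd) h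

lemma eq_of_mem_consecutivePairs_left (hl : l.Nodup) {y' : V} (h : (x, y) ∈ consecutivePairs l)
    (h' : (x, y') ∈ consecutivePairs l) : y = y' := by
  have hnodup : ((consecutivePairs l).map Prod.fst).Nodup := by
    rw [map_fst_consecutivePairs]
    exact hl.sublist l.dropLast_sublist
  exact congrArg Prod.snd (List.inj_on_of_nodup_map hnodup h h' rfl)

lemma eq_of_mem_consecutivePairs_right (hl : l.Nodup) {x' : V}
    (h : (x, y) ∈ consecutivePairs l) (h' : (x', y) ∈ consecutivePairs l) : x = x' := by
  have hnodup : ((consecutivePairs l).map Prod.snd).Nodup := by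
    rw [map_snd_consecutivePairs]
    exact hl.tail
  exact congrArg Prod.fst (List.inj_on_of_nodup_map hnodup h h' rfl)

lemma mem_consecutivePairs_iff : (x, y) ∈ consecutivePairs l ↔
    ∃ P S, l = P ++ S ∧ P.getLast? = some x ∧ S.head? = some y := by
  constructor
  · intro h
    induction l with
    | nil => simp at h
    | cons a l ih =>
      cases l with
      | nil => simp at h
      | cons b l =>
        rw [consecutivePairs_cons_cons, List.mem_cons, Prod.mk.injEq] at h
        rcases h with ⟨rfl, rfl⟩ | h
        · exact ⟨[x], y :: l, rfl, rfl, rfl⟩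
        · obtain ⟨P, S, hPS, hx, hy⟩ := ih h
          exact ⟨a :: P, S, by rw [hPS, List.cons_append], by simp [List.getLast?_cons, hx], hy⟩
  · rintro ⟨P, S, rfl, hx, hy⟩
    simp [consecutivePairs_append hx hy]

lemma mk_mem_pathEdges_iff :
    s(x, y) ∈ pathEdges l ↔ (x, y) ∈ consecutivePairs l ∨ (y, x) ∈ consecutivePairs l := by
  simp only [pathEdges, List.mem_map, Prod.exists, Sym2.eq_iff]
  constructor
  · rintro ⟨a, b, h, ⟨rfl, rfl⟩ | ⟨rfl, rfl⟩⟩ <;> simp [h]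
  · rintro (h | h) <;> exact ⟨_, _, h, by simp⟩

lemma left_mem_of_mk_mem_pathEdges (h : s(x, y) ∈ pathEdges l) : x ∈ l := by
  rcases mk_mem_pathEdges_iff.1 h with h | h
  · exact List.mem_of_mem_dropLast (mem_dropLast_of_mem_consecutivePairs h)
  · exact List.mem_of_mem_tail (mem_tail_of_mem_consecutivePairs h)

lemma right_mem_of_mk_mem_pathEdges (h : s(x, y) ∈ pathEdges l) : y ∈ l :=
  left_mem_of_mk_mem_pathEdges (Sym2.eq_swap ▸ h)

lemma nodup_pathEdges (hl : l.Nodup) : (pathEdges l).Nodup := by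
  induction l with
  | nil => simp
  | cons a l ih =>
    cases l with
    | nil => simp
    | cons b l =>
      obtain ⟨ha, hl⟩ := List.nodup_cons.1 hl
      rw [pathEdges_cons_cons, List.nodup_cons]
      exact ⟨fun h => ha (left_mem_of_mk_mem_pathEdges h), ih hl⟩

lemma length_pathEdges (l : List V) : (pathEdges l).length = l.length - 1 := by
  simp [pathEdges, consecutivePairs]

lemma cycleEdges_eq_pathEdges_append {a b : V} (ha : l.head? = some a)
    (hb : l.getLast? = some b) : cycleEdges l = pathEdges l ++ [s(b, a)] := by
  rw [cycleEdges, ha, Option.toList_some, pathEdges_append hb rfl, pathEdges_singleton]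

lemma pathEdges_prefix_cycleEdges (l : List V) : pathEdges l <+: cycleEdges l := by
  rcases l with _ | ⟨a, l⟩
  · exact List.prefix_rfl
  · exact ⟨_, (cycleEdges_eq_pathEdges_append rfl (List.getLast?_cons)).symm⟩

lemma length_cycleEdges (l : List V) : (cycleEdges l).length = l.length := by
  cases l <;> simp [cycleEdges, length_pathEdges]

lemma cycleEdges_append_comm (P S : List V) :
    (cycleEdges (P ++ S)).Perm (cycleEdges (S ++ P)) := by
  rcases eq_or_ne P [] with rfl | hP
  · simp
  rcases eq_or_ne S [] with rfl | hS
  · simp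
  have hP₁ := List.head?_eq_some_head hP
  have hP₂ := List.getLast?_eq_some_getLast hP
  have hS₁ := List.head?_eq_some_head hS
  have hS₂ := List.getLast?_eq_some_getLast hS
  rw [cycleEdges_eq_pathEdges_append (a := P.head hP) (b := S.getLast hS) (by simp [hP₁])
      (by simp [hS₂]),
    cycleEdges_eq_pathEdges_append (a := S.head hS) (b := P.getLast hP) (by simp [hS₁])
      (by simp [hP₂]),
    pathEdges_append hP₂ hS₁, pathEdges_append hS₂ hP₁]
  simpa using List.perm_append_comm (l₁ := pathEdges P ++ [s(P.getLast hP, S.head hS)])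
    (l₂ := pathEdges S ++ [s(S.getLast hS, P.head hP)])

lemma exists_perm_cycleEdges_eq_append {e : Sym2 V} (he : e ∈ cycleEdges l) :
    ∃ l', l'.Perm l ∧ (cycleEdges l').Perm (cycleEdges l) ∧
      cycleEdges l' = pathEdges l' ++ [e] := by
  rcases eq_or_ne l [] with rfl | hl
  · simp [cycleEdges] at he
  have hclose := cycleEdges_eq_pathEdges_append (List.head?_eq_some_head hl)
    (List.getLast?_eq_some_getLast hl)
  rw [hclose, List.mem_append, List.mem_singleton] at he
  rcases he with he | rfl
  · obtain ⟨⟨x, y⟩, hxy, rfl⟩ := List.mem_map.1 he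
    obtain ⟨P, S, rfl, hx, hy⟩ := mem_consecutivePairs_iff.1 hxy
    exact ⟨S ++ P, List.perm_append_comm, cycleEdges_append_comm S P,
      cycleEdges_eq_pathEdges_append (by simp [hy]) (by simp [hx])⟩
  · exact ⟨l, .refl _, .refl _, hclose⟩

lemma nodup_cycleEdges (hl : l.Nodup) (hlen : 3 ≤ l.length) : (cycleEdges l).Nodup := by
  match l, hlen with
  | a :: b :: c :: l, _ =>
    obtain ⟨z, hz⟩ : ∃ z, (c :: l).getLast? = some z := ⟨_, List.getLast?_cons⟩
    have hz_mem : z ∈ c :: l := List.mem_of_getLast? hz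
    obtain ⟨ha, hl'⟩ := List.nodup_cons.1 hl
    obtain ⟨hb, -⟩ := List.nodup_cons.1 hl'
    rw [cycleEdges_eq_pathEdges_append (a := a) (b := z) rfl (by simpa using hz),
      List.nodup_append]
    refine ⟨nodup_pathEdges hl, by simp, ?_⟩
    rintro e he _ hclose rfl
    obtain rfl := List.mem_singleton.1 hclose
    rcases List.mem_cons.1 (pathEdges_cons_cons a b (c :: l) ▸ he) with hfirst | hlater
    · obtain ⟨rfl, -⟩ | ⟨rfl, -⟩ := Sym2.eq_iff.1 hfirst
      · exact ha (List.mem_cons_of_mem b hz_mem)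
      · exact hb hz_mem
    · exact ha (right_mem_of_mk_mem_pathEdges hlater)

/-- `l` lists every vertex exactly once. Such a list encodes a Hamilton path of the complete graph
through `pathEdges`, and a Hamilton cycle through `cycleEdges`. -/
structure IsEnumeration (l : List V) : Prop where
  nodup : l.Nodup
  mem : ∀ x, x ∈ l

lemma IsEnumeration.of_perm {l' : List V} (hl : IsEnumeration l) (h : l'.Perm l) :
    IsEnumeration l' :=
  ⟨h.nodup_iff.2 hl.nodup, fun x => h.mem_iff.2 (hl.mem x)⟩

lemma IsEnumeration.length_eq [Fintype V] (hl : IsEnumeration l) :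
    l.length = Fintype.card V := by
  classical
  rw [← List.toFinset_card_of_nodup hl.nodup, ← card_univ]
  congr 1
  ext x
  simp [hl.mem x]

end PathEdges

/-! ### Pósa rotations -/

section Rotation

variable {V : Type*} {N : V → V → Prop} {l₀ l : List V}

/-- Pósa rotation: the final segment `S` of a path is reversed, which makes the end `v` of the path
adjacent to the pivot `u`. The relation `N` says which pivots are admissible for `v`. -/
inductive Rotation (N : V → V → Prop) : List V → List V → Prop
  | mk (P S : List V) (u v : V) (hu : P.getLast? = some u) (hv : S.getLast? = some v)
      (h : N v u) : Rotation N (P ++ S) (P ++ S.reverse)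

/-- `v` is the end of a path that arises from `l₀` by rotations. -/
def IsRotationEnd (N : V → V → Prop) (l₀ : List V) (v : V) : Prop :=
  ∃ l, Relation.ReflTransGen (Rotation N) l₀ l ∧ l.getLast? = some v

lemma Rotation.perm {l' : List V} (h : Rotation N l l') : l'.Perm l := by
  obtain ⟨P, S, -⟩ := h
  exact S.reverse_perm.append_left P

lemma exists_pathEdges_eq_of_rotation {l' : List V} (h : Rotation N l l') :
    ∃ E₁ E₂ u v w, N v u ∧ l.getLast? = some v ∧ l'.getLast? = some w ∧
      pathEdges l = E₁ ++ s(u, w) :: E₂ ∧ (pathEdges l').Perm (E₁ ++ s(u, v) :: E₂) := by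
  obtain ⟨P, S, u, v, hu, hv, hN⟩ := h
  obtain ⟨w, hw⟩ : ∃ w, S.head? = some w := by
    cases S with
    | nil => simp at hv
    | cons w S => exact ⟨w, rfl⟩
  refine ⟨pathEdges P, pathEdges S, u, v, w, hN, by simp [hv], by simp [hw],
    pathEdges_append hu hw, ?_⟩
  rw [pathEdges_append hu (y := v) (by simpa using hv)]
  exact ((pathEdges_reverse S).cons _).append_left _

lemma perm_of_reflTransGen_rotation (h : Relation.ReflTransGen (Rotation N) l₀ l) :
    l.Perm l₀ := by
  induction h with
  | refl => exact List.Perm.refl _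
  | tail _ hrot ih => exact hrot.perm.trans ih

lemma mk_mem_pathEdges_iff_of_reflTransGen_rotation {u : V} (hu : ¬ IsRotationEnd N l₀ u)
    (hnbr : ∀ w, IsRotationEnd N l₀ w → s(u, w) ∉ pathEdges l₀)
    (hl : Relation.ReflTransGen (Rotation N) l₀ l) (x : V) :
    s(u, x) ∈ pathEdges l ↔ s(u, x) ∈ pathEdges l₀ := by
  induction hl generalizing x with
  | refl => exact Iff.rfl
  | tail hl hrot ih =>
    obtain ⟨E₁, E₂, u', v, w, -, hv, hw, hbefore, hafter⟩ := exists_pathEdges_eq_of_rotation hrot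
    have hv_end : IsRotationEnd N l₀ v := ⟨_, hl, hv⟩
    have hw_end : IsRotationEnd N l₀ w := ⟨_, hl.tail hrot, hw⟩
    have hpivot : u ≠ u' := by
      rintro rfl
      exact hnbr w hw_end ((ih w).1 (by simp [hbefore]))
    have hne : ∀ z, IsRotationEnd N l₀ z → s(u, x) ≠ s(u', z) := by
      intro z hz heq
      obtain ⟨h, -⟩ | ⟨h, -⟩ := Sym2.eq_iff.1 heq
      · exact hpivot h
      · exact hu (h ▸ hz)
    rw [← ih x, hafter.mem_iff, hbefore]
    simp [hne v hv_end, hne w hw_end]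

-- Otherwise the edges at `u` are the same in all paths that arise by rotations, so the rotation of
-- the path ending in `v` about `u` makes one of the neighbours of `u` on `l₀` an end.
lemma exists_isRotationEnd_mk_mem_pathEdges {u v : V} (hul : u ∈ l₀) (hv : IsRotationEnd N l₀ v)
    (hN : N v u) (hu : ¬ IsRotationEnd N l₀ u) :
    ∃ w, IsRotationEnd N l₀ w ∧ s(u, w) ∈ pathEdges l₀ := by
  by_contra! hnbr
  obtain ⟨l, hl, hlast⟩ := hv
  obtain ⟨P, S, rfl⟩ := List.append_of_mem ((perm_of_reflTransGen_rotation hl).mem_iff.2 hul)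
  cases S with
  | nil => exact hu ⟨_, hl, by simp⟩
  | cons w S =>
    have hPu : (P ++ [u]).getLast? = some u := by simp
    have hsplit : P ++ u :: w :: S = (P ++ [u]) ++ w :: S := by simp
    have hrot : Rotation N (P ++ u :: w :: S) ((P ++ [u]) ++ (w :: S).reverse) :=
      hsplit ▸ .mk _ _ u v hPu (by simpa using hlast) hN
    refine hnbr w ⟨_, hl.tail hrot, by simp [List.getLast?_cons]⟩
      ((mk_mem_pathEdges_iff_of_reflTransGen_rotation hu hnbr hl w).1 ?_)
    rw [hsplit, pathEdges_append hPu (S := w :: S) rfl]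
    simp

open Classical in
-- Pósa's lemma.
lemma card_rotation_pivots_add_one_le [Fintype V] (hl : IsEnumeration l₀) (hne : l₀ ≠ []) :
    #{u | ¬ IsRotationEnd N l₀ u ∧ ∃ v, IsRotationEnd N l₀ v ∧ N v u} + 1
      ≤ 2 * #{v | IsRotationEnd N l₀ v} := by
  set ends : Finset V := {v | IsRotationEnd N l₀ v}
  set z := l₀.getLast hne
  have hz : z ∈ ends := mem_filter.2 ⟨mem_univ z, l₀, .refl, List.getLast?_eq_some_getLast hne⟩
  have hpred : #{u | ∃ w ∈ ends, (u, w) ∈ consecutivePairs l₀} ≤ #ends :=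
    card_le_card_of_forall_subsingleton (fun u w => (u, w) ∈ consecutivePairs l₀)
      (fun u hu => by simpa using hu)
      fun w _ u hu u' hu' => eq_of_mem_consecutivePairs_right hl.nodup hu.2 hu'.2
  have hsucc : #{u | ∃ w ∈ ends, (w, u) ∈ consecutivePairs l₀} ≤ #(ends.erase z) := by
    refine card_le_card_of_forall_subsingleton (fun u w => (w, u) ∈ consecutivePairs l₀)
      (fun u hu => ?_) fun w _ u hu u' hu' => eq_of_mem_consecutivePairs_left hl.nodup hu.2 hu'.2
    obtain ⟨w, hw, hwu⟩ := (mem_filter.1 hu).2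
    refine ⟨w, mem_erase.2 ⟨?_, hw⟩, hwu⟩
    rintro rfl
    have hnodup := hl.nodup
    rw [← List.dropLast_append_getLast hne, List.nodup_append] at hnodup
    exact hnodup.2.2 _ (mem_dropLast_of_mem_consecutivePairs hwu) _ (List.mem_singleton_self _) rfl
  have hcover : ({u | ¬ IsRotationEnd N l₀ u ∧ ∃ v, IsRotationEnd N l₀ v ∧ N v u} : Finset V) ⊆
      ({u | ∃ w ∈ ends, (u, w) ∈ consecutivePairs l₀} : Finset V) ∪
      ({u | ∃ w ∈ ends, (w, u) ∈ consecutivePairs l₀} : Finset V) := by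
    intro u hu
    obtain ⟨hu, v, hv, hvu⟩ := (mem_filter.1 hu).2
    obtain ⟨w, hw, huw⟩ := exists_isRotationEnd_mk_mem_pathEdges (hl.mem u) hv hvu hu
    have hw : w ∈ ends := mem_filter.2 ⟨mem_univ w, hw⟩
    rw [← filter_or, mem_filter]
    exact ⟨mem_univ u, (mk_mem_pathEdges_iff.1 huw).imp (⟨w, hw, ·⟩) (⟨w, hw, ·⟩)⟩
  have hcard := (card_le_card hcover).trans (card_union_le _ _)
  have hpos := card_erase_add_one hz
  omega

end Rotation

section HamiltonianCycle

variable {V : Type*} {G : SimpleGraph V} {l : List V}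

lemma exists_walk_edges_eq_pathEdges {a b : V} (ha : l.head? = some a) (hb : l.getLast? = some b)
    (hG : ∀ e ∈ pathEdges l, e ∈ G.edgeSet) :
    ∃ w : G.Walk a b, w.support = l ∧ w.edges = pathEdges l := by
  induction l generalizing a with
  | nil => simp at ha
  | cons x l ih =>
    obtain rfl : x = a := by simpa using ha
    cases l with
    | nil =>
      obtain rfl : x = b := by simpa using hb
      exact ⟨.nil, by simp, by simp⟩
    | cons y l =>
      rw [pathEdges_cons_cons, List.forall_mem_cons, SimpleGraph.mem_edgeSet] at hG
      obtain ⟨w, hsupport, hedges⟩ := ih rfl (by simpa using hb) hG.2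
      exact ⟨.cons hG.1 w, by simp [hsupport], by simp [hedges]⟩

lemma exists_isHamiltonianCycle_edges_perm_cycleEdges [Fintype V] [DecidableEq V]
    (hV : 3 ≤ Fintype.card V) (hl : IsEnumeration l) (hG : ∀ e ∈ cycleEdges l, e ∈ G.edgeSet) :
    ∃ (v : V) (w : G.Walk v v), w.IsHamiltonianCycle ∧ w.edges.Perm (cycleEdges l) := by
  have hlen : 3 ≤ l.length := hl.length_eq ▸ hV
  have hne : l ≠ [] := List.ne_nil_of_length_pos (by omega)
  have ha := List.head?_eq_some_head hne
  have hb := List.getLast?_eq_some_getLast hne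
  have hnodup := nodup_cycleEdges hl.nodup hlen
  have hclose := cycleEdges_eq_pathEdges_append ha hb
  rw [hclose] at hG hnodup ⊢
  obtain ⟨w, hsupport, hedges⟩ := exists_walk_edges_eq_pathEdges ha hb
    fun e he => hG e (List.mem_append_left _ he)
  have hadj : G.Adj (l.getLast hne) (l.head hne) :=
    hG s(l.getLast hne, l.head hne) (by simp)
  have hpath : w.IsPath := .mk' (by rw [hsupport]; exact hl.nodup)
  refine ⟨_, .cons hadj w, ?_, ?_⟩
  · rw [SimpleGraph.Walk.isHamiltonianCycle_isCycle_and_isHamiltonian_tail,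
      SimpleGraph.Walk.cons_isCycle_iff, hedges]
    refine ⟨⟨hpath, fun h => ?_⟩, ?_⟩
    · exact (List.nodup_append.1 hnodup).2.2 _ h _ (List.mem_singleton_self _) rfl
    · intro x
      rw [SimpleGraph.Walk.support_tail_of_not_nil _ (by simp)]
      simpa using (hpath.isHamiltonian_of_mem fun x => by rw [hsupport]; exact hl.mem x) x
  · rw [SimpleGraph.Walk.edges_cons, hedges]
    exact (List.perm_append_singleton _ _).symm

end HamiltonianCycle

/-! ### Optimal Hamilton paths and boosters -/

section Boosters

variable {V : Type*} {A F T : Finset (Sym2 V)} {Z : Finset V} {l l' : List V}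

/-- One move of the local search on Hamilton paths: a rotation about a pivot in `Z` along an edge of
`T`, or the reversal of the path. -/
def PathMove (T : Finset (Sym2 V)) (Z : Finset V) (l l' : List V) : Prop :=
  Rotation (fun v u => s(v, u) ∈ T ∧ u ∈ Z) l l' ∨ l' = l.reverse

open Classical in
/-- The edges that close up one of the paths that arise from `l` by moves to a cycle. Those of them
that lie in the graph are the boosters of `l`. -/
noncomputable def closingEdges [Fintype V] (l : List V) (T : Finset (Sym2 V)) (Z : Finset V) :
    Finset (Sym2 V) :=
  {e | ∃ l' a b, Relation.ReflTransGen (PathMove T Z) l l' ∧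
    l'.head? = some a ∧ l'.getLast? = some b ∧ e = s(a, b)}

lemma PathMove.perm (h : PathMove T Z l l') : l'.Perm l := by
  rcases h with hrot | rfl
  · exact hrot.perm
  · exact l.reverse_perm

lemma PathMove.mem_pathEdges (h : PathMove T Z l l') {e : Sym2 V} (heZ : ∀ x ∈ Z, x ∉ e)
    (he : e ∈ pathEdges l) : e ∈ pathEdges l' := by
  rcases h with hrot | rfl
  · obtain ⟨E₁, E₂, u, v, w, ⟨-, huZ⟩, -, -, hbefore, hafter⟩ :=
      exists_pathEdges_eq_of_rotation hrot
    have hne : e ≠ s(u, w) := by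
      rintro rfl
      exact heZ u huZ (Sym2.mem_mk_left u w)
    rw [hbefore] at he
    rw [hafter.mem_iff]
    simp only [List.mem_append, List.mem_cons, hne, false_or] at he ⊢
    exact he.imp_right Or.inr
  · exact (pathEdges_reverse l).mem_iff.2 he

lemma PathMove.countP_pathEdges_le [DecidableEq V] (hTA : T ⊆ A) (h : PathMove T Z l l') :
    (pathEdges l).countP (· ∈ A) ≤ (pathEdges l').countP (· ∈ A) := by
  rcases h with hrot | rfl
  · obtain ⟨E₁, E₂, u, v, w, ⟨hT, -⟩, -, -, hbefore, hafter⟩ :=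
      exists_pathEdges_eq_of_rotation hrot
    have huv : s(u, v) ∈ A := Sym2.eq_swap ▸ hTA hT
    rw [hafter.countP_eq, hbefore]
    simp only [List.countP_append, List.countP_cons, huv, decide_true, if_true]
    split_ifs <;> omega
  · rw [(pathEdges_reverse l).countP_eq]

lemma mem_closingEdges [Fintype V] {e : Sym2 V} :
    e ∈ closingEdges l T Z ↔ ∃ l' a b, Relation.ReflTransGen (PathMove T Z) l l' ∧
      l'.head? = some a ∧ l'.getLast? = some b ∧ e = s(a, b) := by
  simp [closingEdges]

lemma perm_of_reflTransGen_pathMove (h : Relation.ReflTransGen (PathMove T Z) l l') :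
    l'.Perm l := by
  induction h with
  | refl => exact .refl _
  | tail _ hmove ih => exact hmove.perm.trans ih

lemma reflTransGen_pathMove_invariant [DecidableEq V] (hTA : T ⊆ A) (hFZ : ∀ e ∈ F, ∀ x ∈ Z, x ∉ e)
    (h : Relation.ReflTransGen (PathMove T Z) l l') (hF : ∀ e ∈ F, e ∈ pathEdges l) :
    (∀ e ∈ F, e ∈ pathEdges l') ∧
      (pathEdges l).countP (· ∈ A) ≤ (pathEdges l').countP (· ∈ A) := by
  induction h with
  | refl => exact ⟨hF, le_rfl⟩
  | tail _ hmove ih =>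
    obtain ⟨hF', hcount⟩ := ih
    exact ⟨fun e he => hmove.mem_pathEdges (hFZ e he) (hF' e he),
      hcount.trans (hmove.countP_pathEdges_le hTA)⟩

lemma ne_of_mk_mem_closingEdges [Fintype V] (hl : l.Nodup) (hlen : 2 ≤ l.length) {x y : V}
    (h : s(x, y) ∈ closingEdges l T Z) : x ≠ y := by
  obtain ⟨l', a, b, hl', ha, hb, hxy⟩ := mem_closingEdges.1 h
  have hperm := perm_of_reflTransGen_pathMove hl'
  obtain ⟨l', rfl⟩ := List.head?_eq_some_iff.1 ha
  have hab : a ≠ b := by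
    rcases l' with _ | ⟨c, l'⟩
    · simpa using hperm.length_eq.trans_ge hlen
    · rintro rfl
      refine (List.nodup_cons.1 (hperm.nodup_iff.2 hl)).1 (List.mem_of_getLast? (a := a) ?_)
      simpa using hb
  obtain ⟨rfl, rfl⟩ | ⟨rfl, rfl⟩ := Sym2.eq_iff.1 hxy
  · exact hab
  · exact hab.symm

lemma Rotation.head?_eq {N : V → V → Prop} (h : Rotation N l l') : l'.head? = l.head? := by
  obtain ⟨P, S, u, v, hu, -, -⟩ := h
  cases P with
  | nil => simp at hu
  | cons a P => simp

lemma reflTransGen_pathMove_of_rotation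
    (h : Relation.ReflTransGen (Rotation fun v u => s(v, u) ∈ T ∧ u ∈ Z) l l') :
    Relation.ReflTransGen (PathMove T Z) l l' ∧ l'.head? = l.head? := by
  induction h with
  | refl => exact ⟨.refl, rfl⟩
  | tail _ hrot ih => exact ⟨ih.1.tail (.inl hrot), hrot.head?_eq.trans ih.2⟩

lemma sum_card_filter_mk_mem_le_two_mul_card [Fintype V] [DecidableEq V] (B : Finset (Sym2 V)) :
    ∑ v, #{w | s(v, w) ∈ B} ≤ 2 * #B := by
  have hpairs : ∑ v, #{w | s(v, w) ∈ B} = #{q : V × V | s(q.1, q.2) ∈ B} := by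
    simp only [card_filter, ← univ_product_univ, sum_product]
  rw [hpairs, mul_comm]
  refine (card_le_mul_card_image_of_maps_to (f := fun q : V × V => s(q.1, q.2))
    (fun q hq => (mem_filter.1 hq).2) 2 fun e _ => ?_).trans_eq (mul_comm _ _)
  induction e with | _ x y
  refine (card_le_card (t := {(x, y), (y, x)}) fun q hq => ?_).trans card_le_two
  simpa [Prod.ext_iff] using (mem_filter.1 hq).2

open Classical in
-- Reverse a path with end `v` so that `v` becomes its fixed starting point, and rotate again.
lemma mul_self_le_two_mul_card_closingEdges [Fintype V] {s : ℕ}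
    (hends : ∀ l' : List V, l'.Perm l →
      s ≤ #{v | IsRotationEnd (fun v u => s(v, u) ∈ T ∧ u ∈ Z) l' v}) :
    s * s ≤ 2 * #(closingEdges l T Z) := by
  set N : V → V → Prop := fun v u => s(v, u) ∈ T ∧ u ∈ Z
  have hclosing : ∀ v, IsRotationEnd N l v → s ≤ #{w | s(v, w) ∈ closingEdges l T Z} := by
    rintro v ⟨l₁, hl₁, hv⟩
    have hmove : Relation.ReflTransGen (PathMove T Z) l l₁.reverse :=
      (reflTransGen_pathMove_of_rotation hl₁).1.tail (.inr rfl)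
    have hperm := l₁.reverse_perm.trans (perm_of_reflTransGen_rotation hl₁)
    refine (hends l₁.reverse hperm).trans (card_le_card fun w hw => ?_)
    obtain ⟨l₂, hl₂, hw⟩ := (mem_filter.1 hw).2
    obtain ⟨hmove₂, hhead⟩ := reflTransGen_pathMove_of_rotation hl₂
    have hstart : l₂.head? = some v := by rw [hhead, List.head?_reverse, hv]
    exact mem_filter.2 ⟨mem_univ w,
      mem_closingEdges.2 ⟨l₂, v, w, hmove.trans hmove₂, hstart, hw, rfl⟩⟩
  calc s * s ≤ #{v | IsRotationEnd N l v} * s := Nat.mul_le_mul_right s (hends l (.refl l))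
    _ = ∑ v with IsRotationEnd N l v, s := by rw [sum_const, smul_eq_mul]
    _ ≤ ∑ v with IsRotationEnd N l v, #{w | s(v, w) ∈ closingEdges l T Z} :=
      sum_le_sum fun v hv => hclosing v (mem_filter.1 hv).2
    _ ≤ ∑ v, #{w | s(v, w) ∈ closingEdges l T Z} := sum_le_sum_of_subset (filter_subset _ _)
    _ ≤ 2 * #(closingEdges l T Z) := sum_card_filter_mk_mem_le_two_mul_card _

end Boosters

section OptimalPath

variable {V : Type*}

/-- The edge set `A` contains an edge between any two disjoint sets of at least `g` vertices. -/
def IsJoined (A : Finset (Sym2 V)) (g : ℕ) : Prop :=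
  ∀ X Y : Finset V, Disjoint X Y → g ≤ #X → g ≤ #Y → ∃ x ∈ X, ∃ y ∈ Y, s(x, y) ∈ A

/-- Every set `S` of at most `g` vertices has at least `2 * #S` neighbours along `Γ` that lie in `Z`
and outside `S`. -/
def ExpandsInto (Γ : Finset (Sym2 V)) (Z : Finset V) (g : ℕ) : Prop :=
  ∀ S : Finset V, #S ≤ g → ∃ U ⊆ Z, Disjoint U S ∧ 2 * #S ≤ #U ∧ ∀ u ∈ U, ∃ v ∈ S, s(v, u) ∈ Γ

/-- Whenever a small edge set `T ⊆ A` contains almost all edges of a Hamilton path of the complete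
graph, and rotations along `T` produce many closing edges of the path, one of these lies in `A`. -/
def HasBoosters [Fintype V] [DecidableEq V] (A : Finset (Sym2 V)) (M m b : ℕ) : Prop :=
  ∀ (Z : Finset V) (l : List V), IsEnumeration l → ∀ T ⊆ A, #T ≤ M →
    #((pathEdges l).toFinset \ T) ≤ m → b ≤ #(closingEdges l T Z) → ∃ e ∈ closingEdges l T Z, e ∈ A

/-- A Hamilton path `l` of the complete graph through the prescribed edges `F` that has at least as
many edges in `A` as any Hamilton cycle closing up such a path. -/
structure IsOptimalPath [DecidableEq V] (A F : Finset (Sym2 V)) (l : List V) : Prop where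
  isEnumeration : IsEnumeration l
  forall_mem_pathEdges : ∀ e ∈ F, e ∈ pathEdges l
  countP_cycleEdges_le : ∀ l', IsEnumeration l' → (∀ e ∈ F, e ∈ pathEdges l') →
    (cycleEdges l').countP (· ∈ A) ≤ (pathEdges l).countP (· ∈ A)

variable {A F T Γ : Finset (Sym2 V)} {Z : Finset V} {l : List V}

lemma IsJoined.mono {g : ℕ} (h : IsJoined Γ g) (hΓ : Γ ⊆ A) : IsJoined A g := by
  intro X Y hXY hX hY
  obtain ⟨x, hx, y, hy, hxy⟩ := h X Y hXY hX hY
  exact ⟨x, hx, y, hy, hΓ hxy⟩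

lemma card_lt_two_mul_of_isJoined {W : Finset V} {g : ℕ} (hA : IsJoined A g)
    (hW : ∀ x ∈ W, ∀ y ∈ W, x ≠ y → s(x, y) ∉ A) : #W < 2 * g := by
  classical
  by_contra! hlarge
  obtain ⟨X, hXW, hX⟩ := exists_subset_card_eq (s := W) (n := g) (by omega)
  have hrest : g ≤ #(W \ X) := by
    rw [card_sdiff_of_subset hXW]
    omega
  obtain ⟨x, hx, y, hy, hxy⟩ := hA X (W \ X) disjoint_sdiff hX.ge hrest
  rw [Finset.mem_sdiff] at hy
  exact hW x (hXW hx) y hy.1 (ne_of_mem_of_not_mem hx hy.2) hxy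

lemma exists_cycleEdges_subset_or_isOptimalPath [Finite V] [DecidableEq V] (hFA : F ⊆ A)
    {l₀ : List V} (hl₀ : IsEnumeration l₀) (hF₀ : ∀ e ∈ F, e ∈ cycleEdges l₀) :
    (∃ l, IsEnumeration l ∧ (∀ e ∈ cycleEdges l, e ∈ A) ∧ ∀ e ∈ F, e ∈ cycleEdges l) ∨
      ∃ l, IsOptimalPath A F l := by
  have := Fintype.ofFinite V
  obtain ⟨l, ⟨hl, hF⟩, hmax⟩ := Set.exists_max_image
    {l : List V | IsEnumeration l ∧ ∀ e ∈ F, e ∈ cycleEdges l}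
    (fun l => (cycleEdges l).countP (· ∈ A))
    ((List.finite_length_eq V (Fintype.card V)).subset fun l hl => hl.1.length_eq)
    ⟨l₀, hl₀, hF₀⟩
  by_cases hgood : ∀ e ∈ cycleEdges l, e ∈ A
  · exact .inl ⟨l, hl, hgood, hF⟩
  push Not at hgood
  obtain ⟨e, he, heA⟩ := hgood
  obtain ⟨l', hperm, hcycle, hlast⟩ := exists_perm_cycleEdges_eq_append he
  refine .inr ⟨l', hl.of_perm hperm, fun f hf => ?_, fun l'' hl'' hF'' => ?_⟩
  · have hf' := hcycle.mem_iff.2 (hF f hf)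
    rw [hlast, List.mem_append, List.mem_singleton] at hf'
    exact hf'.resolve_right (ne_of_mem_of_not_mem (hFA hf) heA)
  · calc (cycleEdges l'').countP (· ∈ A) ≤ (cycleEdges l).countP (· ∈ A) :=
          hmax l'' ⟨hl'', fun f hf => (pathEdges_prefix_cycleEdges l'').subset (hF'' f hf)⟩
      _ = (cycleEdges l').countP (· ∈ A) := (hcycle.countP_eq _).symm
      _ = (pathEdges l').countP (· ∈ A) := by simp [hlast, heA]

lemma pathEdges_append_append {P Q S : List V} {x x' y y' : V} (hx : P.getLast? = some x)
    (hx' : Q.head? = some x') (hy : Q.getLast? = some y) (hy' : S.head? = some y') :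
    pathEdges (P ++ (Q ++ S)) =
      pathEdges P ++ s(x, x') :: (pathEdges Q ++ s(y, y') :: pathEdges S) := by
  rw [pathEdges_append hx (y := x') (by simp [hx']), pathEdges_append hy hy']

lemma mk_notMem_of_isOptimalPath_append [DecidableEq V] (hFA : F ⊆ A) {P Q S : List V}
    {x x' y y' : V} (h : IsOptimalPath A F (P ++ (Q ++ S))) (hx : P.getLast? = some x)
    (hx' : Q.head? = some x') (hy : Q.getLast? = some y) (hy' : S.head? = some y')
    (hxx' : s(x, x') ∉ A) (hyy' : s(y, y') ∉ A) : s(x, y) ∉ A := by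
  intro hxy
  have hold := pathEdges_append_append hx hx' hy hy'
  have hnew : pathEdges (P ++ (Q.reverse ++ S)) =
      pathEdges P ++ s(x, y) :: (pathEdges Q.reverse ++ s(x', y') :: pathEdges S) :=
    pathEdges_append_append hx (by simp [hy]) (by simp [hx']) hy'
  have hF : ∀ e ∈ F, e ∈ pathEdges (P ++ (Q.reverse ++ S)) := by
    intro e he
    have heA := hFA he
    have hmem := h.forall_mem_pathEdges e he
    rw [hold] at hmem
    simp only [hnew, List.mem_append, List.mem_cons, (pathEdges_reverse Q).mem_iff,
      ne_of_mem_of_not_mem heA hxx', ne_of_mem_of_not_mem heA hyy', false_or] at hmem ⊢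
    tauto
  have hperm : (P ++ (Q.reverse ++ S)).Perm (P ++ (Q ++ S)) :=
    (Q.reverse_perm.append_right S).append_left P
  have hle := ((pathEdges_prefix_cycleEdges _).sublist.countP_le (p := (· ∈ A))).trans
    (h.countP_cycleEdges_le _ (h.isEnumeration.of_perm hperm) hF)
  rw [hold, hnew] at hle
  simp only [List.countP_append, List.countP_cons, (pathEdges_reverse Q).countP_eq, hxy, hxx', hyy',
    decide_true, decide_false, if_true, Bool.false_eq_true, if_false] at hle
  omega

-- Two-opt: exchanging `s(x, x')` and `s(y, y')` for `s(x, y)` and `s(x', y')` reverses a segment.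
lemma mk_notMem_of_mem_consecutivePairs [DecidableEq V] (hFA : F ⊆ A) (h : IsOptimalPath A F l)
    {x x' y y' : V} (hx : (x, x') ∈ consecutivePairs l) (hy : (y, y') ∈ consecutivePairs l)
    (hxx' : s(x, x') ∉ A) (hyy' : s(y, y') ∉ A) (hxy : x ≠ y) : s(x, y) ∉ A := by
  obtain ⟨P, S, rfl, hPx, hSx'⟩ := mem_consecutivePairs_iff.1 hx
  obtain ⟨P', S', hl, hPy, hSy'⟩ := mem_consecutivePairs_iff.1 hy
  rcases List.append_eq_append_iff.1 hl with ⟨Q, rfl, rfl⟩ | ⟨Q, rfl, rfl⟩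
  · have hQ : Q ≠ [] := by
      rintro rfl
      exact hxy (by simpa [hPx] using hPy)
    exact mk_notMem_of_isOptimalPath_append hFA h hPx (by simpa [hQ] using hSx')
      (by simpa [hQ] using hPy) hSy' hxx' hyy'
  · have hQ : Q ≠ [] := by
      rintro rfl
      exact hxy (by simpa [hPy] using hPx.symm)
    rw [List.append_assoc] at h
    rw [Sym2.eq_swap]
    exact mk_notMem_of_isOptimalPath_append hFA h hPy (by simpa [hQ] using hSy')
      (by simpa [hQ] using hPx) hSx' hyy' hxx'

lemma card_pathEdges_sdiff_lt [Finite V] [DecidableEq V] {g : ℕ} (hA : IsJoined A g)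
    (hFA : F ⊆ A) (h : IsOptimalPath A F l) : #((pathEdges l).toFinset \ A) < 2 * g := by
  have := Fintype.ofFinite V
  set W : Finset V := {x | ∃ y, (x, y) ∈ consecutivePairs l ∧ s(x, y) ∉ A}
  have hW : #W < 2 * g := card_lt_two_mul_of_isJoined hA fun x hx y hy hxy => by
    obtain ⟨x', hx', hxA⟩ := (mem_filter.1 hx).2
    obtain ⟨y', hy', hyA⟩ := (mem_filter.1 hy).2
    exact mk_notMem_of_mem_consecutivePairs hFA h hx' hy' hxA hyA hxy
  refine lt_of_le_of_lt (card_le_card_of_forall_subsingleton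
    (fun e x => ∃ y, e = s(x, y) ∧ (x, y) ∈ consecutivePairs l) (fun e he => ?_) ?_) hW
  · rw [Finset.mem_sdiff, List.mem_toFinset] at he
    obtain ⟨⟨x, y⟩, hxy, rfl⟩ := List.mem_map.1 he.1
    exact ⟨x, mem_filter.2 ⟨mem_univ x, y, hxy, he.2⟩, y, rfl, hxy⟩
  · rintro x - _ ⟨-, y, rfl, hy⟩ _ ⟨-, y', rfl, hy'⟩
    rw [eq_of_mem_consecutivePairs_left h.isEnumeration.nodup hy hy']

open Classical in
lemma le_card_isRotationEnd [Fintype V] {g s : ℕ} (hΓT : Γ ⊆ T) (hexp : ExpandsInto Γ Z g)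
    (hΓ : IsJoined Γ g) (hZ : 3 * s + g ≤ #Z) (hl : IsEnumeration l) (hne : l ≠ []) :
    s ≤ #{v | IsRotationEnd (fun v u => s(v, u) ∈ T ∧ u ∈ Z) l v} := by
  set N : V → V → Prop := fun v u => s(v, u) ∈ T ∧ u ∈ Z
  set S : Finset V := {v | IsRotationEnd N l v}
  set B : Finset V := {u | ¬ IsRotationEnd N l u ∧ ∃ v, IsRotationEnd N l v ∧ N v u}
  have hposa : #B + 1 ≤ 2 * #S := by convert card_rotation_pivots_add_one_le hl hne
  have mem_B : ∀ u ∈ Z, u ∉ S → (∃ v ∈ S, s(v, u) ∈ Γ) → u ∈ B := by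
    rintro u huZ huS ⟨v, hv, hvu⟩
    simp only [S, mem_filter, mem_univ, true_and] at huS hv
    exact mem_filter.2 ⟨mem_univ u, huS, v, hv, hΓT hvu, huZ⟩
  have hS : g ≤ #S := by
    by_contra! hlt
    obtain ⟨U, hUZ, hUS, hcard, hadj⟩ := hexp S hlt.le
    have hUB : #U ≤ #B := card_le_card fun u hu =>
      mem_B u (hUZ hu) (disjoint_left.1 hUS hu) (hadj u hu)
    omega
  have hrest : #(Z \ (S ∪ B)) < g := by
    by_contra! hge
    have hdisj : Disjoint S (Z \ (S ∪ B)) := disjoint_left.2 fun u hu huZ =>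
      (Finset.mem_sdiff.1 huZ).2 (mem_union_left _ hu)
    obtain ⟨v, hv, u, hu, hvu⟩ := hΓ S _ hdisj hS hge
    rw [Finset.mem_sdiff, mem_union, not_or] at hu
    exact hu.2.2 (mem_B u hu.1 hu.2.1 ⟨v, hv, hvu⟩)
  have hcover := card_le_card_sdiff_add_card (s := Z) (t := S ∪ B)
  have hunion := card_union_le S B
  omega

lemma mk_notMem_of_mem_closingEdges [Fintype V] [DecidableEq V] (h : IsOptimalPath A F l)
    (hTA : T ⊆ A) (hFZ : ∀ e ∈ F, ∀ x ∈ Z, x ∉ e) {e : Sym2 V} (he : e ∈ closingEdges l T Z) :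
    e ∉ A := by
  intro heA
  obtain ⟨l', a, b, hmoves, ha, hb, rfl⟩ := mem_closingEdges.1 he
  obtain ⟨hF', hcount⟩ := reflTransGen_pathMove_invariant hTA hFZ hmoves h.forall_mem_pathEdges
  have hle := h.countP_cycleEdges_le l'
    (h.isEnumeration.of_perm (perm_of_reflTransGen_pathMove hmoves)) hF'
  rw [cycleEdges_eq_pathEdges_append ha hb, Sym2.eq_swap, List.countP_append] at hle
  simp only [List.countP_singleton, heA, decide_true, if_true] at hle
  omega

theorem exists_isEnumeration_cycleEdges_subset [Fintype V] [Nonempty V] [DecidableEq V]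
    {g s M m b : ℕ} (hΓA : Γ ⊆ A) (hFA : F ⊆ A) (hFZ : ∀ e ∈ F, ∀ x ∈ Z, x ∉ e) {l₀ : List V}
    (hl₀ : IsEnumeration l₀) (hF₀ : ∀ e ∈ F, e ∈ cycleEdges l₀) (hexp : ExpandsInto Γ Z g)
    (hΓ : IsJoined Γ g) (hZ : 3 * s + g ≤ #Z) (hboost : HasBoosters A M m b) (hm : 2 * g ≤ m + 1)
    (hM : Fintype.card V + #Γ ≤ M) (hb : 2 * b ≤ s * s) :
    ∃ l, IsEnumeration l ∧ (∀ e ∈ cycleEdges l, e ∈ A) ∧ ∀ e ∈ F, e ∈ cycleEdges l := by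
  refine (exists_cycleEdges_subset_or_isOptimalPath hFA hl₀ hF₀).resolve_right ?_
  rintro ⟨l, hopt⟩
  have hl := hopt.isEnumeration
  set T : Finset (Sym2 V) := (pathEdges l).toFinset ∩ A ∪ Γ
  have hTA : T ⊆ A := union_subset inter_subset_right hΓA
  have hcard : #T ≤ M := by
    refine (card_union_le _ _).trans (le_trans (Nat.add_le_add_right ?_ _) hM)
    calc #((pathEdges l).toFinset ∩ A) ≤ #(pathEdges l).toFinset := card_le_card inter_subset_left
      _ ≤ l.length - 1 := length_pathEdges l ▸ List.toFinset_card_le _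
      _ ≤ Fintype.card V := hl.length_eq ▸ Nat.sub_le _ _
  have hmiss : #((pathEdges l).toFinset \ T) ≤ m := by
    have hsub : (pathEdges l).toFinset \ T ⊆ (pathEdges l).toFinset \ A := fun e he => by
      simp only [T, Finset.mem_sdiff, mem_union, mem_inter] at he ⊢
      tauto
    have hlt := card_pathEdges_sdiff_lt (hΓ.mono hΓA) hFA hopt
    have hle := card_le_card hsub
    omega
  have hclosing := mul_self_le_two_mul_card_closingEdges (l := l) (T := T) (Z := Z) (s := s)
    fun l' hl' => le_card_isRotationEnd subset_union_right hexp hΓ hZ (hl.of_perm hl')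
      (List.ne_nil_of_mem ((hl.of_perm hl').mem (Classical.arbitrary V)))
  obtain ⟨e, he, heA⟩ := hboost Z l hl T hTA hcard hmiss (by omega)
  exact mk_notMem_of_mem_closingEdges hopt hTA hFZ he heA

end OptimalPath

/-! ### Linking a system of directed paths and cycles into a Hamilton path -/

section PathCycleSystem

variable {V : Type*} {M : Finset (V × V)} {l : List V}

/-- A set of arcs that form vertex-disjoint directed paths and directed cycles of length at least
three. -/
structure IsPathCycleSystem (M : Finset (V × V)) : Prop where
  injOn_fst : Set.InjOn Prod.fst (M : Set (V × V))
  injOn_snd : Set.InjOn Prod.snd (M : Set (V × V))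
  swap_notMem : ∀ q ∈ M, q.swap ∉ M

lemma IsPathCycleSystem.subset {N : Finset (V × V)} (hM : IsPathCycleSystem M) (h : N ⊆ M) :
    IsPathCycleSystem N :=
  ⟨hM.injOn_fst.mono (coe_subset.2 h), hM.injOn_snd.mono (coe_subset.2 h),
    fun q hq hswap => hM.swap_notMem q (h hq) (h hswap)⟩

lemma IsPathCycleSystem.eq_of_mem_left (hM : IsPathCycleSystem M) {x y y' : V} (h : (x, y) ∈ M)
    (h' : (x, y') ∈ M) : y = y' :=
  congrArg Prod.snd (hM.injOn_fst h h' rfl)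

lemma IsPathCycleSystem.eq_of_mem_right (hM : IsPathCycleSystem M) {x x' y : V} (h : (x, y) ∈ M)
    (h' : (x', y) ∈ M) : x = x' :=
  congrArg Prod.fst (hM.injOn_snd h h' rfl)

/-- The number of arcs of `M` that the path `l` traverses in the direction of the arc. -/
def arcCount [DecidableEq V] (M : Finset (V × V)) (l : List V) : ℕ :=
  (consecutivePairs l).countP (· ∈ M)

lemma arcCount_append [DecidableEq V] {P S : List V} {x y : V} (hx : P.getLast? = some x)
    (hy : S.head? = some y) :
    arcCount M (P ++ S) = arcCount M P + arcCount M S + if (x, y) ∈ M then 1 else 0 := by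
  simp only [arcCount, consecutivePairs_append hx hy, List.countP_append, List.countP_cons,
    decide_eq_true_eq]
  omega

lemma arcCount_append_of_notMem [DecidableEq V] {P S : List V}
    (h : ∀ x ∈ P.getLast?, ∀ y ∈ S.head?, (x, y) ∉ M) :
    arcCount M (P ++ S) = arcCount M P + arcCount M S := by
  rcases hx : P.getLast? with _ | x
  · obtain rfl := List.getLast?_eq_none_iff.1 hx
    simp [arcCount]
  rcases hy : S.head? with _ | y
  · obtain rfl := List.head?_eq_none_iff.1 hy
    simp [arcCount]
  rw [arcCount_append hx hy, if_neg (h x hx y hy), add_zero]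

lemma arcCount_add_arcCount_le [DecidableEq V] (P S : List V) :
    arcCount M P + arcCount M S ≤ arcCount M (P ++ S) := by
  by_cases h : ∀ x ∈ P.getLast?, ∀ y ∈ S.head?, (x, y) ∉ M
  · exact (arcCount_append_of_notMem h).ge
  · push Not at h
    obtain ⟨x, hx, y, hy, -⟩ := h
    rw [arcCount_append hx hy]
    exact Nat.le_add_right _ _

lemma arcCount_lt_arcCount_of_mem [DecidableEq V] (hM : IsPathCycleSystem M) {P Q S : List V}
    {x y : V} (hl : (P ++ (Q ++ S)).Nodup) (hQ : Q ≠ []) (hx : P.getLast? = some x)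
    (hy : S.head? = some y) (hxy : (x, y) ∈ M) :
    arcCount M (P ++ (Q ++ S)) < arcCount M (Q ++ (P ++ S)) := by
  obtain ⟨-, hQS, hPQS⟩ := List.nodup_append.1 hl
  have hPQ : arcCount M (P ++ (Q ++ S)) = arcCount M P + arcCount M (Q ++ S) := by
    refine arcCount_append_of_notMem fun a ha b hb hab => ?_
    obtain rfl : x = a := Option.some_inj.1 (hx.symm.trans ha)
    obtain rfl := hM.eq_of_mem_left hxy hab
    rw [List.head?_append_of_ne_nil _ hQ] at hb
    exact (List.nodup_append.1 hQS).2.2 y (List.mem_of_mem_head? hb) y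
      (List.mem_of_mem_head? hy) rfl
  have hQS' : arcCount M (Q ++ S) = arcCount M Q + arcCount M S := by
    refine arcCount_append_of_notMem fun a ha b hb hab => ?_
    obtain rfl : y = b := Option.some_inj.1 (hy.symm.trans hb)
    obtain rfl := hM.eq_of_mem_right hxy hab
    exact hPQS x (List.mem_of_getLast? hx) x
      (List.mem_append_left _ (List.mem_of_getLast? ha)) rfl
  have hnew := arcCount_add_arcCount_le (M := M) Q (P ++ S)
  rw [arcCount_append hx hy, if_pos hxy] at hnew
  omega

lemma arcCount_lt_arcCount_of_notMem [DecidableEq V] (hM : IsPathCycleSystem M)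
    {U C₁ C₂ S : List V} {x y c d : V} (hl : (U ++ ((C₁ ++ C₂) ++ S)).Nodup)
    (hy : C₁.head? = some y) (hc : C₁.getLast? = some c) (hd : C₂.head? = some d)
    (hx : C₂.getLast? = some x) (hxy : (x, y) ∈ M) (hcd : (c, d) ∉ M) :
    arcCount M (U ++ ((C₁ ++ C₂) ++ S)) < arcCount M (U ++ ((C₂ ++ C₁) ++ S)) := by
  obtain ⟨-, hCS, hUCS⟩ := List.nodup_append.1 hl
  have hU : arcCount M (U ++ ((C₁ ++ C₂) ++ S)) = arcCount M U + arcCount M ((C₁ ++ C₂) ++ S) := by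
    refine arcCount_append_of_notMem fun a ha b hb hab => ?_
    obtain rfl : y = b := by simpa [hy] using hb
    obtain rfl := hM.eq_of_mem_right hxy hab
    exact hUCS x (List.mem_of_getLast? ha) x (by simp [List.mem_of_getLast? hx]) rfl
  have hS : arcCount M ((C₁ ++ C₂) ++ S) = arcCount M (C₁ ++ C₂) + arcCount M S := by
    refine arcCount_append_of_notMem fun a ha b hb hab => ?_
    obtain rfl : x = a := by simpa [hx] using ha
    obtain rfl := hM.eq_of_mem_left hxy hab
    exact (List.nodup_append.1 hCS).2.2 y (by simp [List.mem_of_mem_head? hy]) y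
      (List.mem_of_mem_head? hb) rfl
  have hC := arcCount_append (M := M) hc hd
  have hC' := arcCount_append (M := M) hx hy
  rw [if_neg hcd] at hC
  rw [if_pos hxy] at hC'
  have hnew := arcCount_add_arcCount_le (M := M) U ((C₂ ++ C₁) ++ S)
  have hnew' := arcCount_add_arcCount_le (M := M) (C₂ ++ C₁) S
  omega

/-- The segment `C` of the path `l` is a directed path of `M` which the arc `q` closes up to a
directed cycle. -/
structure IsSegmentClosedBy (M : Finset (V × V)) (l : List V) (q : V × V) (C : List V) : Prop where
  isInfix : C <:+: l
  head?_eq : C.head? = some q.2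
  getLast?_eq : C.getLast? = some q.1
  consecutivePairs_subset : ∀ p ∈ consecutivePairs C, p ∈ M

lemma exists_isSegmentClosedBy [DecidableEq V] (hM : IsPathCycleSystem M) (hl : IsEnumeration l)
    (hmax : ∀ l' : List V, l'.Perm l → arcCount M l' ≤ arcCount M l) {q : V × V} (hq : q ∈ M)
    (hql : q ∉ consecutivePairs l) : ∃ C, IsSegmentClosedBy M l q C := by
  obtain ⟨x, y⟩ := q
  obtain ⟨P, S, rfl⟩ := List.append_of_mem (hl.mem x)
  have hyl := hl.mem y
  rw [List.append_cons, List.mem_append] at hyl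
  rw [List.append_cons] at hl hmax hql ⊢
  have hx : (P ++ [x]).getLast? = some x := List.getLast?_concat
  generalize P ++ [x] = P at *
  rcases hyl with hyP | hyS
  · obtain ⟨U, C, rfl⟩ := List.append_of_mem hyP
    rw [List.append_assoc] at hl hmax ⊢
    refine ⟨y :: C, ⟨U, S, by simp⟩, rfl, by simpa using hx, fun ⟨c, d⟩ hcd => ?_⟩
    by_contra hcdM
    obtain ⟨C₁, C₂, hC, hc, hd⟩ := mem_consecutivePairs_iff.1 hcd
    have hne₁ : C₁ ≠ [] := by rintro rfl; simp at hc
    have hne₂ : C₂ ≠ [] := by rintro rfl; simp at hd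
    have hy : (C₁ ++ C₂).head? = some y := hC ▸ rfl
    rw [hC] at hl hmax hx
    rw [List.head?_append_of_ne_nil _ hne₁] at hy
    rw [List.getLast?_append_of_ne_nil _ (by simp [hne₂]), List.getLast?_append_of_ne_nil _ hne₂]
      at hx
    refine (hmax _ ?_).not_gt (arcCount_lt_arcCount_of_notMem hM hl.nodup hy hc hd hx hq hcdM)
    exact (List.perm_append_comm.append_right S).append_left U
  · obtain ⟨Q, S, rfl⟩ := List.append_of_mem hyS
    have hQ : Q ≠ [] := by
      rintro rfl
      exact hql (mem_consecutivePairs_iff.2 ⟨P, y :: S, rfl, hx, rfl⟩)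
    refine absurd (hmax _ ?_) (arcCount_lt_arcCount_of_mem hM hl.nodup hQ hx rfl hq).not_ge
    rw [← List.append_assoc, ← List.append_assoc]
    exact List.perm_append_comm.append_right _

lemma consecutivePairs_subset_of_isInfix {C : List V} (h : C <:+: l) :
    consecutivePairs C ⊆ consecutivePairs l := by
  rintro ⟨x, y⟩ hxy
  obtain ⟨U, S, rfl⟩ := h
  obtain ⟨P, Q, rfl, hx, hy⟩ := mem_consecutivePairs_iff.1 hxy
  exact mem_consecutivePairs_iff.2 ⟨U ++ P, Q ++ S, by simp, by simp [hx], by simp [hy]⟩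

lemma head_mem_of_forall_mem_consecutivePairs {p : V → Prop} {y v : V} (hy : l.head? = some y)
    (hp : ∀ a b, (a, b) ∈ consecutivePairs l → p b → p a) (hv : v ∈ l) (hpv : p v) : p y := by
  induction l generalizing y with
  | nil => simp at hy
  | cons a l ih =>
    obtain rfl : a = y := by simpa using hy
    rcases List.mem_cons.1 hv with rfl | hvl
    · exact hpv
    cases l with
    | nil => simp at hvl
    | cons b l => exact hp a b (by simp) (ih rfl (fun c d hcd => hp c d (by simp [hcd])) hvl)

lemma exists_mem_consecutivePairs_or_head?_eq {v : V} (hv : v ∈ l) :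
    (∃ u, (u, v) ∈ consecutivePairs l) ∨ l.head? = some v := by
  obtain ⟨P, S, rfl⟩ := List.append_of_mem hv
  rcases List.eq_nil_or_concat P with rfl | ⟨P, u, rfl⟩
  · exact .inr rfl
  · exact .inl ⟨u, mem_consecutivePairs_iff.2 ⟨_, _, rfl, by simp, rfl⟩⟩

variable {q q' : V × V} {C C' : List V}

lemma IsSegmentClosedBy.nodup (h : IsSegmentClosedBy M l q C) (hl : l.Nodup) : C.Nodup :=
  h.isInfix.sublist.nodup hl

lemma IsSegmentClosedBy.fst_mem_of_snd_mem (h : IsSegmentClosedBy M l q C)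
    (hM : IsPathCycleSystem M) (hq : q ∈ M) {a b : V} (hab : (a, b) ∈ M) (hb : b ∈ C) : a ∈ C := by
  rcases exists_mem_consecutivePairs_or_head?_eq hb with ⟨u, hu⟩ | hhead
  · obtain rfl := hM.eq_of_mem_right hab (h.consecutivePairs_subset _ hu)
    exact List.mem_of_mem_dropLast (mem_dropLast_of_mem_consecutivePairs hu)
  · obtain rfl : q.2 = b := Option.some_inj.1 (h.head?_eq.symm.trans hhead)
    obtain rfl := hM.eq_of_mem_right hab hq
    exact List.mem_of_getLast? h.getLast?_eq

lemma IsSegmentClosedBy.eq_of_snd_mem (h : IsSegmentClosedBy M l q C) (hM : IsPathCycleSystem M)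
    (hq : q ∈ M) (hq' : q' ∈ M) (hq'l : q' ∉ consecutivePairs l) (hmem : q'.2 ∈ C) : q' = q := by
  rcases exists_mem_consecutivePairs_or_head?_eq hmem with ⟨u, hu⟩ | hhead
  · have huq' : (u, q'.2) = q' := hM.injOn_snd (h.consecutivePairs_subset _ hu) hq' rfl
    exact absurd (consecutivePairs_subset_of_isInfix h.isInfix (huq' ▸ hu)) hq'l
  · exact hM.injOn_snd hq' hq (Option.some_inj.1 (hhead.symm.trans h.head?_eq))

lemma IsSegmentClosedBy.disjoint (h : IsSegmentClosedBy M l q C) (h' : IsSegmentClosedBy M l q' C')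
    (hM : IsPathCycleSystem M) (hq : q ∈ M) (hq' : q' ∈ M) (hq'l : q' ∉ consecutivePairs l)
    (hne : q ≠ q') : C.Disjoint C' := by
  intro v hv hv'
  refine hne (h.eq_of_snd_mem hM hq hq' hq'l ?_).symm
  exact head_mem_of_forall_mem_consecutivePairs h'.head?_eq (p := (· ∈ C))
    (fun a b hab => h.fst_mem_of_snd_mem hM hq (h'.consecutivePairs_subset _ hab)) hv' hv

lemma IsSegmentClosedBy.three_le_length (h : IsSegmentClosedBy M l q C) (hM : IsPathCycleSystem M)
    (hq : q ∈ M) : 3 ≤ C.length := by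
  have hhead := h.head?_eq
  have hlast := h.getLast?_eq
  rcases C with _ | ⟨a, _ | ⟨b, _ | ⟨c, C⟩⟩⟩
  · simp at hhead
  · simp only [List.head?_cons, List.getLast?_singleton, Option.some_inj] at hhead hlast
    have hswap : q.swap = q := Prod.ext (hhead.symm.trans hlast) (hlast.symm.trans hhead)
    exact absurd (hswap.symm ▸ hq) (hM.swap_notMem q hq)
  · have hab := h.consecutivePairs_subset (a, b) (by simp)
    have hswap : q.swap = (a, b) :=
      Prod.ext (by simpa using hhead.symm) (by simpa using hlast.symm)
    exact absurd (hswap ▸ hab) (hM.swap_notMem q hq)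
  · simp

lemma IsSegmentClosedBy.cycleEdges_subset {A : Finset (Sym2 V)} (h : IsSegmentClosedBy M l q C)
    (hq : q ∈ M) (hMA : ∀ p ∈ M, s(p.1, p.2) ∈ A) : ∀ e ∈ cycleEdges C, e ∈ A := by
  intro e he
  rw [cycleEdges_eq_pathEdges_append h.head?_eq h.getLast?_eq, List.mem_append,
    List.mem_singleton] at he
  rcases he with he | rfl
  · obtain ⟨p, hp, rfl⟩ := List.mem_map.1 he
    exact hMA p (h.consecutivePairs_subset p hp)
  · exact hMA q hq

/-- The number of cyclic sequences of length between `3` and `K` which run around a cycle of `A`;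
every cycle is counted once for each choice of a starting point and a direction. -/
def shortCycleCount [Fintype V] [DecidableEq V] (K : ℕ) (A : Finset (Sym2 V)) : ℕ :=
  ∑ k ∈ Icc 3 K, #{t : List.Vector V k | t.toList.Nodup ∧ ∀ e ∈ cycleEdges t.toList, e ∈ A}

lemma card_le_shortCycleCount [Fintype V] [DecidableEq V] {ι : Type*} {s : Finset ι} {K : ℕ}
    {A : Finset (Sym2 V)} {C : ι → List V} (hinj : Set.InjOn C s)
    (hlen : ∀ i ∈ s, (C i).length ∈ Icc 3 K) (hnodup : ∀ i ∈ s, (C i).Nodup)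
    (hA : ∀ i ∈ s, ∀ e ∈ cycleEdges (C i), e ∈ A) : #s ≤ shortCycleCount K A := by
  rw [card_eq_sum_card_fiberwise hlen, shortCycleCount]
  refine sum_le_sum fun k _ => card_le_card_of_forall_subsingleton
    (fun i t => t.toList = C i) (fun i hi => ?_) ?_
  · rw [mem_filter] at hi
    exact ⟨⟨C i, hi.2⟩, mem_filter.2 ⟨mem_univ _, hnodup i hi.1, hA i hi.1⟩, rfl⟩
  · rintro t - i ⟨hi, hti⟩ j ⟨hj, htj⟩
    exact hinj (mem_filter.1 hi).1 (mem_filter.1 hj).1 (hti.symm.trans htj)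

lemma exists_isEnumeration_forall_arcCount_le [Finite V] [DecidableEq V] (M : Finset (V × V)) :
    ∃ l : List V, IsEnumeration l ∧ ∀ l' : List V, l'.Perm l → arcCount M l' ≤ arcCount M l := by
  have := Fintype.ofFinite V
  obtain ⟨l, hl, hmax⟩ := Set.exists_max_image {l : List V | IsEnumeration l} (arcCount M)
    ((List.finite_length_eq V (Fintype.card V)).subset fun l hl => hl.length_eq)
    ⟨univ.toList, nodup_toList _, by simp⟩
  exact ⟨l, hl, fun l' hl' => hmax l' (hl.of_perm hl')⟩

lemma card_mul_le_of_pairwise_disjoint [Fintype V] {ι : Type*} {s : Finset ι} {K : ℕ}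
    {C : ι → List V} (hnodup : ∀ i ∈ s, (C i).Nodup) (hlen : ∀ i ∈ s, K ≤ (C i).length)
    (hdisj : ∀ i ∈ s, ∀ j ∈ s, i ≠ j → (C i).Disjoint (C j)) : #s * K ≤ Fintype.card V := by
  classical
  calc #s * K = ∑ _i ∈ s, K := by rw [sum_const, smul_eq_mul]
    _ ≤ ∑ i ∈ s, #(C i).toFinset := sum_le_sum fun i hi =>
      List.toFinset_card_of_nodup (hnodup i hi) ▸ hlen i hi
    _ = #(s.biUnion fun i => (C i).toFinset) := (card_biUnion fun i hi j hj hij =>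
      List.disjoint_toFinset_iff_disjoint.2 (hdisj i hi j hj hij)).symm
    _ ≤ Fintype.card V := card_le_univ _

-- Every arc missed by an optimal enumeration closes up a cycle of `M`. These cycles are disjoint,
-- so at most `a` of them are longer than `K`.
theorem exists_isEnumeration_card_le_add_shortCycleCount [Fintype V] [DecidableEq V] (K : ℕ)
    {A : Finset (Sym2 V)} (hM : IsPathCycleSystem M) (hMA : ∀ q ∈ M, s(q.1, q.2) ∈ A) :
    ∃ l : List V, IsEnumeration l ∧ ∃ a, a * K ≤ Fintype.card V ∧
      #M ≤ #{q ∈ M | q ∈ consecutivePairs l} + a + shortCycleCount K A := by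
  obtain ⟨l, hl, hmax⟩ := exists_isEnumeration_forall_arcCount_le M
  choose! C hC using fun q (hq : q ∈ M ∧ q ∉ consecutivePairs l) =>
    exists_isSegmentClosedBy hM hl hmax hq.1 hq.2
  set missed : Finset (V × V) := {q ∈ M | q ∉ consecutivePairs l}
  set long : Finset (V × V) := {q ∈ missed | K < (C q).length}
  set short : Finset (V × V) := {q ∈ missed | ¬ K < (C q).length}
  have hmissed : ∀ q ∈ missed, q ∈ M ∧ q ∉ consecutivePairs l := fun q hq => mem_filter.1 hq
  have hlong : ∀ q ∈ long, (q ∈ M ∧ q ∉ consecutivePairs l) ∧ K < (C q).length := fun q hq =>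
    (mem_filter.1 hq).imp_left (hmissed q)
  have hshort : ∀ q ∈ short, (q ∈ M ∧ q ∉ consecutivePairs l) ∧ ¬ K < (C q).length := fun q hq =>
    (mem_filter.1 hq).imp_left (hmissed q)
  have hlong_card : #long * K ≤ Fintype.card V :=
    card_mul_le_of_pairwise_disjoint (fun q hq => (hC q (hlong q hq).1).nodup hl.nodup)
      (fun q hq => (hlong q hq).2.le) fun q hq q' hq' hne =>
        (hC q (hlong q hq).1).disjoint (hC q' (hlong q' hq').1) hM (hlong q hq).1.1
          (hlong q' hq').1.1 (hlong q' hq').1.2 hne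
  have hinj : Set.InjOn C short := fun q hq q' hq' h => by
    refine hM.injOn_snd (hshort q hq).1.1 (hshort q' hq').1.1 (Option.some_inj.1 ?_)
    rw [← (hC q (hshort q hq).1).head?_eq, ← (hC q' (hshort q' hq').1).head?_eq, h]
  have hshort_card : #short ≤ shortCycleCount K A :=
    card_le_shortCycleCount hinj
      (fun q hq => mem_Icc.2 ⟨(hC q (hshort q hq).1).three_le_length hM (hshort q hq).1.1,
        not_lt.1 (hshort q hq).2⟩)
      (fun q hq => (hC q (hshort q hq).1).nodup hl.nodup)
      fun q hq => (hC q (hshort q hq).1).cycleEdges_subset (hshort q hq).1.1 hMA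
  have hM_card : #{q ∈ M | q ∈ consecutivePairs l} + #missed = #M :=
    card_filter_add_card_filter_not _
  have hmissed_card : #long + #short = #missed := card_filter_add_card_filter_not _
  exact ⟨l, hl, #long, hlong_card, by omega⟩

end PathCycleSystem

/-! ### Large monochromatic path-cycle systems -/

section Monochromatic

variable {V : Type*} [DecidableEq V] {A H : Finset (Sym2 V)} {P Q : Finset V} {e : Sym2 V} {x y : V}

/-- The edges of `A` with one end in `P` and the other in `Q`. -/
def edgesBetween (A : Finset (Sym2 V)) (P Q : Finset V) : Finset (Sym2 V) :=
  {e ∈ A | ∃ x ∈ P, ∃ y ∈ Q, e = s(x, y)}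

/-- The edge set `A` has more than `m` edges between any two disjoint sets of at least `g`
vertices. -/
def IsDenseBetween (A : Finset (Sym2 V)) (g m : ℕ) : Prop :=
  ∀ P Q : Finset V, Disjoint P Q → g ≤ #P → g ≤ #Q → m < #(edgesBetween A P Q)

lemma mem_edgesBetween : e ∈ edgesBetween A P Q ↔ e ∈ A ∧ ∃ x ∈ P, ∃ y ∈ Q, e = s(x, y) :=
  mem_filter

lemma edgesBetween_comm (A : Finset (Sym2 V)) (P Q : Finset V) :
    edgesBetween A P Q = edgesBetween A Q P := by
  refine filter_congr fun e _ => ⟨?_, ?_⟩ <;>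
  · rintro ⟨x, hx, y, hy, rfl⟩
    exact ⟨y, hy, x, hx, Sym2.eq_swap⟩

lemma card_edgesBetween_le_of_forall_colour {ι : Type*} [Fintype ι] [DecidableEq ι] {m : ℕ}
    (c : Sym2 V → ι) (h : ∀ i, #(edgesBetween {e ∈ A | c e = i} P Q) ≤ m) :
    #(edgesBetween A P Q) ≤ Fintype.card ι * m := by
  have hcover : edgesBetween A P Q ⊆
      univ.biUnion fun i => edgesBetween {e ∈ A | c e = i} P Q := fun e he => by
    obtain ⟨heA, hends⟩ := mem_edgesBetween.1 he
    exact mem_biUnion.2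
      ⟨c e, mem_univ _, mem_edgesBetween.2 ⟨mem_filter.2 ⟨heA, rfl⟩, hends⟩⟩
  exact (card_le_card hcover).trans (card_biUnion_le_card_mul _ _ _ fun i _ => h i)

/-- The arcs obtained by directing every edge `e` of `H` out of the first entry of the chosen
representative `e.out` if `e ∈ O`, and into it otherwise. -/
def orientation (H O : Finset (Sym2 V)) (x y : V) : Prop :=
  s(x, y) ∈ H ∧ (s(x, y).out.1 = x ↔ s(x, y) ∈ O)

lemma orientation_asymm [Fintype V] {O : Finset (Sym2 V)} (hH : H ⊆ completeEdges V)
    (hxy : orientation H O x y) : ¬ orientation H O y x := by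
  rintro ⟨-, hyx⟩
  obtain ⟨hmem, hxy⟩ := hxy
  have hne : x ≠ y := mk_mem_completeEdges.1 (hH hmem)
  rw [Sym2.eq_swap] at hyx
  rcases Sym2.mem_iff.1 (Sym2.out_fst_mem s(x, y)) with h | h
  · exact hne (h.symm.trans (hyx.2 (hxy.1 h)))
  · exact hne ((hxy.2 (hyx.1 h)).symm.trans h)

lemma card_orientations_mul_le {𝒪 : Finset (Finset (Sym2 V))} (h𝒪 : ∀ O ∈ 𝒪, O ⊆ H)
    (hPQ : ∀ O ∈ 𝒪, ∀ x ∈ P, ∀ y ∈ Q, ¬ orientation H O x y) :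
    #𝒪 * 2 ^ #(edgesBetween H P Q) ≤ 2 ^ #H := by
  set E := edgesBetween H P Q
  have hEH : E ⊆ H := filter_subset _ _
  have hcard : #𝒪 ≤ #(H \ E).powerset := by
    refine card_le_card_of_injOn (fun O => O \ E)
      (fun O hO => mem_powerset.2 (sdiff_subset_sdiff (h𝒪 O hO) le_rfl)) fun O hO O' hO' heq => ?_
    ext e
    by_cases he : e ∈ E
    · obtain ⟨heH, x, hx, y, hy, rfl⟩ := mem_edgesBetween.1 he
      have hO := hPQ O hO x hx y hy
      have hO' := hPQ O' hO' x hx y hy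
      unfold orientation at hO hO'
      tauto
    · have hiff := Finset.ext_iff.1 heq e
      simp only [Finset.mem_sdiff] at hiff
      tauto
  rw [card_powerset] at hcard
  calc _ ≤ 2 ^ #(H \ E) * 2 ^ #E := Nat.mul_le_mul_right _ hcard
    _ = 2 ^ #H := by rw [← pow_add, card_sdiff_add_card_eq_card hEH]

-- Union bound over the `4 ^ |V|` pairs `(P, Q)` for a uniformly random orientation.
lemma exists_orientation_card_edgesBetween_le [Fintype V] (H : Finset (Sym2 V)) :
    ∃ O, ∀ P Q : Finset V, (∀ x ∈ P, ∀ y ∈ Q, ¬ orientation H O x y) →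
      #(edgesBetween H P Q) ≤ 2 * Fintype.card V := by
  classical
  by_contra! hbad
  choose P Q hPQ hlt using hbad
  set n := Fintype.card V
  have hfiber : ∀ b : Finset V × Finset V,
      #{O ∈ H.powerset | (P O, Q O) = b} * 2 ^ (2 * n + 1) ≤ 2 ^ #H := by
    intro b
    obtain hempty | ⟨O, hO⟩ := {O ∈ H.powerset | (P O, Q O) = b}.eq_empty_or_nonempty
    · simp [hempty]
    obtain ⟨-, rfl⟩ := mem_filter.1 hO
    refine (Nat.mul_le_mul_left _ (Nat.pow_le_pow_right two_pos (hlt O))).trans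
      (card_orientations_mul_le (fun O' hO' => mem_powerset.1 (mem_filter.1 hO').1)
        fun O' hO' => ?_)
    obtain ⟨hP, hQ⟩ := Prod.mk.inj (mem_filter.1 hO').2
    exact hP ▸ hQ ▸ hPQ O'
  have htotal : 2 ^ #H * 2 ^ (2 * n + 1) ≤ 2 ^ (2 * n) * 2 ^ #H := by
    calc 2 ^ #H * 2 ^ (2 * n + 1)
        = ∑ b : Finset V × Finset V, #{O ∈ H.powerset | (P O, Q O) = b} * 2 ^ (2 * n + 1) := by
          rw [← sum_mul, ← card_powerset,
            card_eq_sum_card_fiberwise fun O _ => mem_univ (P O, Q O)]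
      _ ≤ ∑ _b : Finset V × Finset V, 2 ^ #H := sum_le_sum fun b _ => hfiber b
      _ = 2 ^ (2 * n) * 2 ^ #H := by
          rw [sum_const, smul_eq_mul, card_univ, Fintype.card_prod, Fintype.card_finset, ← pow_add,
            two_mul]
  have hpos : 0 < 2 ^ #H * 2 ^ (2 * n) := by positivity
  rw [pow_succ] at htotal
  linarith

end Monochromatic

section Hall

variable {α β : Type*} [Fintype α] [Fintype β] [DecidableEq α] [DecidableEq β]

-- Hall's theorem after adding `|α| - t` dummy elements related to everything in `α`.
lemma exists_matching_of_le_card_compl_add {t : ℕ} {D : α → β → Prop}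
    (h : ∀ (X : Finset α) (Y : Finset β), (∀ x ∈ X, ∀ y ∈ Y, ¬ D x y) → t ≤ #Xᶜ + #Yᶜ) :
    ∃ M : Finset (α × β), (∀ q ∈ M, D q.1 q.2) ∧ Set.InjOn Prod.fst (M : Set (α × β)) ∧
      Set.InjOn Prod.snd (M : Set (α × β)) ∧ t ≤ #M := by
  classical
  have ht : t ≤ Fintype.card α := by simpa using h ∅ univ (by simp)
  set N : α → Finset (β ⊕ Fin (Fintype.card α - t)) := fun x =>
    ({y | D x y} : Finset β).disjSum univ
  have hHall : ∀ X : Finset α, #X ≤ #(X.biUnion N) := by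
    intro X
    obtain rfl | ⟨x₀, hx₀⟩ := X.eq_empty_or_nonempty
    · simp
    set Y : Finset β := {y | ∃ x ∈ X, D x y}
    have hsub : Y.disjSum univ ⊆ X.biUnion N := by
      rintro (y | z) hz
      · obtain ⟨x, hx, hxy⟩ := (mem_filter.1 (inl_mem_disjSum.1 hz)).2
        exact mem_biUnion.2 ⟨x, hx, inl_mem_disjSum.2 (mem_filter.2 ⟨mem_univ _, hxy⟩)⟩
      · exact mem_biUnion.2 ⟨x₀, hx₀, inr_mem_disjSum.2 (mem_univ z)⟩
    have hcard := card_le_card hsub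
    rw [card_disjSum, card_univ, Fintype.card_fin] at hcard
    have hXY := h X Yᶜ fun x hx y hy hxy =>
      mem_compl.1 hy (mem_filter.2 ⟨mem_univ _, x, hx, hxy⟩)
    rw [compl_compl] at hXY
    have := card_compl_add_card X
    omega
  obtain ⟨f, hf, hfN⟩ := (all_card_le_biUnion_card_iff_exists_injective N).1 hHall
  set M : Finset (α × β) := {q | f q.1 = Sum.inl q.2}
  have hM : ∀ q ∈ M, f q.1 = Sum.inl q.2 := fun q hq => (mem_filter.1 hq).2
  refine ⟨M, fun q hq => ?_, fun q hq q' hq' heq => ?_, fun q hq q' hq' heq => ?_, ?_⟩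
  · have hq' := hM q hq ▸ hfN q.1
    exact (mem_filter.1 (inl_mem_disjSum.1 hq')).2
  · exact Prod.ext heq (Sum.inl.inj ((hM q hq).symm.trans (heq ▸ hM q' hq')))
  · exact Prod.ext (hf ((hM q hq).trans (heq ▸ (hM q' hq').symm))) heq
  · have himage : univ.image f ⊆ (M.image Prod.snd).disjSum univ := by
      intro z hz
      obtain ⟨x, -, rfl⟩ := mem_image.1 hz
      rcases hx : f x with y | i
      · exact inl_mem_disjSum.2 (mem_image.2 ⟨(x, y), mem_filter.2 ⟨mem_univ _, hx⟩, rfl⟩)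
      · exact inr_mem_disjSum.2 (mem_univ i)
    have hcard := card_le_card himage
    rw [card_image_of_injective _ hf, card_disjSum, card_univ, card_univ, Fintype.card_fin]
      at hcard
    have : #(M.image Prod.snd) ≤ #M := card_image_le
    omega

end Hall

section Fibers

variable {α τ : Type*} [Fintype α] [DecidableEq τ]

lemma card_le_card_filter_fiber_add [Fintype τ] (f : α → τ) (m : ℕ) :
    Fintype.card α ≤ #{v | m ≤ #{u | f u = f v}} + Fintype.card τ * m := by
  set small : Finset α := {v | ¬ m ≤ #{u | f u = f v}}
  have hsmall : #small ≤ m * #(univ : Finset τ) := by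
    refine card_le_mul_card_image_of_maps_to (f := f) (fun v _ => mem_univ _) m fun s _ => ?_
    obtain hempty | ⟨v, hv⟩ := {v ∈ small | f v = s}.eq_empty_or_nonempty
    · simp [hempty]
    obtain ⟨hv_small, rfl⟩ := mem_filter.1 hv
    refine (card_le_card fun u hu => ?_).trans (not_le.1 (mem_filter.1 hv_small).2).le
    exact mem_filter.2 ⟨mem_univ _, (mem_filter.1 hu).2⟩
  have hsplit : #{v | m ≤ #{u | f u = f v}} + #small = #(univ : Finset α) :=
    card_filter_add_card_filter_not _
  rw [card_univ] at hsplit hsmall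
  rw [mul_comm] at hsmall
  omega

lemma exists_disjoint_subsets_of_le_card_fiber {f : α → τ} {a b : τ} {g : ℕ}
    (ha : 2 * g ≤ #{u | f u = a}) (hb : 2 * g ≤ #{u | f u = b}) :
    ∃ P Q : Finset α, Disjoint P Q ∧ g ≤ #P ∧ g ≤ #Q ∧ (∀ u ∈ P, f u = a) ∧ ∀ u ∈ Q, f u = b := by
  classical
  have hmem : ∀ {c u}, u ∈ ({u | f u = c} : Finset α) → f u = c := fun h => (mem_filter.1 h).2
  by_cases hab : a = b
  · subst hab
    obtain ⟨P, hP, hPcard⟩ := exists_subset_card_eq (s := {u | f u = a}) (n := g) (by omega)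
    refine ⟨P, ({u | f u = a} : Finset α) \ P, disjoint_sdiff, hPcard.ge, ?_,
      fun u hu => hmem (hP hu), fun u hu => hmem (sdiff_subset hu)⟩
    rw [card_sdiff_of_subset hP]
    omega
  · refine ⟨({u | f u = a} : Finset α), ({u | f u = b} : Finset α), ?_, by omega, by omega,
      fun _ => hmem, fun _ => hmem⟩
    exact Finset.disjoint_left.2 fun u hu hu' => hab ((hmem hu).symm.trans (hmem hu'))

end Fibers

section Weights

variable {V ι : Type*} [Fintype V] [Fintype ι]

-- If a vertex `v` has total weight `1`, concentrated at `i`, then doubling the weight at `i` gives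
-- all vertices of `B` weight at least `2`. Otherwise they already have weight at least `2`.
lemma two_mul_card_le_of_pairwise_weight {w : V → ι → ℕ} {B : Finset V} {s : ℕ}
    (hpair : ∀ u ∈ B, ∀ v ∈ B, ∃ i, 2 ≤ w u i + w v i) (hsum : ∀ i, ∑ v, w v i ≤ s) :
    2 * #B ≤ (Fintype.card ι + 1) * s := by
  classical
  have hle : ∀ v i, w v i ≤ ∑ j, w v j := fun v i =>
    single_le_sum (f := w v) (fun _ _ => Nat.zero_le _) (mem_univ i)
  have htotal : ∑ v, ∑ i, w v i ≤ Fintype.card ι * s := by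
    rw [sum_comm]
    exact (sum_le_card_nsmul _ _ _ fun i _ => hsum i).trans_eq (by simp)
  have hbound : ∀ f : V → ℕ, (∀ v ∈ B, 2 ≤ f v) → 2 * #B ≤ ∑ v, f v := fun f hf => by
    rw [mul_comm, ← smul_eq_mul]
    exact (card_nsmul_le_sum B f 2 hf).trans (sum_le_sum_of_subset (subset_univ B))
  by_cases hlight : ∃ v ∈ B, ∑ i, w v i ≤ 1
  · obtain ⟨v, hv, hv_le⟩ := hlight
    obtain ⟨i, hi⟩ := hpair v hv v hv
    have hother : ∀ j ≠ i, w v j = 0 := fun j hji => by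
      have : w v j + w v i ≤ ∑ i, w v i := by
        rw [← sum_pair (f := w v) hji]
        exact sum_le_sum_of_subset (subset_univ _)
      omega
    refine (hbound (fun u => w u i + ∑ j, w u j) fun u hu => ?_).trans ?_
    · obtain ⟨j, hj⟩ := hpair v hv u hu
      have := hle u j
      obtain rfl | hji := eq_or_ne j i
      · have := hle v j
        omega
      · have := hother j hji
        omega
    · rw [sum_add_distrib, add_mul, one_mul, add_comm]
      exact add_le_add htotal (hsum i)
  · push Not at hlight
    exact (hbound _ hlight).trans (htotal.trans (Nat.mul_le_mul_right s (Nat.le_succ _)))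

end Weights

section MonochromaticArcs

variable {V ι : Type*} [Fintype V] [DecidableEq V]
  {A : Finset (Sym2 V)} {g : ℕ} {X Y : ι → Finset V}

/-- Which of the sets `X i` and `Y i` contain `v`. -/
def membershipType (X Y : ι → Finset V) (v : V) : ι → Bool × Bool :=
  fun i => (decide (v ∈ X i), decide (v ∈ Y i))

/-- The number of the two sets `X i` and `Y i` that miss `v`. -/
def missCount (X Y : ι → Finset V) (v : V) (i : ι) : ℕ :=
  (if v ∈ X i then 0 else 1) + if v ∈ Y i then 0 else 1

lemma sum_missCount (X Y : ι → Finset V) (i : ι) :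
    ∑ v, missCount X Y v i = #(X i)ᶜ + #(Y i)ᶜ := by
  have hcard : ∀ S : Finset V, ∑ v, (if v ∈ S then 0 else 1) = #Sᶜ := fun S => by
    rw [← sum_compl_add_sum S, sum_congr rfl fun v hv => if_neg (mem_compl.1 hv),
      sum_congr (s₁ := S) rfl fun v hv => if_pos hv, sum_const_zero, add_zero, card_eq_sum_ones]
  simp only [missCount, sum_add_distrib, hcard]

-- Otherwise, for every `i`, the vertices of one of the two types lie in `X i` and those of the
-- other in `Y i`, so that few edges of any colour join them.
lemma exists_two_le_missCount_add [Fintype ι] [DecidableEq ι] (c : Sym2 V → ι) {m : ℕ}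
    (hdense : IsDenseBetween A g (Fintype.card ι * m))
    (hsparse : ∀ i, ∀ P ⊆ X i, ∀ Q ⊆ Y i, #(edgesBetween {e ∈ A | c e = i} P Q) ≤ m) {u v : V}
    (hu : 2 * g ≤ #{x | membershipType X Y x = membershipType X Y u})
    (hv : 2 * g ≤ #{x | membershipType X Y x = membershipType X Y v}) :
    ∃ i, 2 ≤ missCount X Y u i + missCount X Y v i := by
  by_contra! hlight
  obtain ⟨P, Q, hPQ, hPcard, hQcard, hP, hQ⟩ := exists_disjoint_subsets_of_le_card_fiber hu hv
  have htype : ∀ {S w}, (∀ x ∈ S, membershipType X Y x = membershipType X Y w) → ∀ i,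
      (w ∈ X i → S ⊆ X i) ∧ (w ∈ Y i → S ⊆ Y i) := fun {S w} hS i => by
    have hiff : ∀ x ∈ S, (x ∈ X i ↔ w ∈ X i) ∧ (x ∈ Y i ↔ w ∈ Y i) := fun x hx => by
      simpa [membershipType] using congrFun (hS x hx) i
    exact ⟨fun hw x hx => (hiff x hx).1.2 hw, fun hw x hx => (hiff x hx).2.2 hw⟩
  refine (hdense P Q hPQ hPcard hQcard).not_ge
    (card_edgesBetween_le_of_forall_colour c fun i => ?_)
  have hcases : (u ∈ X i ∧ v ∈ Y i) ∨ (v ∈ X i ∧ u ∈ Y i) := by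
    have := hlight i
    unfold missCount at this
    grind
  rcases hcases with ⟨hu, hv⟩ | ⟨hv, hu⟩
  · exact hsparse i P ((htype hP i).1 hu) Q ((htype hQ i).2 hv)
  · rw [edgesBetween_comm]
    exact hsparse i Q ((htype hQ i).1 hv) P ((htype hP i).2 hu)

lemma exists_isPathCycleSystem_or_exists_sparse_pair {H : Finset (Sym2 V)}
    (hH : H ⊆ completeEdges V) (t : ℕ) :
    (∃ M : Finset (V × V), IsPathCycleSystem M ∧ (∀ q ∈ M, s(q.1, q.2) ∈ H) ∧ t ≤ #M) ∨
      ∃ X Y : Finset V, #Xᶜ + #Yᶜ < t ∧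
        ∀ P ⊆ X, ∀ Q ⊆ Y, #(edgesBetween H P Q) ≤ 2 * Fintype.card V := by
  obtain ⟨O, hO⟩ := exists_orientation_card_edgesBetween_le H
  by_cases hmatch : ∀ X Y : Finset V, (∀ x ∈ X, ∀ y ∈ Y, ¬ orientation H O x y) → t ≤ #Xᶜ + #Yᶜ
  · obtain ⟨M, hMO, hfst, hsnd, hcard⟩ := exists_matching_of_le_card_compl_add hmatch
    exact .inl ⟨M, ⟨hfst, hsnd, fun q hq hq' => orientation_asymm hH (hMO q hq) (hMO _ hq')⟩,
      fun q hq => (hMO q hq).1, hcard⟩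
  · push Not at hmatch
    obtain ⟨X, Y, hXY, hcard⟩ := hmatch
    exact .inr ⟨X, Y, hcard, fun P hP Q hQ => hO P Q fun x hx y hy => hXY x (hP hx) y (hQ hy)⟩

theorem exists_monochromatic_isPathCycleSystem [Fintype ι] {t : ℕ} (ht : 1 ≤ t)
    (hA : A ⊆ completeEdges V) (c : Sym2 V → ι)
    (hdense : IsDenseBetween A g (Fintype.card ι * (2 * Fintype.card V)))
    (hcard : (Fintype.card ι + 1) * t + 4 * 4 ^ Fintype.card ι * g ≤ 2 * Fintype.card V) :
    ∃ i, ∃ M : Finset (V × V), IsPathCycleSystem M ∧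
      (∀ q ∈ M, s(q.1, q.2) ∈ A ∧ c s(q.1, q.2) = i) ∧ t ≤ #M := by
  classical
  by_contra! hnone
  have hsparse : ∀ i, ∃ X Y : Finset V, #Xᶜ + #Yᶜ < t ∧ ∀ P ⊆ X, ∀ Q ⊆ Y,
      #(edgesBetween {e ∈ A | c e = i} P Q) ≤ 2 * Fintype.card V := fun i =>
    (exists_isPathCycleSystem_or_exists_sparse_pair ((filter_subset _ _).trans hA) t).resolve_left
      fun ⟨M, hM, hMc, hMt⟩ => (hnone i M hM fun q hq => mem_filter.1 (hMc q hq)).not_ge hMt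
  choose X Y hXY hsparse using hsparse
  have hlarge := card_le_card_filter_fiber_add (membershipType X Y) (2 * g)
  have hweight := two_mul_card_le_of_pairwise_weight (w := missCount X Y)
    (B := {v | 2 * g ≤ #{u | membershipType X Y u = membershipType X Y v}}) (s := t - 1)
    (fun u hu v hv => exists_two_le_missCount_add c hdense hsparse (mem_filter.1 hu).2
      (mem_filter.1 hv).2)
    fun i => (sum_missCount X Y i).trans_le (Nat.le_sub_one_of_lt (hXY i))
  have htypes : Fintype.card (ι → Bool × Bool) = 4 ^ Fintype.card ι := by simp
  rw [htypes] at hlarge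
  obtain ⟨t, rfl⟩ := Nat.exists_eq_add_of_le' ht
  rw [Nat.add_sub_cancel] at hweight
  linarith

end MonochromaticArcs

/-! ### A sparse expander -/

section Expander

variable {V : Type*} [Fintype V] [DecidableEq V] {A : Finset (Sym2 V)} {N : V → Finset V}
  {R S : Finset V} {D q g : ℕ} {u v w x y : V}

/-- The neighbours of `v` in the graph with edge set `A`. -/
def neighbors (A : Finset (Sym2 V)) (v : V) : Finset V := {u | s(v, u) ∈ A}

/-- No path with at most four edges of `A` joins two vertices of degree less than `D`. -/
def SmallVerticesFar (A : Finset (Sym2 V)) (D : ℕ) : Prop :=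
  ∀ (x y : V) (t : List V), t.length ≤ 3 → (x :: (t ++ [y])).Nodup →
    (∀ e ∈ pathEdges (x :: (t ++ [y])), e ∈ A) → #(neighbors A x) < D → D ≤ #(neighbors A y)

/-- Every nonempty set `W` of at most `w` vertices spans fewer than `q * #W` edges of `A`. -/
def IsLocallySparse (A : Finset (Sym2 V)) (w q : ℕ) : Prop :=
  ∀ W : Finset V, W.Nonempty → #W ≤ w → #{e ∈ A | e ∈ W.sym2} < q * #W

/-- A choice of `D` neighbours of every vertex of degree at least `D`, which are in `R` if possible,
and of two neighbours of every other vertex. -/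
structure IsNeighborChoice (A : Finset (Sym2 V)) (R : Finset V) (D : ℕ) (N : V → Finset V) :
    Prop where
  subset_neighbors (v : V) : N v ⊆ neighbors A v
  card_of_lt (v : V) (hv : #(neighbors A v) < D) : #(N v) = 2
  card_of_le (v : V) (hv : D ≤ #(neighbors A v)) : #(N v) = D
  subset_of_le (v : V) (hv : D ≤ #(neighbors A v ∩ R)) : N v ⊆ R

lemma mem_neighbors : u ∈ neighbors A v ↔ s(v, u) ∈ A := mem_filter_univ u

lemma exists_isNeighborChoice (R : Finset V) (D : ℕ) (hA : ∀ v, 2 ≤ #(neighbors A v)) :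
    ∃ N : V → Finset V, IsNeighborChoice A R D N := by
  have hchoice : ∀ v, ∃ T ⊆ neighbors A v, (#(neighbors A v) < D → #T = 2) ∧
      (D ≤ #(neighbors A v) → #T = D) ∧ (D ≤ #(neighbors A v ∩ R) → T ⊆ R) := by
    intro v
    have hinter := card_le_card (inter_subset_left (s₁ := neighbors A v) (s₂ := R))
    obtain hsmall | hlarge := lt_or_ge #(neighbors A v) D
    · obtain ⟨T, hT, hcard⟩ := exists_subset_card_eq (hA v)
      exact ⟨T, hT, fun _ => hcard, fun h => absurd h hsmall.not_ge,
        fun h => absurd (h.trans hinter) hsmall.not_ge⟩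
    obtain hR | hR := le_or_gt D #(neighbors A v ∩ R)
    · obtain ⟨T, hT, hcard⟩ := exists_subset_card_eq hR
      exact ⟨T, hT.trans inter_subset_left, fun h => absurd hlarge h.not_ge, fun _ => hcard,
        fun _ => hT.trans inter_subset_right⟩
    · obtain ⟨T, hT, hcard⟩ := exists_subset_card_eq hlarge
      exact ⟨T, hT, fun h => absurd hlarge h.not_ge, fun _ => hcard, fun h => absurd h hR.not_ge⟩
  choose N hN using hchoice
  exact ⟨N, fun v => (hN v).1, fun v => (hN v).2.1, fun v => (hN v).2.2.1, fun v => (hN v).2.2.2⟩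

namespace SmallVerticesFar

lemma notMem (h : SmallVerticesFar A D) (hA : A ⊆ completeEdges V) (hx : #(neighbors A x) < D)
    (hy : #(neighbors A y) < D) : s(x, y) ∉ A := fun hxy =>
  hy.not_ge (h x y [] (by simp) (by simpa using mk_mem_completeEdges.1 (hA hxy)) (by simpa) hx)

lemma eq_of_common_neighbor (h : SmallVerticesFar A D) (hA : A ⊆ completeEdges V)
    (hx : #(neighbors A x) < D) (hy : #(neighbors A y) < D) (hxu : s(x, u) ∈ A)
    (hyu : s(y, u) ∈ A) : x = y := by
  by_contra hxy
  have hxu' := mk_mem_completeEdges.1 (hA hxu)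
  have hyu' := mk_mem_completeEdges.1 (hA hyu)
  refine hy.not_ge (h x y [u] (by simp) (by simp [hxu', hxy, hyu'.symm]) ?_ hx)
  simpa [hxu] using Sym2.eq_swap ▸ hyu

lemma eq_of_path (h : SmallVerticesFar A D) (hA : A ⊆ completeEdges V)
    (hx : #(neighbors A x) < D) (hy : #(neighbors A y) < D) (hv : D ≤ #(neighbors A v))
    (hxu : s(x, u) ∈ A) (huv : s(v, u) ∈ A) (hvw : s(v, w) ∈ A) (hyw : s(y, w) ∈ A) : x = y := by
  by_contra hxy
  have hne : ∀ {a b : V}, s(a, b) ∈ A → a ≠ b := fun hab => mk_mem_completeEdges.1 (hA hab)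
  have huw : u ≠ w := fun huw => hxy (h.eq_of_common_neighbor hA hx hy hxu (huw ▸ hyw))
  have huy : u ≠ y := fun huy => h.notMem hA hx hy (huy ▸ hxu)
  have hwx : w ≠ x := fun hwx => h.notMem hA hy hx (hwx ▸ hyw)
  have hvx : v ≠ x := fun hvx => hx.not_ge (hvx ▸ hv)
  have hvy : v ≠ y := fun hvy => hy.not_ge (hvy ▸ hv)
  refine hy.not_ge (h x y [u, v, w] (by simp) ?_ ?_ hx)
  · simp [hne hxu, hvx.symm, hwx.symm, hxy, (hne huv).symm, huw, huy, hne hvw, hvy,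
      (hne hyw).symm]
  · simpa [hxu, hvw] using ⟨Sym2.eq_swap ▸ huv, Sym2.eq_swap ▸ hyw⟩

end SmallVerticesFar

lemma sum_card_le_two_mul_card_edges (hNA : ∀ v ∈ S, N v ⊆ neighbors A v) :
    ∑ v ∈ S, #(N v) ≤ 2 * #{e ∈ A | e ∈ (S ∪ S.biUnion N).sym2} := by
  rw [← card_sigma]
  refine card_le_mul_card_image_of_maps_to (f := fun a : (_ : V) × V => s(a.1, a.2)) ?_ 2 ?_
  · rintro ⟨v, u⟩ ha
    obtain ⟨hv, hu⟩ := mem_sigma.1 ha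
    refine mem_filter.2 ⟨mem_neighbors.1 (hNA v hv hu), mk_mem_sym2_iff.2 ⟨?_, ?_⟩⟩
    · exact mem_union_left _ hv
    · exact mem_union_right _ (mem_biUnion.2 ⟨v, hv, hu⟩)
  · intro e _
    induction e with | _ x y
    refine (card_le_card (t := {⟨x, y⟩, ⟨y, x⟩}) ?_).trans card_le_two
    rintro ⟨a, b⟩ hab
    rcases Sym2.eq_iff.1 (mem_filter.1 hab).2 with ⟨rfl, rfl⟩ | ⟨rfl, rfl⟩ <;> simp

lemma three_mul_card_le_card_biUnion_sdiff (hA : IsLocallySparse A (4 * g) q)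
    (hNA : ∀ v ∈ S, N v ⊆ neighbors A v) (hN : ∀ v ∈ S, 8 * q ≤ #(N v)) (hS : #S ≤ g) :
    3 * #S ≤ #(S.biUnion N \ S) := by
  by_contra! hlt
  set W := S ∪ S.biUnion N
  have hW_card : #W ≤ 4 * #S := by
    have : W = S ∪ S.biUnion N \ S := union_sdiff_self_eq_union.symm
    rw [this]
    exact (card_union_le _ _).trans (by omega)
  have hne : S.Nonempty := card_pos.1 (by omega)
  have hsparse := hA W (hne.mono subset_union_left) (by omega)
  have hedges : #S * (8 * q) ≤ ∑ v ∈ S, #(N v) := by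
    simpa using card_nsmul_le_sum S (fun v => #(N v)) (8 * q) hN
  have hdouble := sum_card_le_two_mul_card_edges hNA
  have hq : q * #W ≤ q * (4 * #S) := Nat.mul_le_mul_left q hW_card
  linarith

namespace IsNeighborChoice

lemma card_le (hN : IsNeighborChoice A R D N) (hD : 2 ≤ D) (v : V) : #(N v) ≤ D := by
  obtain hv | hv := lt_or_ge #(neighbors A v) D
  · exact (hN.card_of_lt v hv).trans_le hD
  · exact (hN.card_of_le v hv).le

lemma mk_mem (hN : IsNeighborChoice A R D N) (hu : u ∈ N v) : s(v, u) ∈ A :=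
  mem_neighbors.1 (hN.subset_neighbors v hu)

/-- The vertices of degree less than `D`, together with their chosen neighbours. -/
def core (A : Finset (Sym2 V)) (D : ℕ) (N : V → Finset V) : Finset V :=
  ({x | #(neighbors A x) < D} : Finset V) ∪
    ({x | #(neighbors A x) < D} : Finset V).biUnion N

lemma card_inter_core_le (hN : IsNeighborChoice A R D N) (hA : A ⊆ completeEdges V)
    (hfar : SmallVerticesFar A D) (hv : D ≤ #(neighbors A v)) : #(N v ∩ core A D N) ≤ 3 := by
  set small : Finset V := {x | #(neighbors A x) < D}
  have hsmall : ∀ {x : V}, x ∈ small → #(neighbors A x) < D := fun hx => (mem_filter.1 hx).2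
  have hcard_small : #(N v ∩ small) ≤ 1 := by
    refine card_le_one.2 fun a ha b hb => ?_
    obtain ⟨⟨hav, ha⟩, hbv, hb⟩ := mem_inter.1 ha, mem_inter.1 hb
    exact hfar.eq_of_common_neighbor hA (hsmall ha) (hsmall hb) (Sym2.eq_swap ▸ hN.mk_mem hav)
      (Sym2.eq_swap ▸ hN.mk_mem hbv)
  have hcard_nbrs : #(N v ∩ small.biUnion N) ≤ 2 := by
    obtain hempty | ⟨u, hu⟩ := (N v ∩ small.biUnion N).eq_empty_or_nonempty
    · simp [hempty]
    obtain ⟨huv, hu⟩ := mem_inter.1 hu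
    obtain ⟨x, hx, hxu⟩ := mem_biUnion.1 hu
    rw [← hN.card_of_lt x (hsmall hx)]
    refine card_le_card fun w hw => ?_
    obtain ⟨hwv, hw⟩ := mem_inter.1 hw
    obtain ⟨y, hy, hyw⟩ := mem_biUnion.1 hw
    have hxy : x = y := hfar.eq_of_path hA (hsmall hx) (hsmall hy) hv (hN.mk_mem hxu)
      (hN.mk_mem huv) (hN.mk_mem hwv) (hN.mk_mem hyw)
    exact hxy ▸ hyw
  have hsplit : N v ∩ core A D N = N v ∩ small ∪ N v ∩ small.biUnion N :=
    inter_union_distrib_left _ _ _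
  rw [hsplit]
  exact (card_union_le _ _).trans (by omega)

lemma card_biUnion_of_lt (hN : IsNeighborChoice A R D N) (hA : A ⊆ completeEdges V)
    (hfar : SmallVerticesFar A D) (hS : ∀ v ∈ S, #(neighbors A v) < D) :
    #(S.biUnion N) = 2 * #S := by
  rw [card_biUnion fun x hx y hy hne => Finset.disjoint_left.2 fun u hxu hyu =>
      hne (hfar.eq_of_common_neighbor hA (hS x hx) (hS y hy) (hN.mk_mem hxu) (hN.mk_mem hyu)),
    sum_congr rfl fun v hv => hN.card_of_lt v (hS v hv), sum_const, smul_eq_mul, mul_comm]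

-- Small vertices are far apart, so their chosen neighbourhoods are disjoint and hardly meet those
-- of large vertices, whose neighbourhoods expand by local sparsity.
theorem two_mul_card_le_card_biUnion_sdiff (hN : IsNeighborChoice A R (8 * q + 3) N)
    (hA : A ⊆ completeEdges V) (hfar : SmallVerticesFar A (8 * q + 3))
    (hsparse : IsLocallySparse A (4 * g) q) (hS : #S ≤ g) :
    2 * #S ≤ #(S.biUnion N \ S) := by
  set D := 8 * q + 3
  set S₁ : Finset V := {v ∈ S | #(neighbors A v) < D}
  set S₂ : Finset V := {v ∈ S | ¬ #(neighbors A v) < D}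
  set U := S₂.biUnion (fun v => N v \ core A D N) \ S₂
  have hS₁ : ∀ {v : V}, v ∈ S₁ → v ∈ S ∧ #(neighbors A v) < D := mem_filter.1
  have hS₂ : ∀ {v : V}, v ∈ S₂ → v ∈ S ∧ ¬ #(neighbors A v) < D := mem_filter.1
  have hcore_small : ∀ {v : V}, #(neighbors A v) < D → v ∈ core A D N := fun hv =>
    mem_union_left _ (mem_filter.2 ⟨mem_univ _, hv⟩)
  have hcore_nbr : ∀ {v u : V}, #(neighbors A v) < D → u ∈ N v → u ∈ core A D N := fun hv hu =>
    mem_union_right _ (mem_biUnion.2 ⟨_, mem_filter.2 ⟨mem_univ _, hv⟩, hu⟩)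
  have hsplit : #S₁ + #S₂ = #S := card_filter_add_card_filter_not _
  have hS₁_card := hN.card_biUnion_of_lt hA hfar fun v (hv : v ∈ S₁) => (hS₁ hv).2
  have hS₁_sdiff : #(S₁.biUnion N) ≤ #(S₁.biUnion N \ S₂) + #S₂ := card_le_card_sdiff_add_card
  have hU_card : 3 * #S₂ ≤ #U := by
    refine three_mul_card_le_card_biUnion_sdiff hsparse
      (fun v _ => sdiff_subset.trans (hN.subset_neighbors v)) (fun v hv => ?_) (by omega)
    have hinter := hN.card_inter_core_le hA hfar (not_lt.1 (hS₂ hv).2)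
    have hcard := hN.card_of_le v (not_lt.1 (hS₂ hv).2)
    have := card_sdiff_add_card_inter (N v) (core A D N)
    omega
  have hdisj : Disjoint (S₁.biUnion N \ S₂) U := by
    refine Finset.disjoint_left.2 fun u hu hu' => ?_
    obtain ⟨x, hx, hxu⟩ := mem_biUnion.1 (Finset.mem_sdiff.1 hu).1
    obtain ⟨y, -, hyu⟩ := mem_biUnion.1 (Finset.mem_sdiff.1 hu').1
    exact (Finset.mem_sdiff.1 hyu).2 (hcore_nbr (hS₁ hx).2 hxu)
  have hsub : S₁.biUnion N \ S₂ ∪ U ⊆ S.biUnion N \ S := by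
    refine union_subset (fun u hu => ?_) fun u hu => ?_ <;>
      obtain ⟨hu, huS₂⟩ := Finset.mem_sdiff.1 hu <;> obtain ⟨x, hx, hxu⟩ := mem_biUnion.1 hu
    · refine Finset.mem_sdiff.2 ⟨mem_biUnion.2 ⟨x, (hS₁ hx).1, hxu⟩, fun huS => huS₂ ?_⟩
      exact mem_filter.2 ⟨huS, fun hu => hfar.notMem hA (hS₁ hx).2 hu (hN.mk_mem hxu)⟩
    · obtain ⟨hxu, hu_core⟩ := Finset.mem_sdiff.1 hxu
      refine Finset.mem_sdiff.2 ⟨mem_biUnion.2 ⟨x, (hS₂ hx).1, hxu⟩, fun huS => huS₂ ?_⟩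
      exact mem_filter.2 ⟨huS, fun hu => hu_core (hcore_small hu)⟩
  have hcard := card_le_card hsub
  rw [card_union_of_disjoint hdisj] at hcard
  omega

end IsNeighborChoice

end Expander

section HittingSet

variable {α : Type*} {A T : Finset α} {F : Finset (Finset α)} {ρ : ℝ}

lemma exists_mem_mul_card_le_card_filter_mem [DecidableEq α] (hA : A.Nonempty)
    (hFA : ∀ H ∈ F, H ⊆ A) (hF : ∀ H ∈ F, ρ * #A ≤ #H) : ∃ a ∈ A, ρ * #F ≤ #{H ∈ F | a ∈ H} := by
  by_contra! hno
  have hlt : ∑ a ∈ A, (#{H ∈ F | a ∈ H} : ℝ) < ∑ _a ∈ A, ρ * #F := sum_lt_sum_of_nonempty hA hno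
  have hcount : ∑ a ∈ A, (#{H ∈ F | a ∈ H} : ℝ) = ∑ H ∈ F, (#H : ℝ) := by
    have := sum_card_bipartiteAbove_eq_sum_card_bipartiteBelow (s := A) (t := F) (· ∈ ·)
    simp only [bipartiteAbove, bipartiteBelow, filter_mem_eq_inter] at this
    rw [sum_congr (s₁ := F) rfl fun H hH => by rw [inter_eq_right.2 (hFA H hH)]] at this
    exact_mod_cast this
  have hle : ∑ _H ∈ F, ρ * #A ≤ ∑ H ∈ F, (#H : ℝ) := sum_le_sum hF
  simp only [sum_const, nsmul_eq_mul] at hlt hle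
  linarith

lemma exists_subset_card_filter_disjoint_le [DecidableEq α] (hA : A.Nonempty) (hρ : ρ ≤ 1)
    (hFA : ∀ H ∈ F, H ⊆ A) (hF : ∀ H ∈ F, ρ * #A ≤ #H) (k : ℕ) :
    ∃ T ⊆ A, #T ≤ k ∧ (#{H ∈ F | Disjoint H T} : ℝ) ≤ #F * (1 - ρ) ^ k := by
  induction k with
  | zero => exact ⟨∅, empty_subset _, by simp, by simp⟩
  | succ k ih =>
    obtain ⟨T, hTA, hTk, hT⟩ := ih
    set F' : Finset (Finset α) := {H ∈ F | Disjoint H T}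
    obtain ⟨a, ha, hgain⟩ := exists_mem_mul_card_le_card_filter_mem (F := F') hA
      (fun H hH => hFA H (mem_filter.1 hH).1) fun H hH => hF H (mem_filter.1 hH).1
    refine ⟨insert a T, insert_subset ha hTA, (card_insert_le _ _).trans (by omega), ?_⟩
    have hinsert : {H ∈ F | Disjoint H (insert a T)} = {H ∈ F' | a ∉ H} := by
      rw [filter_filter]
      exact filter_congr fun H _ => by rw [disjoint_insert_right, and_comm]
    have hsplit : (#{H ∈ F' | a ∈ H} : ℝ) + #{H ∈ F' | a ∉ H} = #F' := by
      exact_mod_cast card_filter_add_card_filter_not _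
    calc (#{H ∈ F | Disjoint H (insert a T)} : ℝ) ≤ #F' * (1 - ρ) := by rw [hinsert]; linarith
      _ ≤ #F * (1 - ρ) ^ k * (1 - ρ) := mul_le_mul_of_nonneg_right hT (by linarith)
      _ = #F * (1 - ρ) ^ (k + 1) := by ring

lemma exists_hittingSet (hA : A.Nonempty) (hρ : ρ ≤ 1) (hFA : ∀ H ∈ F, H ⊆ A)
    (hF : ∀ H ∈ F, ρ * #A ≤ #H) {k : ℕ} (hk : (#F : ℝ) < Real.exp (ρ * k)) :
    ∃ T ⊆ A, #T ≤ k ∧ ∀ H ∈ F, ¬ Disjoint H T := by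
  classical
  obtain ⟨T, hTA, hTk, hT⟩ := exists_subset_card_filter_disjoint_le hA hρ hFA hF k
  refine ⟨T, hTA, hTk, filter_eq_empty_iff.1 (card_eq_zero.1 (Nat.lt_one_iff.1 ?_))⟩
  have hpow : (1 - ρ) ^ k ≤ Real.exp (-(ρ * k)) :=
    calc (1 - ρ) ^ k ≤ Real.exp (-ρ) ^ k :=
          pow_le_pow_left₀ (by linarith) (Real.one_sub_le_exp_neg ρ) k
      _ = Real.exp (-(ρ * k)) := by rw [← Real.exp_nat_mul]; ring_nf
  have : (#{H ∈ F | Disjoint H T} : ℝ) < 1 :=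
    calc (#{H ∈ F | Disjoint H T} : ℝ) ≤ #F * (1 - ρ) ^ k := hT
      _ ≤ #F * Real.exp (-(ρ * k)) := mul_le_mul_of_nonneg_left hpow (Nat.cast_nonneg _)
      _ < Real.exp (ρ * k) * Real.exp (-(ρ * k)) := mul_lt_mul_of_pos_right hk (Real.exp_pos _)
      _ = 1 := by rw [← Real.exp_add, add_neg_cancel, Real.exp_zero]
  exact_mod_cast this

end HittingSet

lemma exists_isJoined_of_dense {V : Type*} [Fintype V] [DecidableEq V] {A : Finset (Sym2 V)}
    {g k : ℕ} {ρ : ℝ} (hA : A.Nonempty) (hρ : ρ ≤ 1)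
    (hdense : ∀ P Q : Finset V, Disjoint P Q → g ≤ #P → g ≤ #Q →
      ρ * #A ≤ #(edgesBetween A P Q))
    (hk : 2 * Fintype.card V ≤ ρ * k) : ∃ T ⊆ A, #T ≤ k ∧ IsJoined T g := by
  have hV : 0 < Fintype.card V := Fintype.card_pos_iff.2 ⟨hA.choose.out.1⟩
  set F : Finset (Finset (Sym2 V)) := image (fun B => edgesBetween A B.1 B.2)
    {B : Finset V × Finset V | Disjoint B.1 B.2 ∧ g ≤ #B.1 ∧ g ≤ #B.2}
  have hF_card : (#F : ℝ) < Real.exp (ρ * k) := by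
    have hle : #F ≤ 4 ^ Fintype.card V := card_image_le.trans ((card_filter_le _ _).trans_eq (by
      rw [card_univ, Fintype.card_prod, Fintype.card_finset, ← mul_pow]
      rfl))
    have hexp : (4 : ℝ) < Real.exp 2 := by
      have : Real.exp 2 = Real.exp 1 * Real.exp 1 := by rw [← Real.exp_add]; norm_num
      nlinarith [Real.exp_one_gt_d9]
    calc (#F : ℝ) ≤ 4 ^ Fintype.card V := by exact_mod_cast hle
      _ < Real.exp 2 ^ Fintype.card V := pow_lt_pow_left₀ hexp (by norm_num) hV.ne'
      _ = Real.exp (2 * Fintype.card V) := by rw [← Real.exp_nat_mul, mul_comm]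
      _ ≤ Real.exp (ρ * k) := Real.exp_le_exp.2 hk
  have hF : ∀ H ∈ F, H ⊆ A ∧ ρ * #A ≤ #H := fun H hH => by
    obtain ⟨B, hB, rfl⟩ := mem_image.1 hH
    obtain ⟨hdisj, hP, hQ⟩ := (mem_filter.1 hB).2
    exact ⟨filter_subset _ _, hdense _ _ hdisj hP hQ⟩
  obtain ⟨T, hTA, hTk, hT⟩ :=
    exists_hittingSet hA hρ (fun H hH => (hF H hH).1) (fun H hH => (hF H hH).2) hF_card
  refine ⟨T, hTA, hTk, fun P Q hPQ hP hQ => ?_⟩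
  have hmeet := hT _ (mem_image.2 ⟨(P, Q), mem_filter.2 ⟨mem_univ _, hPQ, hP, hQ⟩, rfl⟩)
  obtain ⟨e, he, heT⟩ := Finset.not_disjoint_iff.1 hmeet
  obtain ⟨-, x, hx, y, hy, rfl⟩ := mem_edgesBetween.1 he
  exact ⟨x, hx, y, hy, heT⟩

/-! ### Hamilton cycles in pseudorandom graphs -/

section Deterministic

variable {V : Type*} {A T Γ F : Finset (Sym2 V)} {M : Finset (V × V)} {Z : Finset V}

lemma IsPathCycleSystem.card_le_card_filter_notMem_add [DecidableEq V] (hM : IsPathCycleSystem M)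
    (Z : Finset V) : #M ≤ #{q ∈ M | q.1 ∉ Z ∧ q.2 ∉ Z} + 2 * #Z := by
  have hfst : #{q ∈ M | q.1 ∈ Z} ≤ #Z :=
    card_le_card_of_injOn Prod.fst (fun q hq => (mem_filter.1 hq).2)
      (hM.injOn_fst.mono (coe_subset.2 (filter_subset _ _)))
  have hsnd : #{q ∈ M | q.2 ∈ Z} ≤ #Z :=
    card_le_card_of_injOn Prod.snd (fun q hq => (mem_filter.1 hq).2)
      (hM.injOn_snd.mono (coe_subset.2 (filter_subset _ _)))
  have hcover : M ⊆ {q ∈ M | q.1 ∉ Z ∧ q.2 ∉ Z} ∪ ({q ∈ M | q.1 ∈ Z} ∪ {q ∈ M | q.2 ∈ Z}) := by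
    intro q hq
    simp only [mem_union, mem_filter, hq, true_and]
    tauto
  have hcard := (card_le_card hcover).trans (card_union_le _ _)
  have := card_union_le {q ∈ M | q.1 ∈ Z} {q ∈ M | q.2 ∈ Z}
  omega

lemma IsPathCycleSystem.card_image_mk [DecidableEq V] (hM : IsPathCycleSystem M) :
    #(M.image fun q => s(q.1, q.2)) = #M := by
  refine card_image_of_injOn ?_
  rintro ⟨x, y⟩ hq ⟨x', y'⟩ hq' h
  rcases Sym2.eq_iff.1 h with ⟨rfl, rfl⟩ | ⟨rfl, rfl⟩
  · rfl
  · exact absurd hq' (hM.swap_notMem _ hq)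

lemma exists_isEnumeration_cycleEdges_of_isPathCycleSystem [Fintype V] [DecidableEq V] (K : ℕ)
    (Z : Finset V) (hM : IsPathCycleSystem M) (hMA : ∀ q ∈ M, s(q.1, q.2) ∈ A) :
    ∃ l : List V, IsEnumeration l ∧ ∃ N ⊆ M, (∀ q ∈ N, s(q.1, q.2) ∈ cycleEdges l) ∧
      (∀ q ∈ N, q.1 ∉ Z ∧ q.2 ∉ Z) ∧ ∃ a, a * K ≤ Fintype.card V ∧
        #M ≤ #(N.image fun q => s(q.1, q.2)) + a + shortCycleCount K A + 2 * #Z := by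
  obtain ⟨l, hl, a, ha, hcard⟩ := exists_isEnumeration_card_le_add_shortCycleCount K hM hMA
  have hMl : IsPathCycleSystem {q ∈ M | q ∈ consecutivePairs l} := hM.subset (filter_subset _ _)
  set N : Finset (V × V) := {q ∈ {q ∈ M | q ∈ consecutivePairs l} | q.1 ∉ Z ∧ q.2 ∉ Z}
  have hN : ∀ q ∈ N, (q ∈ M ∧ q ∈ consecutivePairs l) ∧ q.1 ∉ Z ∧ q.2 ∉ Z := fun q hq =>
    ⟨mem_filter.1 (mem_filter.1 hq).1, (mem_filter.1 hq).2⟩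
  refine ⟨l, hl, N, fun q hq => (hN q hq).1.1, fun q hq => ?_, fun q hq => (hN q hq).2, a, ha, ?_⟩
  · exact (pathEdges_prefix_cycleEdges l).subset (mk_mem_pathEdges_iff.2 (.inl (hN q hq).1.2))
  · have := hMl.card_le_card_filter_notMem_add Z
    rw [(hMl.subset (filter_subset _ _)).card_image_mk]
    omega

section Sparse

variable [Fintype V] [DecidableEq V] {N : V → Finset V} {R : Finset V} {D q g k : ℕ}

/-- The vertices with fewer than `D` neighbours in `R`. -/
def poorlyAttached (A : Finset (Sym2 V)) (R : Finset V) (D : ℕ) : Finset V :=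
  {v | #(neighbors A v ∩ R) < D}

/-- The edges joining each vertex `v` to the vertices of `N v`. -/
def choiceEdges (N : V → Finset V) : Finset (Sym2 V) :=
  univ.biUnion fun v => (N v).image fun u => s(v, u)

namespace IsNeighborChoice

lemma exists_subset (hN : IsNeighborChoice A R D N) (hD : 2 ≤ D) :
    ∃ Z, R ⊆ Z ∧ (∀ v, N v ⊆ Z) ∧ #Z ≤ #R + D * #(poorlyAttached A R D) := by
  refine ⟨R ∪ (poorlyAttached A R D).biUnion N, subset_union_left, fun v => ?_, ?_⟩
  · obtain hv | hv := le_or_gt D #(neighbors A v ∩ R)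
    · exact (hN.subset_of_le v hv).trans subset_union_left
    · exact (subset_biUnion_of_mem N (mem_filter.2 ⟨mem_univ v, hv⟩)).trans subset_union_right
  · refine (card_union_le _ _).trans (Nat.add_le_add_left ?_ _)
    rw [mul_comm]
    exact card_biUnion_le_card_mul _ _ _ fun v _ => hN.card_le hD v

lemma choiceEdges_subset (hN : IsNeighborChoice A R D N) : choiceEdges N ⊆ A :=
  biUnion_subset.2 fun _ _ => image_subset_iff.2 fun _ hu => hN.mk_mem hu

lemma card_choiceEdges_le (hN : IsNeighborChoice A R D N) (hD : 2 ≤ D) :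
    #(choiceEdges N) ≤ Fintype.card V * D :=
  card_biUnion_le_card_mul _ _ _ fun v _ => card_image_le.trans (hN.card_le hD v)

lemma expandsInto (hN : IsNeighborChoice A R (8 * q + 3) N) (hA : A ⊆ completeEdges V)
    (hfar : SmallVerticesFar A (8 * q + 3)) (hsparse : IsLocallySparse A (4 * g) q)
    (hZ : ∀ v, N v ⊆ Z) (hΓ : choiceEdges N ⊆ Γ) : ExpandsInto Γ Z g := by
  refine fun S hS => ⟨S.biUnion N \ S, sdiff_subset.trans (biUnion_subset.2 fun v _ => hZ v),
    sdiff_disjoint, hN.two_mul_card_le_card_biUnion_sdiff hA hfar hsparse hS, fun u hu => ?_⟩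
  obtain ⟨v, hv, hvu⟩ := mem_biUnion.1 (Finset.mem_sdiff.1 hu).1
  exact ⟨v, hv, hΓ (mem_biUnion.2 ⟨v, mem_univ v, mem_image_of_mem _ hvu⟩)⟩

end IsNeighborChoice

/-- The pseudorandomness of an edge set that yields Hamilton cycles: `q` governs the degrees in the
sparse expander, `g` is the size from which on pairs of sets are joined by more than `d` edges
and by a proportion `ρ` of all edges, and `M`, `b` are the parameters of the boosters. -/
structure IsPseudorandom (A : Finset (Sym2 V)) (q g d M b : ℕ) (ρ : ℝ) : Prop where
  two_le_degree (v : V) : 2 ≤ #(neighbors A v)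
  smallVerticesFar : SmallVerticesFar A (8 * q + 3)
  isLocallySparse : IsLocallySparse A (4 * g) q
  isDenseBetween : IsDenseBetween A g d
  mul_card_le (P Q : Finset V) (hPQ : Disjoint P Q) (hP : g ≤ #P) (hQ : g ≤ #Q) :
    ρ * #A ≤ #(edgesBetween A P Q)
  hasBoosters : HasBoosters A M (2 * g) b

namespace IsPseudorandom

variable {d M b s t : ℕ} {ρ : ℝ}

lemma exists_sparse_expander [Nonempty V] (h : IsPseudorandom A q g d M b ρ)
    (hA : A ⊆ completeEdges V) (hρ : ρ ≤ 1) (hk : 2 * Fintype.card V ≤ ρ * k) (R : Finset V) :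
    ∃ Γ ⊆ A, ∃ Z, R ⊆ Z ∧ #Z ≤ #R + (8 * q + 3) * #(poorlyAttached A R (8 * q + 3)) ∧
      #Γ ≤ Fintype.card V * (8 * q + 3) + k ∧ ExpandsInto Γ Z g ∧ IsJoined Γ g := by
  have hAne : A.Nonempty := by
    obtain ⟨v⟩ := ‹Nonempty V›
    obtain ⟨u, hu⟩ := card_pos.1 (two_pos.trans_le (h.two_le_degree v))
    exact ⟨_, mem_neighbors.1 hu⟩
  obtain ⟨N, hN⟩ := exists_isNeighborChoice R (8 * q + 3) h.two_le_degree
  obtain ⟨T, hTA, hTk, hT⟩ := exists_isJoined_of_dense hAne hρ h.mul_card_le hk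
  obtain ⟨Z, hRZ, hNZ, hZ⟩ := hN.exists_subset (by omega)
  refine ⟨choiceEdges N ∪ T, union_subset hN.choiceEdges_subset hTA, Z, hRZ, hZ, ?_, ?_, ?_⟩
  · exact (card_union_le _ _).trans (add_le_add (hN.card_choiceEdges_le (by omega)) hTk)
  · exact hN.expandsInto hA h.smallVerticesFar h.isLocallySparse hNZ subset_union_left
  · exact hT.mono subset_union_right

-- A large monochromatic path system, cleared of the vertices into which the expander expands, is
-- kept intact by all rotations and so survives in the Hamilton cycle.
theorem exists_isHamiltonianCycle {ι : Type*} [Fintype ι] [DecidableEq ι]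
    (h : IsPseudorandom A q g (Fintype.card ι * (2 * Fintype.card V)) M b ρ)
    (hA : A ⊆ completeEdges V) (hV : 3 ≤ Fintype.card V) (c : Sym2 V → ι) (R : Finset V) (K : ℕ)
    (hρ : ρ ≤ 1) (hk : 2 * Fintype.card V ≤ ρ * k) (ht : 1 ≤ t)
    (hcard : (Fintype.card ι + 1) * t + 4 * 4 ^ Fintype.card ι * g ≤ 2 * Fintype.card V)
    (hR : 3 * s + g ≤ #R) (hM : Fintype.card V + (Fintype.card V * (8 * q + 3) + k) ≤ M)
    (hb : 2 * b ≤ s * s) :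
    ∃ (i : ι) (v : V) (w : (SimpleGraph.fromEdgeSet (A : Set (Sym2 V))).Walk v v),
      w.IsHamiltonianCycle ∧ ∃ a, a * K ≤ Fintype.card V ∧
        t ≤ (w.edges.filter fun e => c e = i).length + a + shortCycleCount K A +
          2 * (#R + (8 * q + 3) * #(poorlyAttached A R (8 * q + 3))) := by
  have : Nonempty V := Fintype.card_pos_iff.1 (by omega)
  obtain ⟨i, P, hP, hPA, htP⟩ := exists_monochromatic_isPathCycleSystem ht hA c
    h.isDenseBetween hcard
  obtain ⟨Γ, hΓA, Z, hRZ, hZ, hΓ_card, hexp, hjoined⟩ := h.exists_sparse_expander hA hρ hk R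
  obtain ⟨l₀, hl₀, N, hNP, hNl₀, hNZ, a, ha, hPN⟩ :=
    exists_isEnumeration_cycleEdges_of_isPathCycleSystem K Z hP fun q hq => (hPA q hq).1
  set F := N.image fun q => s(q.1, q.2)
  have hFA : ∀ e ∈ F, e ∈ A ∧ c e = i := forall_mem_image.2 fun q hq => hPA q (hNP hq)
  have hFZ : ∀ e ∈ F, ∀ x ∈ Z, x ∉ e := forall_mem_image.2 fun q hq x hx hxe => by
    rcases Sym2.mem_iff.1 hxe with rfl | rfl
    exacts [(hNZ q hq).1 hx, (hNZ q hq).2 hx]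
  obtain ⟨l, hl, hlA, hFl⟩ := exists_isEnumeration_cycleEdges_subset hΓA (fun e he => (hFA e he).1)
    hFZ hl₀ (forall_mem_image.2 hNl₀) hexp hjoined (hR.trans (card_le_card hRZ)) h.hasBoosters
    (Nat.le_succ _) (by omega) hb
  obtain ⟨v, w, hw, hperm⟩ := exists_isHamiltonianCycle_edges_perm_cycleEdges
    (G := SimpleGraph.fromEdgeSet (A : Set (Sym2 V))) hV hl fun e he => by
      rw [edgeSet_fromEdgeSet_of_subset hA]
      exact hlA e he
  refine ⟨i, v, w, hw, a, ha, ?_⟩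
  have hF_card : #F ≤ (w.edges.filter fun e => c e = i).length := by
    refine (card_le_card fun e he => ?_).trans (List.toFinset_card_le _)
    rw [List.mem_toFinset, List.mem_filter]
    exact ⟨hperm.mem_iff.2 (hFl e he), decide_eq_true (hFA e he).2⟩
  omega

end IsPseudorandom

end Sparse

end Deterministic

/-! ### Tail bounds for binomial random subsets -/

section TailBounds

variable {α : Type*} [DecidableEq α] {E F B : Finset α} {p z : ℝ}

lemma binomialProb_le_card_mul (hp : p ∈ Set.Icc (0 : ℝ) 1) {ι : Type*} (s : Finset ι) {c : ℝ}
    {Q : Finset α → Prop} {Q' : ι → Finset α → Prop} (h : ∀ A ⊆ E, Q A → ∃ i ∈ s, Q' i A)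
    (hc : ∀ i ∈ s, binomialProb E p (Q' i) ≤ c) : binomialProb E p Q ≤ #s * c :=
  (binomialProb_le_sum hp s h).trans (by simpa using sum_le_card_nsmul s _ c hc)

lemma mul_binomialProb_lt_le_binomialExp (hp : p ∈ Set.Icc (0 : ℝ) 1) {f : Finset α → ℝ} {c : ℝ}
    (hf : ∀ A ⊆ E, 0 ≤ f A) : c * binomialProb E p (fun A => c < f A) ≤ binomialExp E p f := by
  rw [binomialProb, ← binomialExp_const_mul]
  refine binomialExp_mono hp fun A hA => ?_
  split_ifs with hcf
  · linarith
  · simpa using hf A hA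

lemma binomialExp_card_filter {ι : Type*} (s : Finset ι) (Q : ι → Finset α → Prop)
    [∀ A, DecidablePred fun i => Q i A] :
    binomialExp E p (fun A => (#{i ∈ s | Q i A} : ℝ)) = ∑ i ∈ s, binomialProb E p (Q i) := by
  simp only [binomialProb, ← binomialExp_sum, card_filter]
  refine binomialExp_congr fun A _ => ?_
  push_cast
  exact sum_congr rfl fun i _ => by congr

lemma pow_mul_binomialProb_subset_card_inter_le (hp : p ∈ Set.Icc (0 : ℝ) 1) (hF : F ⊆ E)
    (hB : B ⊆ E) (hFB : Disjoint F B) (hz₀ : 0 ≤ z) (hz₁ : z ≤ 1) (d : ℕ) :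
    z ^ d * binomialProb E p (fun A => F ⊆ A ∧ #(A ∩ B) ≤ d)
      ≤ p ^ #F * Real.exp (-(1 - z) * p * #B) := by
  rw [binomialProb, ← binomialExp_const_mul]
  refine (binomialExp_mono hp fun A _ => ?_).trans
    (binomialExp_indicator_mul_pow_le hp hF hB hFB hz₀)
  split_ifs with hFd hFA hFA
  · simpa using pow_le_pow_of_le_one hz₀ hz₁ hFd.2
  · exact absurd hFd.1 hFA
  all_goals rw [mul_zero]; positivity

lemma pow_mul_binomialProb_card_inter_le (hp : p ∈ Set.Icc (0 : ℝ) 1) (hB : B ⊆ E)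
    (hz₀ : 0 ≤ z) (hz₁ : z ≤ 1) (d : ℕ) :
    z ^ d * binomialProb E p (fun A => #(A ∩ B) ≤ d) ≤ Real.exp (-(1 - z) * p * #B) := by
  simpa using pow_mul_binomialProb_subset_card_inter_le hp (empty_subset E) hB
    (disjoint_empty_left B) hz₀ hz₁ d

lemma binomialProb_subset_disjoint_le (hp : p ∈ Set.Icc (0 : ℝ) 1) (hF : F ⊆ E) (hB : B ⊆ E)
    (hFB : Disjoint F B) :
    binomialProb E p (fun A => F ⊆ A ∧ Disjoint A B) ≤ p ^ #F * Real.exp (-p * #B) := by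
  simpa [disjoint_iff_inter_eq_empty] using
    pow_mul_binomialProb_subset_card_inter_le hp hF hB hFB le_rfl zero_le_one 0

lemma binomialProb_disjoint_le (hp : p ∈ Set.Icc (0 : ℝ) 1) (hB : B ⊆ E) :
    binomialProb E p (fun A => Disjoint A B) ≤ Real.exp (-p * #B) := by
  simpa using binomialProb_subset_disjoint_le hp (empty_subset E) hB (disjoint_empty_left B)

lemma binomialProb_subset_le (hp : p ∈ Set.Icc (0 : ℝ) 1) (hF : F ⊆ E) :
    binomialProb E p (fun A => F ⊆ A) ≤ p ^ #F := by
  simpa using binomialProb_subset_disjoint_le hp hF (empty_subset E) (disjoint_empty_right F)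

lemma pow_mul_binomialProb_le_card_inter (hp : p ∈ Set.Icc (0 : ℝ) 1) (hB : B ⊆ E) (hz : 1 ≤ z)
    (d : ℕ) :
    z ^ d * binomialProb E p (fun A => d ≤ #(A ∩ B)) ≤ Real.exp ((z - 1) * p * #B) := by
  have hz₀ : 0 ≤ z := zero_le_one.trans hz
  rw [binomialProb, ← binomialExp_const_mul, ← neg_sub 1 z]
  refine (binomialExp_mono hp fun A _ => ?_).trans (binomialExp_pow_le hp hB hz₀)
  split_ifs with hd
  · simpa using pow_le_pow_right₀ hz hd
  · rw [mul_zero]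
    positivity

-- The factors `z ^ #T` and `p ^ #(F \ T)` make the bound summable over all `T ⊆ E`.
lemma binomialProb_subset_disjoint_le_of_card_le (hp₀ : 0 < p) (hp₁ : p ≤ 1) (hz₀ : 0 < z)
    (hz₁ : z ≤ 1) {T : Finset α} (hT : T ⊆ E) (hB : B ⊆ E) (hTB : Disjoint T B) {M m b : ℕ}
    (hM : #T ≤ M) (hm : #(F \ T) ≤ m) (hb : b ≤ #B) :
    binomialProb E p (fun A => T ⊆ A ∧ Disjoint A B)
      ≤ Real.exp (-p * b) / (z ^ M * p ^ m) * ((p * z) ^ #T * p ^ #(F \ T)) := by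
  refine (binomialProb_subset_disjoint_le ⟨hp₀.le, hp₁⟩ hT hB hTB).trans ?_
  rw [div_mul_eq_mul_div, le_div_iff₀ (by positivity), mul_pow]
  calc p ^ #T * Real.exp (-p * #B) * (z ^ M * p ^ m)
      ≤ p ^ #T * Real.exp (-p * b) * (z ^ #T * p ^ #(F \ T)) := by
        refine mul_le_mul (mul_le_mul_of_nonneg_left (Real.exp_le_exp.2 ?_) (by positivity))
          (mul_le_mul (pow_le_pow_of_le_one hz₀.le hz₁ hM)
            (pow_le_pow_of_le_one hp₀.le hp₁ hm) (by positivity) (by positivity))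
          (by positivity) (by positivity)
        exact mul_le_mul_of_nonpos_left (Nat.cast_le.2 hb) (neg_nonpos.2 hp₀.le)
    _ = _ := by ring

lemma sum_powerset_pow_mul_pow_card_sdiff_le (hp : 0 ≤ p) (hz₀ : 0 ≤ z) (hz₁ : z ≤ 1)
    (hF : F ⊆ E) :
    ∑ T ∈ E.powerset, (p * z) ^ #T * p ^ #(F \ T) ≤ (2 * p) ^ #F * Real.exp (p * z * #E) := by
  have hterm : ∀ T ∈ E.powerset, (p * z) ^ #T * p ^ #(F \ T)
      = (∏ _e ∈ T, p * z) * ∏ e ∈ E \ T, if e ∈ F then p else 1 := by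
    intro T _
    rw [prod_const, prod_ite_mem, prod_const, inter_comm, ← inter_sdiff_assoc,
      inter_eq_left.2 hF]
  calc ∑ T ∈ E.powerset, (p * z) ^ #T * p ^ #(F \ T)
      = ∏ e ∈ E, (p * z + if e ∈ F then p else 1) := by rw [sum_congr rfl hterm, prod_add]
    _ ≤ ∏ e ∈ E, (if e ∈ F then 2 * p else 1) * Real.exp (p * z) := by
        have hpz : 0 ≤ p * z := mul_nonneg hp hz₀
        have hexp := Real.add_one_le_exp (p * z)
        refine prod_le_prod (fun e _ => by positivity) fun e _ => ?_
        split_ifs <;> nlinarith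
    _ = (2 * p) ^ #F * Real.exp (p * z * #E) := by
        rw [prod_mul_distrib, prod_ite_mem, inter_eq_right.2 hF, prod_const, prod_const,
          ← Real.exp_nat_mul, mul_comm (#E : ℝ)]

end TailBounds

/-! ### Failure probabilities of the pseudorandom properties -/

section StarEdges

variable {V : Type*} [DecidableEq V]

/-- The pairs joining `v` to the other elements of `R`. -/
def starEdges (v : V) (R : Finset V) : Finset (Sym2 V) :=
  (R.erase v).image fun u => s(v, u)

lemma mem_starEdges {v : V} {R : Finset V} {e : Sym2 V} :
    e ∈ starEdges v R ↔ ∃ u ∈ R, u ≠ v ∧ e = s(v, u) := by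
  simp only [starEdges, mem_image, mem_erase]
  grind

lemma card_le_card_starEdges_add_one (v : V) (R : Finset V) : #R ≤ #(starEdges v R) + 1 := by
  rw [starEdges, card_image_of_injective _ fun a b h => Sym2.congr_right.1 h]
  have := pred_card_le_card_erase (s := R) (a := v)
  omega

lemma card_starEdges_inter_starEdges_le {x y : V} (hxy : x ≠ y) (R S : Finset V) :
    #(starEdges x R ∩ starEdges y S) ≤ 1 := by
  refine (card_le_card (t := {s(x, y)}) fun e he => ?_).trans (card_singleton _).le
  obtain ⟨hx, hy⟩ := mem_inter.1 he
  obtain ⟨u, -, -, rfl⟩ := mem_starEdges.1 hx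
  obtain ⟨w, -, -, he⟩ := mem_starEdges.1 hy
  grind

end StarEdges

section FailureProbability

variable {V : Type*} [Fintype V] [DecidableEq V] {p z c : ℝ}

lemma starEdges_subset_completeEdges (v : V) (R : Finset V) :
    starEdges v R ⊆ completeEdges V := by
  intro e he
  obtain ⟨u, -, hu, rfl⟩ := mem_starEdges.1 he
  exact mk_mem_completeEdges.2 hu.symm

lemma card_inter_starEdges_le (A : Finset (Sym2 V)) (v : V) (R : Finset V) :
    #(A ∩ starEdges v R) ≤ #(neighbors A v ∩ R) := by
  refine (card_le_card fun e he => ?_).trans (card_image_le (f := fun u => s(v, u)))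
  obtain ⟨heA, he⟩ := mem_inter.1 he
  obtain ⟨u, hu, -, rfl⟩ := mem_starEdges.1 he
  exact mem_image_of_mem _ (mem_inter.2 ⟨mem_neighbors.2 heA, hu⟩)

lemma pathEdges_subset_completeEdges {l : List V} (hl : l.Nodup) :
    (pathEdges l).toFinset ⊆ completeEdges V := by
  intro e he
  induction e with | _ x y
  rw [mk_mem_completeEdges]
  rintro rfl
  have hxx : (x, x) ∈ consecutivePairs l := by
    simpa using mk_mem_pathEdges_iff.1 (List.mem_toFinset.1 he)
  obtain ⟨P, S, rfl, hP, hS⟩ := mem_consecutivePairs_iff.1 hxx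
  exact List.disjoint_of_nodup_append hl (List.mem_of_getLast? hP) (List.mem_of_head? hS)

lemma cycleEdges_subset_completeEdges {l : List V} (hl : l.Nodup) (hlen : 2 ≤ l.length) :
    (cycleEdges l).toFinset ⊆ completeEdges V := by
  obtain ⟨a, L, rfl⟩ := List.exists_cons_of_length_pos (by omega : 0 < l.length)
  obtain ⟨L, b, rfl⟩ := (List.eq_nil_or_concat' L).resolve_left (by rintro rfl; simp at hlen)
  rw [cycleEdges_eq_pathEdges_append (a := a) (b := b) rfl
    (by rw [← List.cons_append]; exact List.getLast?_concat), List.toFinset_append]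
  refine union_subset (pathEdges_subset_completeEdges hl) fun e he => ?_
  obtain rfl : e = s(b, a) := by simpa using he
  rw [mk_mem_completeEdges]
  rintro rfl
  simp at hl

lemma binomialProb_exists_neighbors_eq_empty_le (hp : p ∈ Set.Icc (0 : ℝ) 1) :
    binomialProb (completeEdges V) p (fun A => ∃ v, #(neighbors A v) = 0)
      ≤ Fintype.card V * Real.exp (-p * (Fintype.card V - 1)) := by
  refine binomialProb_le_card_mul hp univ (Q' := fun v A => Disjoint A (starEdges v univ)) ?_ ?_
  · rintro A - ⟨v, hv⟩
    refine ⟨v, mem_univ v, ?_⟩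
    have hle := card_inter_starEdges_le A v univ
    rw [inter_univ, hv, Nat.le_zero, card_eq_zero] at hle
    exact disjoint_iff_inter_eq_empty.2 hle
  · intro v _
    refine (binomialProb_disjoint_le hp (starEdges_subset_completeEdges v univ)).trans
      (Real.exp_le_exp.2 ?_)
    have hcard : (Fintype.card V : ℝ) ≤ #(starEdges v univ) + 1 := by
      exact_mod_cast card_le_card_starEdges_add_one v univ
    nlinarith [hp.1]

lemma binomialProb_exists_card_neighbors_eq_one_le (hp : p ∈ Set.Icc (0 : ℝ) 1) :
    binomialProb (completeEdges V) p (fun A => ∃ v, #(neighbors A v) = 1)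
      ≤ (Fintype.card V) ^ 2 * (p * Real.exp (-p * (Fintype.card V - 2))) := by
  have hp₀ := hp.1
  refine (binomialProb_le_card_mul hp ({e : V × V | e.1 ≠ e.2} : Finset (V × V))
    (Q' := fun e A => {s(e.1, e.2)} ⊆ A ∧ Disjoint A (starEdges e.1 (univ.erase e.2)))
    (c := p * Real.exp (-p * (Fintype.card V - 2))) ?_ ?_).trans ?_
  · rintro A hA ⟨v, hv⟩
    obtain ⟨u, hu⟩ := card_eq_one.1 hv
    have huA : s(v, u) ∈ A := mem_neighbors.1 (hu ▸ mem_singleton_self u)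
    have hle := card_inter_starEdges_le A v (univ.erase u)
    rw [inter_erase, inter_univ, hu, erase_singleton, card_empty, Nat.le_zero, card_eq_zero] at hle
    exact ⟨(v, u), by simpa using mk_mem_completeEdges.1 (hA huA), singleton_subset_iff.2 huA,
      disjoint_iff_inter_eq_empty.2 hle⟩
  · rintro ⟨v, u⟩ hvu
    replace hvu : v ≠ u := by simpa using hvu
    have hdisj : Disjoint {s(v, u)} (starEdges v (univ.erase u)) := by
      rw [disjoint_singleton_left]
      intro h
      obtain ⟨w, hw, -, he⟩ := mem_starEdges.1 h
      exact (mem_erase.1 hw).1 (Sym2.congr_right.1 he).symm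
    refine (binomialProb_subset_disjoint_le hp
      (singleton_subset_iff.2 (mk_mem_completeEdges.2 hvu))
      (starEdges_subset_completeEdges _ _) hdisj).trans ?_
    have hcard := card_le_card_starEdges_add_one v (univ.erase u)
    rw [card_erase_of_mem (mem_univ u), card_univ, Nat.sub_le_iff_le_add] at hcard
    have hcard' : (Fintype.card V : ℝ) ≤ #(starEdges v (univ.erase u)) + 1 + 1 := by
      exact_mod_cast hcard
    rw [card_singleton, pow_one]
    exact mul_le_mul_of_nonneg_left (Real.exp_le_exp.2 (by nlinarith)) hp₀
  · gcongr
    calc (#{e : V × V | e.1 ≠ e.2} : ℝ) ≤ Fintype.card (V × V) := by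
          exact_mod_cast card_le_univ _
      _ = (Fintype.card V) ^ 2 := by
          rw [Fintype.card_prod]
          push_cast
          ring

lemma binomialProb_not_two_le_card_neighbors_le (hp : p ∈ Set.Icc (0 : ℝ) 1) :
    binomialProb (completeEdges V) p (fun A => ¬ ∀ v, 2 ≤ #(neighbors A v))
      ≤ Fintype.card V * Real.exp (-p * (Fintype.card V - 1))
        + (Fintype.card V) ^ 2 * (p * Real.exp (-p * (Fintype.card V - 2))) := by
  refine (binomialProb_le_add hp fun A _ hA => ?_).trans
    (add_le_add (binomialProb_exists_neighbors_eq_empty_le hp)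
      (binomialProb_exists_card_neighbors_eq_one_le hp))
  push Not at hA
  obtain ⟨v, hv⟩ := hA
  obtain hv | hv : #(neighbors A v) = 0 ∨ #(neighbors A v) = 1 := by omega
  · exact Or.inl ⟨v, hv⟩
  · exact Or.inr ⟨v, hv⟩

lemma binomialProb_subset_card_neighbors_lt_le (hp : p ∈ Set.Icc (0 : ℝ) 1) {F : Finset (Sym2 V)}
    (hF : F ⊆ completeEdges V) (hF4 : #F ≤ 4) {x y : V} (hxy : x ≠ y) (D : ℕ) :
    binomialProb (completeEdges V) p
        (fun A => F ⊆ A ∧ #(neighbors A x) < D ∧ #(neighbors A y) < D)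
      ≤ p ^ #F * (8 ^ (2 * D) * Real.exp (-(7 / 8 * p * (2 * Fintype.card V - 7)))) := by
  have hp₀ := hp.1
  set S := starEdges x univ ∪ starEdges y univ
  have hcard : 2 * Fintype.card V ≤ #(S \ F) + 7 := by
    have hx := card_le_card_starEdges_add_one x univ
    have hy := card_le_card_starEdges_add_one y univ
    have hinter := card_starEdges_inter_starEdges_le hxy univ univ
    have hunion : #S + _ = _ := card_union_add_card_inter (starEdges x univ) (starEdges y univ)
    have hsdiff := card_le_card_sdiff_add_card (s := S) (t := F)
    rw [card_univ] at hx hy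
    omega
  have hcard' : (2 * Fintype.card V : ℝ) ≤ #(S \ F) + 7 := by exact_mod_cast hcard
  have htail := pow_mul_binomialProb_subset_card_inter_le (B := S \ F) (z := 1 / 8) hp hF
    (sdiff_subset.trans (union_subset (starEdges_subset_completeEdges x univ)
      (starEdges_subset_completeEdges y univ))) disjoint_sdiff (by norm_num) (by norm_num) (2 * D)
  rw [one_div, inv_pow, inv_mul_le_iff₀ (by positivity)] at htail
  calc _ ≤ binomialProb (completeEdges V) p (fun A => F ⊆ A ∧ #(A ∩ (S \ F)) ≤ 2 * D) := by
        refine binomialProb_mono hp fun A _ hA => ⟨hA.1, ?_⟩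
        have hx' := card_inter_starEdges_le A x univ
        have hy' := card_inter_starEdges_le A y univ
        have hsub : #(A ∩ (S \ F)) ≤ #(A ∩ starEdges x univ) + #(A ∩ starEdges y univ) := by
          refine (card_le_card (inter_subset_inter_left sdiff_subset)).trans ?_
          rw [inter_union_distrib_left]
          exact card_union_le _ _
        rw [inter_univ] at hx' hy'
        omega
    _ ≤ 8 ^ (2 * D) * (p ^ #F * Real.exp (-(1 - 8⁻¹) * p * #(S \ F))) := by simpa using htail
    _ ≤ 8 ^ (2 * D) * (p ^ #F * Real.exp (-(7 / 8 * p * (2 * Fintype.card V - 7)))) := by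
        refine mul_le_mul_of_nonneg_left (mul_le_mul_of_nonneg_left
          (Real.exp_le_exp.2 ?_) (by positivity)) (by positivity)
        nlinarith
    _ = _ := by ring

lemma binomialProb_exists_path_card_neighbors_lt_le (hp : p ∈ Set.Icc (0 : ℝ) 1) (D : ℕ) {k : ℕ}
    (hk : k ≤ 3) :
    binomialProb (completeEdges V) p (fun A => ∃ (x y : V) (t : List V), t.length = k ∧
        (x :: (t ++ [y])).Nodup ∧ (∀ e ∈ pathEdges (x :: (t ++ [y])), e ∈ A) ∧
        #(neighbors A x) < D ∧ #(neighbors A y) < D)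
      ≤ (Fintype.card V) ^ (k + 2) *
        (p ^ (k + 1) * (8 ^ (2 * D) * Real.exp (-(7 / 8 * p * (2 * Fintype.card V - 7))))) := by
  have hp₀ := hp.1
  refine (binomialProb_le_card_mul hp
    ({e | (e.1 :: (e.2.2.toList ++ [e.2.1])).Nodup} : Finset (V × V × List.Vector V k))
    (Q' := fun e A => (pathEdges (e.1 :: (e.2.2.toList ++ [e.2.1]))).toFinset ⊆ A ∧
      #(neighbors A e.1) < D ∧ #(neighbors A e.2.1) < D)
    (c := p ^ (k + 1) * (8 ^ (2 * D) * Real.exp (-(7 / 8 * p * (2 * Fintype.card V - 7)))))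
    ?_ ?_).trans ?_
  · rintro A - ⟨x, y, t, ht, hnodup, hpath, hx, hy⟩
    exact ⟨(x, y, ⟨t, ht⟩), by simpa using hnodup,
      fun e he => hpath e (List.mem_toFinset.1 he), hx, hy⟩
  · rintro ⟨x, y, t⟩ ht
    replace ht : (x :: (t.toList ++ [y])).Nodup := by simpa using ht
    have hcard : #(pathEdges (x :: (t.toList ++ [y]))).toFinset = k + 1 := by
      rw [List.toFinset_card_of_nodup (nodup_pathEdges ht), length_pathEdges]
      simp
    have hxy : x ≠ y := by
      rintro rfl
      simp at ht
    rw [← hcard]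
    exact binomialProb_subset_card_neighbors_lt_le hp (pathEdges_subset_completeEdges ht)
      (by omega) hxy D
  · gcongr
    have hcard := card_le_univ
      ({e | (e.1 :: (e.2.2.toList ++ [e.2.1])).Nodup} : Finset (V × V × List.Vector V k))
    rw [Fintype.card_prod, Fintype.card_prod, card_vector, ← pow_succ', ← pow_succ'] at hcard
    exact_mod_cast hcard

lemma binomialProb_not_smallVerticesFar_le (hp : p ∈ Set.Icc (0 : ℝ) 1) (D : ℕ) :
    binomialProb (completeEdges V) p (fun A => ¬ SmallVerticesFar A D)
      ≤ ∑ k ∈ range 4, (Fintype.card V) ^ (k + 2) *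
        (p ^ (k + 1) * (8 ^ (2 * D) * Real.exp (-(7 / 8 * p * (2 * Fintype.card V - 7))))) := by
  refine (binomialProb_le_sum hp (range 4) fun A _ hA => ?_).trans (sum_le_sum fun k hk =>
    binomialProb_exists_path_card_neighbors_lt_le hp D (Nat.le_of_lt_succ (mem_range.1 hk)))
  unfold SmallVerticesFar at hA
  push Not at hA
  obtain ⟨x, y, t, ht, hnodup, hpath, hx, hy⟩ := hA
  exact ⟨t.length, mem_range.2 (by omega), x, y, t, rfl, hnodup, hpath, hx, hy⟩

lemma binomialProb_mul_card_le_card_sym2_le (hp : p ∈ Set.Icc (0 : ℝ) 1) (hz : 1 ≤ z)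
    {w : ℕ} (hw : p * z * w ≤ c) (q : ℕ) {W : Finset V} (hWw : #W ≤ w) :
    binomialProb (completeEdges V) p (fun A => q * #W ≤ #{e ∈ A | e ∈ W.sym2})
      ≤ (Real.exp c / z ^ q) ^ #W := by
  have hp₀ := hp.1
  set B : Finset (Sym2 V) := {e ∈ completeEdges V | e ∈ W.sym2}
  have hB : #B ≤ #W * #W := by
    have hsym : #B ≤ #W.sym2 := card_le_card fun e he => (mem_filter.1 he).2
    rw [card_sym2, Nat.choose_two_right, Nat.add_sub_cancel] at hsym
    obtain h | h := Nat.eq_zero_or_pos #W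
    · simpa [h] using hsym
    · exact hsym.trans (Nat.div_le_of_le_mul (by nlinarith))
  have hexp : (z - 1) * p * #B ≤ #W * c :=
    calc (z - 1) * p * #B ≤ p * z * #B := by
          rw [mul_comm p z]
          gcongr
          linarith
      _ ≤ p * z * (#W * #W : ℕ) := by gcongr
      _ = #W * (p * z * #W) := by
          push_cast
          ring
      _ ≤ #W * c := by
          gcongr
          exact le_trans (by gcongr) hw
  have htail := pow_mul_binomialProb_le_card_inter hp (filter_subset _ _ : B ⊆ _) hz (q * #W)
  rw [div_pow, ← pow_mul, ← Real.exp_nat_mul, le_div_iff₀' (by positivity)]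
  refine le_trans ?_ (htail.trans (Real.exp_le_exp.2 hexp))
  refine mul_le_mul_of_nonneg_left (binomialProb_mono hp fun A hA hW => ?_) (by positivity)
  rwa [inter_filter, inter_eq_left.2 hA]

lemma binomialProb_not_isLocallySparse_le (hp : p ∈ Set.Icc (0 : ℝ) 1) (hz : 1 ≤ z) {w : ℕ}
    (hw : p * z * w ≤ c) (q : ℕ) :
    binomialProb (completeEdges V) p (fun A => ¬ IsLocallySparse A w q)
      ≤ (1 + Real.exp c / z ^ q) ^ Fintype.card V - 1 := by
  set x := Real.exp c / z ^ q
  have hsum : ∑ W : Finset V, x ^ #W = (1 + x) ^ Fintype.card V := by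
    simpa [add_comm] using sum_pow_mul_eq_add_pow x 1 (univ : Finset V)
  calc binomialProb (completeEdges V) p (fun A => ¬ IsLocallySparse A w q)
      ≤ ∑ W : Finset V with W.Nonempty ∧ #W ≤ w,
          binomialProb (completeEdges V) p (fun A => q * #W ≤ #{e ∈ A | e ∈ W.sym2}) := by
        refine binomialProb_le_sum hp _ fun A _ hA => ?_
        unfold IsLocallySparse at hA
        push Not at hA
        obtain ⟨W, hne, hWw, hW⟩ := hA
        exact ⟨W, by simp [hne, hWw], hW⟩
    _ ≤ ∑ W : Finset V with W.Nonempty ∧ #W ≤ w, x ^ #W := sum_le_sum fun W hW =>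
        binomialProb_mul_card_le_card_sym2_le hp hz hw q (mem_filter.1 hW).2.2
    _ ≤ ∑ W ∈ univ.erase (∅ : Finset V), x ^ #W := by
        refine sum_le_sum_of_subset_of_nonneg (fun W hW => ?_) fun _ _ _ => by positivity
        exact mem_erase.2 ⟨(mem_filter.1 hW).2.1.ne_empty, mem_univ W⟩
    _ = (1 + x) ^ Fintype.card V - 1 := by
        rw [← hsum, ← add_sum_erase univ _ (mem_univ (∅ : Finset V))]
        simp

lemma mul_binomialProb_lt_card_poorlyAttached_le (hp : p ∈ Set.Icc (0 : ℝ) 1) (R : Finset V)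
    (D : ℕ) (c : ℝ) :
    c * binomialProb (completeEdges V) p (fun A => ¬ (#(poorlyAttached A R D) : ℝ) ≤ c)
      ≤ Fintype.card V * (2 ^ D * Real.exp (-(p * (#R - 1) / 2))) := by
  simp only [not_le]
  refine (mul_binomialProb_lt_le_binomialExp hp fun A _ => Nat.cast_nonneg _).trans ?_
  refine (binomialExp_card_filter univ fun v A => #(neighbors A v ∩ R) < D).trans_le
    ((sum_le_card_nsmul _ _ _ fun v _ => ?_).trans_eq (nsmul_eq_mul _ _))
  have htail := pow_mul_binomialProb_card_inter_le (z := 1 / 2) hp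
    (starEdges_subset_completeEdges v R) (by norm_num) (by norm_num) D
  rw [one_div, inv_pow, inv_mul_le_iff₀ (by positivity)] at htail
  refine (binomialProb_mono hp fun A _ hv => ?_).trans (htail.trans ?_)
  · exact (card_inter_starEdges_le A v R).trans hv.le
  · have hcard : (#R : ℝ) ≤ #(starEdges v R) + 1 := by
      exact_mod_cast card_le_card_starEdges_add_one v R
    have hp₀ := hp.1
    refine mul_le_mul_of_nonneg_left (Real.exp_le_exp.2 ?_) (by positivity)
    nlinarith

lemma mul_self_le_card_edgesBetween_completeEdges {P Q : Finset V} (hPQ : Disjoint P Q) {g : ℕ}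
    (hP : g ≤ #P) (hQ : g ≤ #Q) : g * g ≤ #(edgesBetween (completeEdges V) P Q) := by
  refine (Nat.mul_le_mul hP hQ).trans ?_
  rw [← card_product]
  refine card_le_card_of_injOn (fun e => s(e.1, e.2)) ?_ ?_
  · rintro ⟨x, y⟩ hxy
    obtain ⟨hx, hy⟩ := mem_product.1 hxy
    have hne : x ≠ y := fun h => Finset.disjoint_left.1 hPQ hx (h ▸ hy)
    exact mem_edgesBetween.2 ⟨mk_mem_completeEdges.2 hne, x, hx, y, hy, rfl⟩
  · rintro ⟨x, y⟩ hxy ⟨x', y'⟩ hxy' h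
    rcases Sym2.eq_iff.1 h with ⟨hx, hy⟩ | ⟨hx, -⟩
    · exact Prod.ext hx hy
    · exact absurd (hx ▸ (mem_product.1 hxy').2)
        (Finset.disjoint_left.1 hPQ (mem_product.1 hxy).1)

lemma binomialProb_not_isDenseBetween_le (hp : p ∈ Set.Icc (0 : ℝ) 1) (g d : ℕ) :
    binomialProb (completeEdges V) p (fun A => ¬ IsDenseBetween A g d)
      ≤ 4 ^ Fintype.card V * (2 ^ d * Real.exp (-(p * (g * g) / 2))) := by
  have hp₀ := hp.1
  refine (binomialProb_le_card_mul hp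
    ({e | Disjoint e.1 e.2 ∧ g ≤ #e.1 ∧ g ≤ #e.2} : Finset (Finset V × Finset V))
    (Q' := fun e A => #(A ∩ edgesBetween (completeEdges V) e.1 e.2) ≤ d)
    (c := 2 ^ d * Real.exp (-(p * (g * g) / 2))) ?_ ?_).trans ?_
  · intro A hA hdense
    unfold IsDenseBetween at hdense
    push Not at hdense
    obtain ⟨P, Q, hPQ, hP, hQ, hd⟩ := hdense
    refine ⟨(P, Q), by simp [hPQ, hP, hQ], ?_⟩
    rwa [edgesBetween, inter_filter, inter_eq_left.2 hA]
  · rintro ⟨P, Q⟩ he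
    obtain ⟨hPQ, hP, hQ⟩ := (mem_filter.1 he).2
    have hcard : (g * g : ℝ) ≤ #(edgesBetween (completeEdges V) P Q) := by
      exact_mod_cast mul_self_le_card_edgesBetween_completeEdges hPQ hP hQ
    have htail := pow_mul_binomialProb_card_inter_le (z := 1 / 2)
      (B := edgesBetween (completeEdges V) P Q) hp (filter_subset _ _) (by norm_num)
      (by norm_num) d
    rw [one_div, inv_pow, inv_mul_le_iff₀ (by positivity)] at htail
    refine htail.trans (mul_le_mul_of_nonneg_left (Real.exp_le_exp.2 ?_) (by positivity))
    nlinarith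
  · gcongr
    have hcard := card_le_univ
      ({e | Disjoint e.1 e.2 ∧ g ≤ #e.1 ∧ g ≤ #e.2} : Finset (Finset V × Finset V))
    rw [Fintype.card_prod, Fintype.card_finset, ← mul_pow] at hcard
    exact_mod_cast hcard

lemma two_pow_mul_binomialProb_le_card_le (hp : p ∈ Set.Icc (0 : ℝ) 1) (d : ℕ) :
    2 ^ d * binomialProb (completeEdges V) p (fun A => d ≤ #A)
      ≤ Real.exp (p * (Fintype.card V) ^ 2 / 2) := by
  have htail := pow_mul_binomialProb_le_card_inter hp Subset.rfl one_le_two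
    (E := completeEdges V) d
  refine le_trans ?_ (htail.trans (Real.exp_le_exp.2 ?_))
  · refine mul_le_mul_of_nonneg_left (binomialProb_mono hp fun A hA hd => ?_) (by positivity)
    rwa [inter_eq_left.2 hA]
  · nlinarith [card_completeEdges_le V, hp.1]

lemma mul_binomialProb_lt_shortCycleCount_le (hp : p ∈ Set.Icc (0 : ℝ) 1) (K : ℕ) (c : ℝ) :
    c * binomialProb (completeEdges V) p (fun A => ¬ (shortCycleCount K A : ℝ) ≤ c)
      ≤ ∑ k ∈ Icc 3 K, (Fintype.card V * p) ^ k := by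
  have hp₀ := hp.1
  simp only [not_le]
  refine (mul_binomialProb_lt_le_binomialExp hp fun A _ => Nat.cast_nonneg _).trans ?_
  simp only [shortCycleCount, Nat.cast_sum, binomialExp_sum, binomialExp_card_filter]
  refine sum_le_sum fun k hk => ?_
  have hcycle : ∀ t : List.Vector V k, binomialProb (completeEdges V) p
      (fun A => t.toList.Nodup ∧ ∀ e ∈ cycleEdges t.toList, e ∈ A) ≤ p ^ k := by
    intro t
    have hlen : 3 ≤ t.toList.length := by
      rw [t.toList_length]
      exact (mem_Icc.1 hk).1
    by_cases ht : t.toList.Nodup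
    · have hcard : #(cycleEdges t.toList).toFinset = k := by
        rw [List.toFinset_card_of_nodup (nodup_cycleEdges ht hlen), length_cycleEdges,
          t.toList_length]
      have hsub := binomialProb_subset_le hp (cycleEdges_subset_completeEdges ht (by omega))
      rw [hcard] at hsub
      exact (binomialProb_mono hp fun A _ hA e he => hA.2 e (List.mem_toFinset.1 he)).trans hsub
    · simpa [ht, binomialProb, binomialExp] using pow_nonneg hp₀ k
  refine (sum_le_card_nsmul _ _ _ fun t _ => hcycle t).trans_eq ?_
  rw [card_univ, card_vector, nsmul_eq_mul, mul_pow, Nat.cast_pow]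

lemma closingEdges_subset_completeEdges {l : List V} (hl : l.Nodup) (hlen : 2 ≤ l.length)
    (T : Finset (Sym2 V)) (Z : Finset V) : closingEdges l T Z ⊆ completeEdges V := by
  intro e he
  induction e with | _ x y
  exact mk_mem_completeEdges.2 (ne_of_mk_mem_closingEdges hl hlen he)

lemma binomialProb_disjoint_closingEdges_le (hp₀ : 0 < p) (hp₁ : p ≤ 1) (hz₀ : 0 < z)
    (hz₁ : z ≤ 1) (hV : 2 ≤ Fintype.card V) (M m b : ℕ) (Z : Finset V) {l : List V}
    (hl : IsEnumeration l) :
    binomialProb (completeEdges V) p (fun A => ∃ T ⊆ A, #T ≤ M ∧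
        #((pathEdges l).toFinset \ T) ≤ m ∧ b ≤ #(closingEdges l T Z) ∧
        Disjoint A (closingEdges l T Z))
      ≤ Real.exp (-p * b) / (z ^ M * p ^ m) * ((2 * p) ^ (Fintype.card V - 1) *
        Real.exp (p * z * (Fintype.card V) ^ 2 / 2)) := by
  have hp : p ∈ Set.Icc (0 : ℝ) 1 := ⟨hp₀.le, hp₁⟩
  set E := completeEdges V
  set F := (pathEdges l).toFinset
  set C := Real.exp (-p * b) / (z ^ M * p ^ m)
  have hF : F ⊆ E := pathEdges_subset_completeEdges hl.nodup
  have hFcard : #F = Fintype.card V - 1 := by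
    rw [List.toFinset_card_of_nodup (nodup_pathEdges hl.nodup), length_pathEdges, hl.length_eq]
  set s : Finset (Finset (Sym2 V)) := {T ∈ E.powerset | #T ≤ M ∧ #(F \ T) ≤ m ∧
    b ≤ #(closingEdges l T Z) ∧ Disjoint T (closingEdges l T Z)}
  have hT : ∀ T ∈ s, binomialProb E p (fun A => T ⊆ A ∧ Disjoint A (closingEdges l T Z))
      ≤ C * ((p * z) ^ #T * p ^ #(F \ T)) := by
    intro T hTs
    obtain ⟨hTE, hTM, hm, hb, hdisj⟩ := mem_filter.1 hTs
    exact binomialProb_subset_disjoint_le_of_card_le hp₀ hp₁ hz₀ hz₁ (mem_powerset.1 hTE)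
      (closingEdges_subset_completeEdges hl.nodup (hl.length_eq ▸ hV) T Z) hdisj hTM hm hb
  calc _ ≤ ∑ T ∈ s, C * ((p * z) ^ #T * p ^ #(F \ T)) := by
        refine (binomialProb_le_sum hp s ?_).trans (sum_le_sum hT)
        rintro A hA ⟨T, hTA, hTM, hm, hb, hdisj⟩
        exact ⟨T, mem_filter.2 ⟨mem_powerset.2 (hTA.trans hA), hTM, hm, hb,
          hdisj.mono_left hTA⟩, hTA, hdisj⟩
    _ ≤ ∑ T ∈ E.powerset, C * ((p * z) ^ #T * p ^ #(F \ T)) :=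
        sum_le_sum_of_subset_of_nonneg (filter_subset _ _) fun _ _ _ => by positivity
    _ ≤ C * ((2 * p) ^ #F * Real.exp (p * z * #E)) := by
        rw [← mul_sum]
        refine mul_le_mul_of_nonneg_left ?_ (by positivity)
        exact sum_powerset_pow_mul_pow_card_sdiff_le hp.1 hz₀.le hz₁ hF
    _ ≤ _ := by
        rw [hFcard]
        have hE := mul_le_mul_of_nonneg_left (card_completeEdges_le V) (mul_pos hp₀ hz₀).le
        refine mul_le_mul_of_nonneg_left (mul_le_mul_of_nonneg_left
          (Real.exp_le_exp.2 (hE.trans_eq (by ring))) (by positivity)) (by positivity)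

lemma binomialProb_not_hasBoosters_le (hp₀ : 0 < p) (hp₁ : p ≤ 1) (hz₀ : 0 < z) (hz₁ : z ≤ 1)
    (hV : 2 ≤ Fintype.card V) (M m b : ℕ) :
    binomialProb (completeEdges V) p (fun A => ¬ HasBoosters A M m b)
      ≤ 2 ^ Fintype.card V * (Fintype.card V) ^ Fintype.card V *
        (Real.exp (-p * b) / (z ^ M * p ^ m) * ((2 * p) ^ (Fintype.card V - 1) *
          Real.exp (p * z * (Fintype.card V) ^ 2 / 2))) := by
  classical
  set n := Fintype.card V
  refine (binomialProb_le_card_mul ⟨hp₀.le, hp₁⟩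
    ({e | IsEnumeration e.2.toList} : Finset (Finset V × List.Vector V n)) ?_ fun e he =>
    binomialProb_disjoint_closingEdges_le hp₀ hp₁ hz₀ hz₁ hV M m b e.1
      (mem_filter.1 he).2).trans ?_
  · intro A _ hA
    unfold HasBoosters at hA
    push Not at hA
    obtain ⟨Z, l, hl, T, hTA, hTM, hm, hb, hnot⟩ := hA
    refine ⟨(Z, ⟨l, hl.length_eq⟩), mem_filter.2 ⟨mem_univ _, hl⟩, T, hTA, hTM, hm, hb, ?_⟩
    exact Finset.disjoint_right.2 hnot
  · gcongr
    have hcard := card_le_univ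
      ({e | IsEnumeration e.2.toList} : Finset (Finset V × List.Vector V n))
    rw [Fintype.card_prod, Fintype.card_finset, card_vector] at hcard
    exact_mod_cast hcard

end FailureProbability

/-! ### Random graphs slightly above the Hamiltonicity threshold -/

section Asymptotics

lemma tendsto_log_natCast_atTop : Tendsto (fun n : ℕ => Real.log n) atTop atTop :=
  Real.tendsto_log_atTop.comp tendsto_natCast_atTop_atTop

lemma eventually_le_log_natCast (c : ℝ) : ∀ᶠ n : ℕ in atTop, c ≤ Real.log n :=
  tendsto_log_natCast_atTop.eventually_ge_atTop c

lemma eventually_le_natCast (c : ℝ) : ∀ᶠ n : ℕ in atTop, c ≤ (n : ℝ) :=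
  tendsto_natCast_atTop_atTop.eventually_ge_atTop c

lemma tendsto_exp_neg_natCast : Tendsto (fun n : ℕ => Real.exp (-(n : ℝ))) atTop (𝓝 0) :=
  Real.tendsto_exp_neg_atTop_nhds_zero.comp tendsto_natCast_atTop_atTop

lemma tendsto_const_mul_log_pow_mul_exp_neg (C : ℝ) (k : ℕ) {c : ℝ} (hc : 0 < c) :
    Tendsto (fun n : ℕ => C * (Real.log n ^ k * Real.exp (-(c * Real.log n)))) atTop (𝓝 0) := by
  have hlim := ((Real.tendsto_pow_mul_exp_neg_atTop_nhds_zero k).comp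
    (tendsto_log_natCast_atTop.const_mul_atTop hc)).const_mul (C * (1 / c) ^ k)
  rw [mul_zero] at hlim
  refine hlim.congr fun n => ?_
  simp only [Function.comp_apply, mul_pow, one_div, inv_pow]
  field_simp

lemma eventually_log_log_natCast_le {c : ℝ} (hc : 0 < c) :
    ∀ᶠ n : ℕ in atTop, Real.log (Real.log n) ≤ c * Real.log n := by
  filter_upwards [tendsto_log_natCast_atTop.eventually (Real.isLittleO_log_id_atTop.bound hc),
    eventually_le_log_natCast 0] with n hlog hn
  simpa [abs_of_nonneg hn] using (le_abs_self _).trans hlog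

lemma eventually_add_log_mul_log_natCast_le {a c C : ℝ} (ha : 0 < a) (hc : 0 < c) :
    ∀ᶠ n : ℕ in atTop, C + Real.log (a * Real.log n) ≤ c * Real.log n := by
  filter_upwards [eventually_log_log_natCast_le (half_pos hc), eventually_le_log_natCast 1,
    eventually_le_log_natCast ((C + Real.log a) / (c / 2))] with n hloglog hL hC
  rw [div_le_iff₀ (half_pos hc)] at hC
  rw [Real.log_mul ha.ne' (by linarith)]
  linarith

lemma two_pow_le_exp (n : ℕ) : (2 : ℝ) ^ n ≤ Real.exp n := by
  rw [← Real.log_le_iff_le_exp (by positivity), Real.log_pow]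
  nlinarith [Real.log_two_lt_d9, Nat.cast_nonneg (α := ℝ) n]

lemma exp_half_le_two_pow (n : ℕ) : Real.exp (n / 2) ≤ 2 ^ n := by
  rw [← Real.le_log_iff_exp_le (by positivity), Real.log_pow]
  nlinarith [Real.log_two_gt_d9, Nat.cast_nonneg (α := ℝ) n]

lemma pow_mul_two_mul_pow_le_exp {n : ℕ} (hn : 1 ≤ n) {x L : ℝ} (hx : 0 ≤ x) (hL : 1 ≤ L)
    (hle : n * x ≤ 2 * L) :
    (n : ℝ) ^ n * (2 * x) ^ (n - 1) ≤ Real.exp (n + n * Real.log (4 * L)) := by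
  obtain ⟨k, rfl⟩ := Nat.exists_eq_add_of_le' hn
  rw [Nat.add_sub_cancel, Real.exp_add, Real.exp_nat_mul, Real.exp_log (by linarith)]
  set N : ℝ := ((k + 1 : ℕ) : ℝ)
  calc N ^ (k + 1) * (2 * x) ^ k = N * (2 * (N * x)) ^ k := by ring
    _ ≤ Real.exp N * (4 * L) ^ (k + 1) := by
        gcongr
        · linarith [Real.add_one_le_exp N]
        · exact (pow_le_pow_left₀ (by positivity) (by linarith) k).trans
            (pow_le_pow_right₀ (by linarith) k.le_succ)

lemma exp_div_pow_mul_pow_le_exp {x z β lam mu : ℝ} {M m : ℕ} (hx : 0 < x) (hz : 0 < z)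
    (hM : M * -Real.log z ≤ lam) (hm : m * -Real.log x ≤ mu) :
    Real.exp β / (z ^ M * x ^ m) ≤ Real.exp (β + lam + mu) := by
  rw [div_le_iff₀ (by positivity)]
  have hpow : z ^ M * x ^ m = Real.exp (M * Real.log z + m * Real.log x) := by
    rw [Real.exp_add, Real.exp_nat_mul, Real.exp_nat_mul, Real.exp_log hx, Real.exp_log hz]
  rw [hpow, ← Real.exp_add]
  exact Real.exp_le_exp.2 (by linarith)

/-- The edge probabilities to which the theorem is reduced: those above the Hamiltonicity threshold
by a diverging amount, but by at most a factor of about two. -/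
structure IsNearThreshold (p : ℕ → ℝ) : Prop where
  mem_Icc (n : ℕ) : p n ∈ Set.Icc (0 : ℝ) 1
  tendsto_excess :
    Tendsto (fun n : ℕ => n * p n - Real.log n - Real.log (Real.log n)) atTop atTop
  le_two_mul_log : ∀ᶠ n : ℕ in atTop, n * p n ≤ 2 * Real.log n

lemma isNearThreshold_min {p : ℕ → ℝ} (hp : ∀ n, 0 ≤ p n ∧ p n ≤ 1)
    (hexcess : Tendsto (fun n : ℕ => n * p n - Real.log n - Real.log (Real.log n)) atTop atTop) :
    IsNearThreshold fun n => min (p n) (2 * Real.log n / n) := by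
  have hmul : ∀ᶠ n : ℕ in atTop,
      n * min (p n) (2 * Real.log n / n) = min (n * p n) (2 * Real.log n) := by
    filter_upwards [eventually_le_natCast 1] with n hn
    rw [mul_min_of_nonneg _ _ (by linarith), mul_div_cancel₀ _ (by linarith)]
  refine ⟨fun n => ⟨le_min (hp n).1 ?_, (min_le_left _ _).trans (hp n).2⟩, ?_, ?_⟩
  · have := Real.log_natCast_nonneg n
    positivity
  · refine tendsto_atTop.2 fun C => ?_
    filter_upwards [hmul, hexcess.eventually_ge_atTop C,
      eventually_log_log_natCast_le one_half_pos, eventually_le_log_natCast (2 * C)]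
      with n hmul hC hloglog hlog
    rw [hmul]
    rcases min_choice (n * p n) (2 * Real.log n) with h | h <;> rw [h] <;> linarith
  · exact hmul.mono fun n hn => hn.trans_le (min_le_right _ _)

namespace IsNearThreshold

variable {p : ℕ → ℝ} {η γ δ κ : ℝ} {D q w g : ℕ → ℕ}

lemma log_le (hp : IsNearThreshold p) : ∀ᶠ n : ℕ in atTop, Real.log n ≤ n * p n := by
  filter_upwards [hp.tendsto_excess.eventually_ge_atTop 0, eventually_le_log_natCast 1] with n hn hL
  linarith [Real.log_nonneg hL]

lemma eventually_pos (hp : IsNearThreshold p) : ∀ᶠ n : ℕ in atTop, 0 < p n := by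
  filter_upwards [hp.log_le, eventually_le_log_natCast 1] with n hge hL
  refine (hp.mem_Icc n).1.lt_of_ne fun h => ?_
  rw [← h] at hge
  linarith

lemma neg_log_le (hp : IsNearThreshold p) : ∀ᶠ n : ℕ in atTop, -Real.log (p n) ≤ Real.log n := by
  filter_upwards [hp.log_le, hp.eventually_pos, eventually_le_log_natCast 1] with n hge hpos hL
  rw [← Real.log_inv]
  refine Real.log_le_log (by positivity) ?_
  rw [inv_le_iff_one_le_mul₀ hpos]
  linarith

-- The expected number of vertices of degree at most one is of order `exp (-excess)`.
lemma withHighProb_two_le_card_neighbors (hp : IsNearThreshold p) :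
    WithHighProb p fun _ A => ∀ v, 2 ≤ #(neighbors A v) := by
  refine .of_le hp.mem_Icc (b := fun n : ℕ => 3 * Real.exp 2 *
    Real.exp (-(n * p n - Real.log n - Real.log (Real.log n)))) ?_ ?_
  · filter_upwards [hp.le_two_mul_log, eventually_le_log_natCast 1, eventually_le_natCast 2]
      with n hle hL hn
    obtain ⟨hp₀, hp₁⟩ := hp.mem_Icc n
    refine (binomialProb_not_two_le_card_neighbors_le (hp.mem_Icc n)).trans ?_
    rw [Fintype.card_fin]
    set L := Real.log n
    set W := Real.exp (-(n * p n))
    have hexp {j : ℝ} (hj : j ≤ 2) : Real.exp (-p n * (n - j)) ≤ Real.exp 2 * W := by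
      rw [← Real.exp_add]
      exact Real.exp_le_exp.2 (by nlinarith)
    have hexcess : Real.exp (-(n * p n - L - Real.log L)) = L * n * W := by
      rw [show -(n * p n - L - Real.log L) = Real.log L + L + -(n * p n) by ring, Real.exp_add,
        Real.exp_add, Real.exp_log (by linarith), Real.exp_log (by linarith)]
    calc n * Real.exp (-p n * (n - 1)) + n ^ 2 * (p n * Real.exp (-p n * (n - 2)))
        ≤ n * (Real.exp 2 * W) + n ^ 2 * (p n * (Real.exp 2 * W)) := by
          gcongr
          exacts [hexp one_le_two, hexp le_rfl]
      _ = (1 + n * p n) * (n * (Real.exp 2 * W)) := by ring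
      _ ≤ 3 * L * (n * (Real.exp 2 * W)) :=
          mul_le_mul_of_nonneg_right (by linarith) (by positivity)
      _ = 3 * Real.exp 2 * Real.exp (-(n * p n - L - Real.log L)) := by rw [hexcess]; ring
  · simpa using (Real.tendsto_exp_neg_atTop_nhds_zero.comp hp.tendsto_excess).const_mul
      (3 * Real.exp 2)

lemma withHighProb_smallVerticesFar (hp : IsNearThreshold p)
    (hD : ∀ᶠ n : ℕ in atTop, D n ≤ 9 / 200 * Real.log n) :
    WithHighProb p fun n A => SmallVerticesFar A (D n) := by
  refine .of_le hp.mem_Icc ?_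
    (tendsto_const_mul_log_pow_mul_exp_neg (64 * Real.exp 7) 4 (c := 1 / 4) (by norm_num))
  filter_upwards [hp.le_two_mul_log, hp.log_le, eventually_le_log_natCast 1,
    eventually_le_natCast 2, hD] with n hle hge hL hn hD
  obtain ⟨hp₀, hp₁⟩ := hp.mem_Icc n
  refine (binomialProb_not_smallVerticesFar_le (hp.mem_Icc n) (D n)).trans ?_
  rw [Fintype.card_fin]
  set L := Real.log n
  have hpow (k : ℕ) (hk : k ∈ range 4) : (n : ℝ) ^ (k + 2) * p n ^ (k + 1) ≤ (2 * L) ^ 4 * n := by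
    calc (n : ℝ) ^ (k + 2) * p n ^ (k + 1) = (n * p n) ^ (k + 1) * n := by ring
      _ ≤ (2 * L) ^ 4 * n := by
          gcongr
          exact (pow_le_pow_left₀ (by positivity) hle _).trans
            (pow_le_pow_right₀ (by linarith) (mem_range.1 hk))
  have hexp : n * ((8 : ℝ) ^ (2 * D n) * Real.exp (-(7 / 8 * p n * (2 * n - 7))))
      ≤ Real.exp (7 - 1 / 4 * L) := by
    have h8 : (8 : ℝ) ^ (2 * D n) ≤ Real.exp (6 * D n) := by
      rw [show (8 : ℝ) = 2 ^ 3 by norm_num, ← pow_mul]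
      refine (two_pow_le_exp _).trans_eq ?_
      push_cast
      ring_nf
    calc n * ((8 : ℝ) ^ (2 * D n) * Real.exp (-(7 / 8 * p n * (2 * n - 7))))
        ≤ Real.exp L * (Real.exp (6 * D n) * Real.exp (-(7 / 8 * p n * (2 * n - 7)))) := by
          gcongr
          rw [Real.exp_log (by linarith)]
      _ ≤ Real.exp (7 - 1 / 4 * L) := by
          rw [← Real.exp_add, ← Real.exp_add]
          exact Real.exp_le_exp.2 (by nlinarith)
  calc ∑ k ∈ range 4, (n : ℝ) ^ (k + 2) * (p n ^ (k + 1) *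
        (8 ^ (2 * D n) * Real.exp (-(7 / 8 * p n * (2 * n - 7)))))
      ≤ ∑ k ∈ range 4, (2 * L) ^ 4 * Real.exp (7 - 1 / 4 * L) := by
        refine sum_le_sum fun k hk => ?_
        rw [← mul_assoc]
        refine (mul_le_mul_of_nonneg_right (hpow k hk) (by positivity)).trans ?_
        rw [mul_assoc]
        gcongr
    _ = 64 * Real.exp 7 * (L ^ 4 * Real.exp (-(1 / 4 * L))) := by
        rw [sum_const, card_range, sub_eq_add_neg, Real.exp_add, nsmul_eq_mul]
        ring

lemma withHighProb_isLocallySparse (hp : IsNearThreshold p) (hη : 0 < η)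
    (hq : ∀ᶠ n : ℕ in atTop, η * Real.log n ≤ q n)
    (hw : ∀ᶠ n : ℕ in atTop, Real.exp (4 / η) * w n ≤ n) :
    WithHighProb p fun n A => IsLocallySparse A (w n) (q n) := by
  refine .of_le hp.mem_Icc (b := fun n : ℕ => Real.exp (Real.exp (-Real.log n)) - 1) ?_ ?_
  · filter_upwards [hp.le_two_mul_log, eventually_le_natCast 1, hq, hw] with n hle hn hq hw
    have hp₀ := (hp.mem_Icc n).1
    set L := Real.log n
    refine (binomialProb_not_isLocallySparse_le (hp.mem_Icc n) (z := Real.exp (4 / η))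
      (c := 2 * L) (Real.one_le_exp (by positivity)) ?_ (q n)).trans ?_
    · linarith [mul_le_mul_of_nonneg_left hw hp₀]
    have hratio : Real.exp (2 * L) / Real.exp (4 / η) ^ q n ≤ Real.exp (-(2 * L)) := by
      rw [← Real.exp_nat_mul, ← Real.exp_sub]
      have : 4 * L ≤ q n * (4 / η) := by
        rw [mul_div_assoc', le_div_iff₀ hη]
        linarith
      exact Real.exp_le_exp.2 (by linarith)
    rw [Fintype.card_fin]
    refine sub_le_sub_right ?_ 1
    calc (1 + Real.exp (2 * L) / Real.exp (4 / η) ^ q n) ^ n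
        ≤ (Real.exp (Real.exp (-(2 * L)))) ^ n :=
          pow_le_pow_left₀ (by positivity)
            (by linarith [Real.add_one_le_exp (Real.exp (-(2 * L)))]) n
      _ = Real.exp (Real.exp L * Real.exp (-(2 * L))) := by
          rw [← Real.exp_nat_mul, Real.exp_log (by linarith)]
      _ = Real.exp (Real.exp (-L)) := by
          rw [← Real.exp_add]
          ring_nf
  · have hlim : Tendsto (fun n : ℕ => Real.exp (-Real.log n)) atTop (𝓝 0) :=
      Real.tendsto_exp_neg_atTop_nhds_zero.comp tendsto_log_natCast_atTop
    simpa using ((Real.continuous_exp.tendsto 0).comp hlim).sub_const 1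

lemma withHighProb_mul_card_poorlyAttached_le (hp : IsNearThreshold p) (hδ₀ : 0 < δ) (hδ₁ : δ ≤ 1)
    (hD₀ : ∀ n, 0 < D n) (hD : ∀ᶠ n : ℕ in atTop, D n ≤ 9 / 40 * δ * Real.log n)
    (R : ∀ n : ℕ, Finset (Fin n)) (hR : ∀ n : ℕ, δ * n - 1 ≤ #(R n)) :
    WithHighProb p fun n A => (D n * #(poorlyAttached A (R n) (D n)) : ℝ) ≤ δ * n := by
  refine .of_le hp.mem_Icc ?_
    (tendsto_const_mul_log_pow_mul_exp_neg (Real.exp 1 / δ) 1 (c := δ / 4) (by positivity))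
  filter_upwards [hp.log_le, eventually_le_log_natCast 1, eventually_le_natCast 2, hD]
    with n hge hL hn hD
  obtain ⟨hp₀, hp₁⟩ := hp.mem_Icc n
  have hR := hR n
  have hDn : (0 : ℝ) < D n := Nat.cast_pos.2 (hD₀ n)
  have hbound := mul_binomialProb_lt_card_poorlyAttached_le (hp.mem_Icc n) (R n) (D n)
    (δ * n / D n)
  simp only [le_div_iff₀' hDn, Fintype.card_fin] at hbound
  set L := Real.log n
  have hexp : Real.exp (-(p n * (#(R n) - 1) / 2)) ≤ Real.exp (1 - δ / 2 * L) :=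
    Real.exp_le_exp.2 (by nlinarith [mul_le_mul_of_nonneg_left hR hp₀,
      mul_le_mul_of_nonneg_left hge hδ₀.le])
  rw [div_mul_eq_mul_div, div_le_iff₀ hDn, mul_assoc, ← le_div_iff₀' hδ₀] at hbound
  refine le_of_mul_le_mul_left (hbound.trans ?_) (by linarith : (0 : ℝ) < n)
  calc (n * (2 ^ D n * Real.exp (-(p n * (#(R n) - 1) / 2))) * D n / δ : ℝ)
      ≤ n * (Real.exp (D n) * Real.exp (1 - δ / 2 * L)) * L / δ := by
        have hDL : D n ≤ L := by nlinarith
        have := two_pow_le_exp (D n)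
        gcongr
    _ ≤ n * (Real.exp 1 * Real.exp (-(δ / 4 * L))) * L / δ := by
        rw [← Real.exp_add, ← Real.exp_add]
        have : Real.exp (D n + (1 - δ / 2 * L)) ≤ Real.exp (1 + -(δ / 4 * L)) :=
          Real.exp_le_exp.2 (by nlinarith)
        gcongr
    _ = n * (Real.exp 1 / δ * (L ^ 1 * Real.exp (-(δ / 4 * L)))) := by ring

lemma withHighProb_isDenseBetween (hp : IsNearThreshold p) (hγ : 0 < γ)
    (hg : ∀ n : ℕ, γ * n ≤ g n) :
    WithHighProb p fun n A => IsDenseBetween A (g n) ⌊γ ^ 2 / 4 * (n * Real.log n)⌋₊ := by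
  refine .of_le hp.mem_Icc ?_ tendsto_exp_neg_natCast
  filter_upwards [hp.log_le, eventually_le_log_natCast (12 / γ ^ 2)] with n hge hL
  have hp₀ := (hp.mem_Icc n).1
  have hg := hg n
  refine (binomialProb_not_isDenseBetween_le (hp.mem_Icc n) _ _).trans ?_
  rw [Fintype.card_fin]
  set L := Real.log n
  set d := ⌊γ ^ 2 / 4 * (n * L)⌋₊
  have hL₀ : 0 ≤ L := (by positivity : 0 ≤ 12 / γ ^ 2).trans hL
  have hd : d ≤ γ ^ 2 / 4 * (n * L) := Nat.floor_le (by positivity)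
  have hpairs : γ ^ 2 * (n * L) ≤ p n * (g n * g n) := by
    calc γ ^ 2 * (n * L) ≤ γ ^ 2 * (n * (n * p n)) := by gcongr
      _ = p n * ((γ * n) * (γ * n)) := by ring
      _ ≤ p n * (g n * g n) := by gcongr
  have hlarge : 12 * (n : ℝ) ≤ γ ^ 2 * (n * L) := by
    rw [div_le_iff₀' (by positivity)] at hL
    nlinarith [Nat.cast_nonneg (α := ℝ) n]
  calc (4 : ℝ) ^ n * (2 ^ d * Real.exp (-(p n * (g n * g n) / 2)))
      = 2 ^ (2 * n) * (2 ^ d * Real.exp (-(p n * (g n * g n) / 2))) := by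
        rw [pow_mul]
        norm_num
    _ ≤ Real.exp (2 * n : ℕ) * (Real.exp d * Real.exp (-(p n * (g n * g n) / 2))) := by
        gcongr <;> exact two_pow_le_exp _
    _ ≤ Real.exp (-n) := by
        rw [← Real.exp_add, ← Real.exp_add]
        refine Real.exp_le_exp.2 ?_
        push_cast
        linarith

lemma withHighProb_card_le (hp : IsNearThreshold p) :
    WithHighProb p fun n A => (#A : ℝ) ≤ 4 * (n * Real.log n) := by
  refine .of_le hp.mem_Icc ?_ tendsto_exp_neg_natCast
  filter_upwards [hp.le_two_mul_log, eventually_le_log_natCast 1] with n hle hL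
  set L := Real.log n
  set d := ⌈4 * (n * L)⌉₊
  have hd : 4 * (n * L) ≤ d := Nat.le_ceil _
  have hmono := binomialProb_mono (E := completeEdges (Fin n)) (hp.mem_Icc n)
    (Q := fun A => ¬ (#A : ℝ) ≤ 4 * (n * L)) (Q' := fun A => d ≤ #A)
    fun A _ hA => Nat.ceil_le.2 (not_le.1 hA).le
  have hbound := two_pow_mul_binomialProb_le_card_le (V := Fin n) (hp.mem_Icc n) d
  rw [Fintype.card_fin] at hbound
  refine hmono.trans (le_of_mul_le_mul_left (hbound.trans ?_) (by positivity : (0 : ℝ) < 2 ^ d))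
  calc Real.exp (p n * n ^ 2 / 2) ≤ Real.exp (d / 2) * Real.exp (-n) := by
        rw [← Real.exp_add]
        exact Real.exp_le_exp.2 (by nlinarith [Nat.cast_nonneg (α := ℝ) n])
    _ ≤ 2 ^ d * Real.exp (-n) := by
        gcongr
        exact exp_half_le_two_pow d

lemma withHighProb_shortCycleCount_le (hp : IsNearThreshold p) (K : ℕ) (hδ : 0 < δ) :
    WithHighProb p fun n A => (shortCycleCount K A : ℝ) ≤ δ * n := by
  refine .of_le hp.mem_Icc ?_
    (tendsto_const_mul_log_pow_mul_exp_neg (K * 2 ^ K / δ) K one_pos)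
  filter_upwards [hp.le_two_mul_log, eventually_le_log_natCast 1, eventually_le_natCast 1]
    with n hle hL hn
  have hp₀ := (hp.mem_Icc n).1
  have hbound := mul_binomialProb_lt_shortCycleCount_le (V := Fin n) (hp.mem_Icc n) K (δ * n)
  rw [Fintype.card_fin] at hbound
  set L := Real.log n
  refine le_of_mul_le_mul_left (hbound.trans ?_) (by positivity : (0 : ℝ) < δ * n)
  calc ∑ k ∈ Icc 3 K, (n * p n) ^ k ≤ ∑ k ∈ Icc 3 K, (2 * L) ^ K :=
        sum_le_sum fun k hk => (pow_le_pow_left₀ (by positivity) hle k).trans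
          (pow_le_pow_right₀ (by linarith) (Finset.mem_Icc.1 hk).2)
    _ ≤ K * (2 * L) ^ K := by
        rw [sum_const, nsmul_eq_mul, Nat.card_Icc]
        gcongr
        omega
    _ = δ * n * (K * 2 ^ K / δ * (L ^ K * Real.exp (-(1 * L)))) := by
        rw [one_mul, Real.exp_neg, Real.exp_log (by linarith), mul_pow]
        field_simp

-- The union bound over the Hamilton paths costs only a factor `exp (o (n log n))`, since almost all
-- path edges have to be present, whereas all boosters are absent with probability at most
-- `exp (-κ n log n)`.
lemma withHighProb_hasBoosters (hp : IsNearThreshold p) {M m b : ℕ → ℕ} (hκ₀ : 0 < κ)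
    (hκ₁ : κ ≤ 1)
    (hM : ∀ᶠ n : ℕ in atTop, M n * Real.log (8 / κ) ≤ κ / 8 * (n * Real.log n))
    (hm : ∀ᶠ n : ℕ in atTop, m n ≤ κ / 8 * n) (hb : ∀ᶠ n : ℕ in atTop, κ * n ^ 2 ≤ b n) :
    WithHighProb p fun n A => HasBoosters A (M n) (m n) (b n) := by
  refine .of_le hp.mem_Icc ?_ tendsto_exp_neg_natCast
  filter_upwards [hp.le_two_mul_log, hp.log_le, eventually_le_natCast 2, hM, hm, hb,
    hp.eventually_pos, hp.neg_log_le, eventually_le_log_natCast 1,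
    eventually_add_log_mul_log_natCast_le (C := 3) four_pos (half_pos hκ₀)]
    with n hle hge hn hM hm hb hp₀ hlog_p hL hlog
  refine (binomialProb_not_hasBoosters_le (z := κ / 8) hp₀ (hp.mem_Icc n).2 (by positivity)
    (by linarith) (by simpa using mod_cast hn) _ _ _).trans ?_
  rw [Fintype.card_fin]
  set L := Real.log n
  have hclosing := exp_div_pow_mul_pow_le_exp (β := -p n * b n) (z := κ / 8)
    (lam := κ / 8 * (n * L)) (mu := κ / 8 * (n * L)) (M := M n) (m := m n) hp₀ (by positivity)
    (by rwa [← Real.log_inv, inv_div]) (by nlinarith [Nat.cast_nonneg (α := ℝ) (m n)])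
  have hpaths := pow_mul_two_mul_pow_le_exp (by exact_mod_cast one_le_two.trans hn) hp₀.le hL hle
  have hb' : κ * (n * L) ≤ p n * b n := by
    calc κ * (n * L) ≤ κ * (n * (n * p n)) := by gcongr
      _ = p n * (κ * n ^ 2) := by ring
      _ ≤ p n * b n := by gcongr
  calc (2 : ℝ) ^ n * n ^ n * (Real.exp (-p n * b n) / ((κ / 8) ^ M n * p n ^ m n) *
        ((2 * p n) ^ (n - 1) * Real.exp (p n * (κ / 8) * n ^ 2 / 2)))
      = 2 ^ n * (n ^ n * (2 * p n) ^ (n - 1)) *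
          (Real.exp (-p n * b n) / ((κ / 8) ^ M n * p n ^ m n)) *
          Real.exp (p n * (κ / 8) * n ^ 2 / 2) := by ring
    _ ≤ Real.exp n * Real.exp (n + n * Real.log (4 * L)) *
          Real.exp (-p n * b n + κ / 8 * (n * L) + κ / 8 * (n * L)) *
          Real.exp (p n * (κ / 8) * n ^ 2 / 2) := by
        have := two_pow_le_exp n
        gcongr
    _ ≤ Real.exp (-n) := by
        simp only [← Real.exp_add]
        refine Real.exp_le_exp.2 ?_
        nlinarith [mul_le_mul_of_nonneg_left hlog (Nat.cast_nonneg (α := ℝ) n)]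

end IsNearThreshold

end Asymptotics

/-! ### Biased Hamilton cycles -/

section BiasedHamiltonCycles

section Deterministic

variable {V ι : Type*} [DecidableEq V] [DecidableEq ι]

/-- Every colouring of the edges of `G` by `ι` admits a Hamilton cycle with at least `x` edges of
one colour. As in the main theorem, the colouring is a function on all unordered pairs. -/
def HasBiasedHamiltonCycles (ι : Type*) [DecidableEq ι] (x : ℝ) (G : SimpleGraph V) : Prop :=
  ∀ c : Sym2 V → ι, ∃ (i : ι) (v : V) (w : G.Walk v v),
    w.IsHamiltonianCycle ∧ x ≤ ((w.edges.filter fun e => c e = i).length : ℝ)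

lemma HasBiasedHamiltonCycles.mono {x y : ℝ} {G H : SimpleGraph V} (hyx : y ≤ x) (hGH : G ≤ H)
    (hG : HasBiasedHamiltonCycles ι x G) : HasBiasedHamiltonCycles ι y H := by
  intro c
  obtain ⟨i, v, w, hw, hx⟩ := hG c
  refine ⟨i, v, w.mapLe hGH, hw.map (f := SimpleGraph.Hom.ofLE hGH) Function.bijective_id, ?_⟩
  rw [SimpleGraph.Walk.edges_mapLe_eq_edges]
  exact hyx.trans hx

lemma IsPseudorandom.hasBiasedHamiltonCycles [Fintype V] [Fintype ι] {A : Finset (Sym2 V)}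
    {R : Finset V} {q g k b s K : ℕ} {ρ τ : ℝ}
    (h : IsPseudorandom A q g (Fintype.card ι * (2 * Fintype.card V))
      (Fintype.card V + (Fintype.card V * (8 * q + 3) + k)) b ρ)
    (hA : A ⊆ completeEdges V) (hV : 3 ≤ Fintype.card V) (hρ : ρ ≤ 1)
    (hk : 2 * Fintype.card V ≤ ρ * k) (hR : 3 * s + g ≤ #R) (hb : 2 * b ≤ s * s)
    (hτ₀ : 0 < τ) (hτ₁ : τ * (Fintype.card ι + 1) ≤ 1)
    (hτV : 8 * (Fintype.card ι + 1) ≤ τ * Fintype.card V)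
    (hg : 32 * 4 ^ Fintype.card ι * g ≤ τ * Fintype.card V) (hK : 4 ≤ τ * K)
    (hcycles : 20 * shortCycleCount K A ≤ τ * Fintype.card V)
    (hRτ : 20 * #R ≤ τ * Fintype.card V)
    (hpoor : 20 * ((8 * q + 3) * #(poorlyAttached A R (8 * q + 3)) : ℕ) ≤ τ * Fintype.card V) :
    HasBiasedHamiltonCycles ι ((2 / (Fintype.card ι + 1) - τ) * Fintype.card V)
      (SimpleGraph.fromEdgeSet (A : Set (Sym2 V))) := by
  intro c
  set n := Fintype.card V
  set r := Fintype.card ι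
  set x : ℝ := 2 / (r + 1) - τ / 4 with hx
  have hxr : (r + 1) * x = 2 - τ * (r + 1) / 4 := by
    rw [hx]
    field_simp
  have hn : (0 : ℝ) < n := by exact_mod_cast (by omega : 0 < n)
  have hx₀ : 0 < x := pos_of_mul_pos_right (hxr ▸ by linarith) (by positivity : (0 : ℝ) ≤ r + 1)
  have ht : x * n ≤ ⌈x * n⌉₊ := Nat.le_ceil _
  have hcard : (r + 1) * ⌈x * n⌉₊ + 4 * 4 ^ r * g ≤ 2 * n := by
    have ht' : (⌈x * n⌉₊ : ℝ) ≤ x * n + 1 := (Nat.ceil_lt_add_one (by positivity)).le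
    have hcard' : ((r + 1) * ⌈x * n⌉₊ + 4 * 4 ^ r * g : ℝ) ≤ 2 * n := by
      calc ((r + 1) * ⌈x * n⌉₊ + 4 * 4 ^ r * g : ℝ)
          ≤ (r + 1) * (x * n + 1) + τ * n / 8 := by gcongr; linarith
        _ = ((r + 1) * x) * n + (r + 1) + τ * n / 8 := by ring
        _ ≤ 2 * n := by
            rw [hxr]
            nlinarith [mul_nonneg (mul_nonneg hτ₀.le hn.le) (Nat.cast_nonneg (α := ℝ) r)]
    exact_mod_cast hcard'
  obtain ⟨i, v, w, hw, a, ha, hlen⟩ := h.exists_isHamiltonianCycle hA hV c R K hρ hk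
    (Nat.one_le_ceil_iff.2 (by positivity)) hcard hR le_rfl hb
  refine ⟨i, v, w, hw, ?_⟩
  have ha' : (a : ℝ) ≤ τ / 4 * n := by
    have : (a * K : ℝ) ≤ n := by exact_mod_cast ha
    nlinarith [mul_le_mul_of_nonneg_left hK (Nat.cast_nonneg (α := ℝ) a)]
  have hlen' : (⌈x * n⌉₊ : ℝ) ≤ (w.edges.filter fun e => c e = i).length + a +
      shortCycleCount K A + 2 * (#R + ((8 * q + 3) * #(poorlyAttached A R (8 * q + 3)) : ℕ)) := by
    exact_mod_cast hlen
  have : x * n = (2 / (r + 1) - τ) * n + 3 / 4 * (τ * n) := by ring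
  linarith

end Deterministic

section Parameters

variable {η γ δ ρ : ℝ}

lemma eventually_eight_mul_ceil_add_three_le (hη : 0 < η) :
    ∀ᶠ n : ℕ in atTop, ((8 * ⌈η * Real.log n⌉₊ + 3 : ℕ) : ℝ) ≤ 9 * η * Real.log n := by
  filter_upwards [eventually_le_log_natCast (11 / η)] with n hL
  have hL₀ : 0 ≤ Real.log n := Real.log_natCast_nonneg n
  rw [div_le_iff₀' hη] at hL
  have := Nat.ceil_lt_add_one (by positivity : 0 ≤ η * Real.log n)
  push_cast
  linarith

lemma eventually_ceil_mul_natCast_le (hγ : 0 < γ) :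
    ∀ᶠ n : ℕ in atTop, (⌈γ * n⌉₊ : ℝ) ≤ 2 * γ * n := by
  filter_upwards [eventually_le_natCast (1 / γ)] with n hn
  rw [div_le_iff₀' hγ] at hn
  linarith [Nat.ceil_lt_add_one (by positivity : 0 ≤ γ * n)]

lemma eventually_add_mul_add_ceil_le (hη : 0 < η) (hρ : 0 < ρ) :
    ∀ᶠ n : ℕ in atTop, ((n + (n * (8 * ⌈η * Real.log n⌉₊ + 3) + ⌈2 / ρ * n⌉₊) : ℕ) : ℝ)
      ≤ 10 * η * (n * Real.log n) := by
  filter_upwards [eventually_eight_mul_ceil_add_three_le hη,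
    eventually_ceil_mul_natCast_le (by positivity : 0 < 2 / ρ),
    eventually_le_log_natCast ((1 + 2 * (2 / ρ)) / η)] with n hD hk hL
  rw [div_le_iff₀' hη] at hL
  have hn : (0 : ℝ) ≤ n := n.cast_nonneg
  push_cast at hD ⊢
  nlinarith [mul_le_mul_of_nonneg_left hD hn, mul_le_mul_of_nonneg_left hL hn]

lemma eventually_sq_mul_sq_le_floor_mul_floor_div_two (hδ : 0 < δ) :
    ∀ᶠ n : ℕ in atTop, δ ^ 2 / 64 * n ^ 2 ≤ (⌊δ * n / 4⌋₊ * ⌊δ * n / 4⌋₊ / 2 : ℕ) := by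
  filter_upwards [eventually_le_natCast (100 / δ)] with n hn
  rw [div_le_iff₀' hδ] at hn
  set s := ⌊δ * n / 4⌋₊
  have hs : δ * n / 4 < s + 1 := Nat.lt_floor_add_one _
  have hhalf : (s * s : ℝ) ≤ 2 * (s * s / 2 : ℕ) + 1 := by
    exact_mod_cast (by omega : s * s ≤ 2 * (s * s / 2) + 1)
  nlinarith

lemma exists_pos_le_mul_le (c : ℝ) {a b : ℝ} (ha : 0 < a) (hb : 0 < b) :
    ∃ x, 0 < x ∧ x ≤ a ∧ c * x ≤ b := by
  obtain ⟨x, hx₀, hx⟩ := exists_pos_mul_lt hb |c|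
  refine ⟨min a x, lt_min ha hx₀, min_le_left _ _, ?_⟩
  calc c * min a x ≤ |c| * min a x := by
        gcongr
        exact le_abs_self c
    _ ≤ |c| * x := by
        gcongr
        exact min_le_right _ _
    _ ≤ b := hx.le

end Parameters

namespace IsNearThreshold

variable {p : ℕ → ℝ} {η γ δ κ θ : ℝ}

lemma withHighProb_isPseudorandom (hp : IsNearThreshold p) (r : ℕ) {q g M b : ℕ → ℕ}
    (hη : 0 < η) (hγ : 0 < γ) (hκ₀ : 0 < κ) (hκ₁ : κ ≤ 1)
    (hq : ∀ᶠ n : ℕ in atTop, η * Real.log n ≤ q n)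
    (hD : ∀ᶠ n : ℕ in atTop, ((8 * q n + 3 : ℕ) : ℝ) ≤ 9 / 200 * Real.log n)
    (hg : ∀ n : ℕ, γ * n ≤ g n)
    (hw : ∀ᶠ n : ℕ in atTop, Real.exp (4 / η) * (4 * g n : ℕ) ≤ n)
    (hM : ∀ᶠ n : ℕ in atTop, M n * Real.log (8 / κ) ≤ κ / 8 * (n * Real.log n))
    (hm : ∀ᶠ n : ℕ in atTop, (2 * g n : ℕ) ≤ κ / 8 * n)
    (hb : ∀ᶠ n : ℕ in atTop, κ * n ^ 2 ≤ b n) :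
    WithHighProb p fun n A =>
      IsPseudorandom A (q n) (g n) (r * (2 * n)) (M n) (b n) (γ ^ 2 / 16) := by
  have hdeg := hp.withHighProb_two_le_card_neighbors
  have hfar := hp.withHighProb_smallVerticesFar hD
  have hsparse := hp.withHighProb_isLocallySparse hη hq hw
  have hdense := (hp.withHighProb_isDenseBetween hγ hg).and hp.mem_Icc hp.withHighProb_card_le
  have hboosters := hp.withHighProb_hasBoosters hκ₀ hκ₁ hM hm hb
  refine (hdeg.and hp.mem_Icc (hfar.and hp.mem_Icc (hsparse.and hp.mem_Icc
    (hdense.and hp.mem_Icc hboosters)))).imp hp.mem_Icc ?_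
  filter_upwards [eventually_le_log_natCast (8 * r / γ ^ 2)]
    with n hL A _ ⟨hdeg, hfar, hsparse, ⟨hdense, hcard⟩, hboosters⟩
  refine ⟨hdeg, hfar, hsparse, fun P Q hPQ hP hQ => (Nat.le_floor ?_).trans_lt
    (hdense P Q hPQ hP hQ), fun P Q hPQ hP hQ => ?_, hboosters⟩
  · rw [div_le_iff₀' (by positivity)] at hL
    push_cast
    nlinarith [Nat.cast_nonneg (α := ℝ) n]
  · linarith [Nat.lt_of_floor_lt (hdense P Q hPQ hP hQ),
      mul_le_mul_of_nonneg_left hcard (by positivity : 0 ≤ γ ^ 2 / 16)]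

lemma exists_withHighProb_isPseudorandom (hp : IsNearThreshold p) (r : ℕ) (hδ₀ : 0 < δ)
    (hδ₁ : δ ≤ 1 / 5) (hθ : 0 < θ) :
    ∃ (q g k : ℕ → ℕ) (ρ : ℝ), ρ ≤ 1 ∧ (∀ n : ℕ, 2 * n ≤ ρ * k n) ∧
      (∀ᶠ n : ℕ in atTop, ((8 * q n + 3 : ℕ) : ℝ) ≤ 9 / 40 * δ * Real.log n) ∧
      (∀ᶠ n : ℕ in atTop, g n ≤ θ * n) ∧ WithHighProb p fun n A =>
        IsPseudorandom A (q n) (g n) (r * (2 * n)) (n + (n * (8 * q n + 3) + k n))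
          (⌊δ * n / 4⌋₊ * ⌊δ * n / 4⌋₊ / 2) ρ := by
  set κ := δ ^ 2 / 64 with hκ
  have hκ₀ : 0 < κ := by positivity
  have hκ₁ : κ ≤ 1 := by nlinarith
  obtain ⟨η, hη₀, hηδ, hηκ⟩ := exists_pos_le_mul_le (Real.log (8 / κ)) (by positivity : 0 < δ / 40)
    (by positivity : 0 < κ / 80)
  obtain ⟨γ, hγ₀, hγ, hγη⟩ := exists_pos_le_mul_le (Real.exp (4 / η))
    (by positivity : 0 < min (θ / 2) (κ / 32)) (by norm_num : (0 : ℝ) < 1 / 8)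
  obtain ⟨hγθ, hγκ⟩ := le_min_iff.1 hγ
  have hD := eventually_eight_mul_ceil_add_three_le hη₀
  have hg := eventually_ceil_mul_natCast_le hγ₀
  have hlog (n : ℕ) : 0 ≤ Real.log n := Real.log_natCast_nonneg n
  have hDδ : ∀ᶠ n : ℕ in atTop,
      ((8 * ⌈η * Real.log n⌉₊ + 3 : ℕ) : ℝ) ≤ 9 / 40 * δ * Real.log n :=
    hD.mono fun n hn => hn.trans (mul_le_mul_of_nonneg_right (by linarith) (hlog n))
  refine ⟨fun n => ⌈η * Real.log n⌉₊, fun n => ⌈γ * n⌉₊, fun n => ⌈2 / (γ ^ 2 / 16) * n⌉₊,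
    γ ^ 2 / 16, by nlinarith, fun n => ?_, hDδ, ?_, ?_⟩
  · rw [← div_le_iff₀' (by positivity), ← div_mul_eq_mul_div]
    exact Nat.le_ceil _
  · filter_upwards [hg] with n hn
    exact hn.trans (by gcongr; linarith)
  refine hp.withHighProb_isPseudorandom r hη₀ hγ₀ hκ₀ hκ₁ (.of_forall fun n => Nat.le_ceil _)
    (hDδ.mono fun n hn => hn.trans (mul_le_mul_of_nonneg_right (by linarith) (hlog n)))
    (fun n => Nat.le_ceil _) ?_ ?_ ?_ (eventually_sq_mul_sq_le_floor_mul_floor_div_two hδ₀)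
  · filter_upwards [hg] with n hn
    push_cast
    nlinarith [mul_le_mul_of_nonneg_left hn (Real.exp_pos (4 / η)).le,
      mul_le_mul_of_nonneg_right hγη (Nat.cast_nonneg (α := ℝ) n)]
  · filter_upwards [eventually_add_mul_add_ceil_le hη₀ (by positivity : 0 < γ ^ 2 / 16)] with n hn
    have hlogκ : 0 ≤ Real.log (8 / κ) := Real.log_nonneg (by rw [one_le_div hκ₀]; linarith)
    nlinarith [mul_le_mul_of_nonneg_right hn hlogκ,
      mul_le_mul_of_nonneg_right hηκ (mul_nonneg (Nat.cast_nonneg (α := ℝ) n) (hlog n))]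
  · filter_upwards [hg] with n hn
    push_cast
    nlinarith [Nat.cast_nonneg (α := ℝ) n]

lemma withHighProb_hasBiasedHamiltonCycles (hp : IsNearThreshold p) (r : ℕ) {τ : ℝ} (hτ₀ : 0 < τ)
    (hτ₁ : τ * (r + 1) ≤ 1) :
    WithHighProb p fun n A => HasBiasedHamiltonCycles (Fin r) ((2 / (r + 1) - τ) * n)
      (SimpleGraph.fromEdgeSet (A : Set (Sym2 (Fin n)))) := by
  set δ := τ / 20 with hδ
  have hδ₀ : 0 < δ := by positivity
  have hδ₁ : δ ≤ 1 / 20 := by nlinarith [Nat.cast_nonneg (α := ℝ) r]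
  obtain ⟨q, g, k, ρ, hρ, hk, hD, hg, hpseudo⟩ := hp.exists_withHighProb_isPseudorandom r hδ₀
    (by linarith) (by positivity : 0 < min (δ / 8) (τ / (32 * 4 ^ r)))
  have hRcard (n : ℕ) : ⌊δ * n⌋₊ ≤ #(univ : Finset (Fin n)) := by
    rw [card_univ, Fintype.card_fin]
    exact Nat.floor_le_of_le (by nlinarith [Nat.cast_nonneg (α := ℝ) n])
  choose R _ hR using fun n => exists_subset_card_eq (hRcard n)
  have hδR (n : ℕ) : δ * n - 1 ≤ #(R n) := by
    rw [hR]
    exact (Nat.sub_one_lt_floor _).le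
  have hcycles := hp.withHighProb_shortCycleCount_le ⌈4 / τ⌉₊ hδ₀
  have hpoor := hp.withHighProb_mul_card_poorlyAttached_le hδ₀ (by linarith) (fun n => by omega)
    hD R hδR
  refine ((hpseudo.and hp.mem_Icc hcycles).and hp.mem_Icc hpoor).imp hp.mem_Icc ?_
  filter_upwards [hg, eventually_le_natCast 3, eventually_le_natCast (8 * (r + 1) / τ),
    eventually_le_natCast (8 / δ)] with n hg hn hτn hδn A hA ⟨⟨hpseudo, hcycles⟩, hpoor⟩
  rw [min_mul_of_nonneg _ _ n.cast_nonneg, le_min_iff, div_mul_eq_mul_div τ,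
    le_div_iff₀' (by positivity)] at hg
  rw [div_le_iff₀' (by positivity)] at hτn hδn
  have hδτ : 20 * (δ * n) = τ * n := by ring
  have hRδ : (#(R n) : ℝ) ≤ δ * n := by
    rw [hR]
    exact Nat.floor_le (by positivity)
  have hRs : (3 * ⌊δ * n / 4⌋₊ + g n : ℝ) ≤ #(R n) := by
    linarith [hδR n, Nat.floor_le (by positivity : 0 ≤ δ * n / 4)]
  have hbiased := IsPseudorandom.hasBiasedHamiltonCycles (V := Fin n) (ι := Fin r) (A := A)
    (R := R n) (q := q n) (g := g n) (k := k n) (s := ⌊δ * n / 4⌋₊) (K := ⌈4 / τ⌉₊) (τ := τ)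
    (b := ⌊δ * n / 4⌋₊ * ⌊δ * n / 4⌋₊ / 2) (ρ := ρ)
  simp only [Fintype.card_fin] at hbiased
  exact hbiased hpseudo hA (mod_cast hn) hρ (hk n) (mod_cast hRs) (by omega) hτ₀ hτ₁ hτn hg.2
    ((div_le_iff₀' hτ₀).1 (Nat.le_ceil _)) (by linarith) (by linarith)
    (by rw [Nat.cast_mul]; linarith)

end IsNearThreshold

end BiasedHamiltonCycles

/-- **Theorem (Hamilton cycles with many edges of one colour).**
Let `r ≥ 2` and `ε > 0`, and let `p : ℕ → [0,1]` satisfy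
`n·p(n) − log n − log log n → ∞`. Then whp `G ~ G(n, p(n))` is such that for every
`r`-colouring of its edges there are a colour `i` and a Hamilton cycle with at least
`(2/(r+1) − ε)·n` edges of colour `i`. -/
theorem hamilton_cycle_many_edges_same_colour
    (r : ℕ) (hr : 2 ≤ r) (ε : ℝ) (hε : 0 < ε)
    (p : ℕ → ℝ) (hp01 : ∀ n, 0 ≤ p n ∧ p n ≤ 1)
    (hp : Filter.Tendsto
      (fun n : ℕ => n * p n - Real.log n - Real.log (Real.log n))
      Filter.atTop Filter.atTop) :
    Filter.Tendsto
      (fun n : ℕ => gnpProb n (p n) (fun G =>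
        ∀ c : Sym2 (Fin n) → Fin r, ∃ i : Fin r, ∃ (v : Fin n) (w : G.Walk v v),
          w.IsHamiltonianCycle ∧
          (2 / (r + 1 : ℝ) - ε) * n ≤ ((w.edges.filter (fun e => c e = i)).length : ℝ)))
      Filter.atTop (nhds 1) := by
  set p' : ℕ → ℝ := fun n => min (p n) (2 * Real.log n / n)
  have hthreshold : IsNearThreshold p' := isNearThreshold_min hp01 hp
  set τ : ℝ := min ε (1 / (r + 1))
  have hτr : τ * (r + 1) ≤ 1 := (le_div_iff₀ (by positivity)).1 (min_le_right _ _)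
  have hwhp : WithHighProb p' fun n A => HasBiasedHamiltonCycles (Fin r) ((2 / (r + 1) - ε) * n)
      (SimpleGraph.fromEdgeSet (A : Set (Sym2 (Fin n)))) := by
    refine (hthreshold.withHighProb_hasBiasedHamiltonCycles r (by positivity : 0 < τ) hτr).imp
      hthreshold.mem_Icc (.of_forall fun n A _ => .mono ?_ le_rfl)
    gcongr
    exact min_le_left _ _
  exact hwhp.tendsto_gnpProb_of_monotone hthreshold.mem_Icc (fun n => min_le_left _ _)
    (fun n => (hp01 n).2) fun n G H hGH => .mono le_rfl hGH
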